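/- Assume a := ess sup ξ₀ < ∞ and that there exist ε > 0 and λ₀ > 0 such that Q{ξ₀⁻ > λ} ≤ 1/(log λ)^{2+ε} for all λ ≥ λ₀. Then ℙ⊗Q-almost surely, limsup_{n→∞} Z_n/n = a. -/

import Mathlib

open MeasureTheory ProbabilityTheory Filter Set

/-- Nearest-neighbour transition probability of Sinai's walk: from `x`, a step `s`
has probability `p` if `s = 1`, `1 − p` if `s = −1`, and `0` otherwise, where
`p = ω_x` is the environment at the current site. -/
noncomputable def stepProb (p : ℝ) (s : ℤ) : ℝ :=
  if s = 1 then p else if s = -1 then 1 - p else 0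

namespace Sinai

/-- Partial sums of a sequence of increments. -/
noncomputable def W (w : ℕ → ℝ) (m : ℕ) : ℝ := ∑ i ∈ Finset.range m, w i

/-- Prepend an element to a sequence. -/
def scons (z : ℝ) (w : ℕ → ℝ) : ℕ → ℝ := fun n => Nat.casesOn n z w

@[simp] lemma scons_zero (z : ℝ) (w : ℕ → ℝ) : scons z w 0 = z := rfl
@[simp] lemma scons_succ (z : ℝ) (w : ℕ → ℝ) (n : ℕ) : scons z w (n + 1) = w n := rfl

@[simp] lemma W_zero (w : ℕ → ℝ) : W w 0 = 0 := by simp [W]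

lemma W_scons (z : ℝ) (w : ℕ → ℝ) (m : ℕ) : W (scons z w) (m + 1) = z + W w m := by
  simp [W, Finset.sum_range_succ', add_comm]

lemma measurable_scons : Measurable (fun p : ℝ × (ℕ → ℝ) => scons p.1 p.2) := by
  rw [measurable_pi_iff]
  intro n
  cases n with
  | zero => simpa using measurable_fst
  | succ n => simp only [scons_succ]; fun_prop

@[fun_prop]
lemma measurable_W (m : ℕ) : Measurable (fun w => W w m) := by
  unfold W; fun_prop

/-- Law of an i.i.d. sequence. -/
noncomputable abbrev PP (ν : Measure ℝ) [IsProbabilityMeasure ν] : Measure (ℕ → ℝ) :=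
  Measure.infinitePi (fun _ : ℕ => ν)

variable (ν : Measure ℝ) [IsProbabilityMeasure ν]

lemma cons_map : ((ν.prod (PP ν)).map fun p => scons p.1 p.2) = PP ν := by
  apply Measure.eq_infinitePi
  intro s t ht
  have hm : MeasurableSet (Set.pi (s : Set ℕ) t) :=
    MeasurableSet.pi s.countable_toSet (fun i _ => ht i)
  rw [Measure.map_apply measurable_scons hm]
  classical
  -- enlarge
  let A : Set ℝ := if 0 ∈ s then t 0 else univ
  have hA : MeasurableSet A := by
    simp only [A]; split_ifs
    · exact ht 0
    · exact .univ
  let s' : Finset ℕ := (s.erase 0).image Nat.pred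
  have hs' : ∀ n, n ∈ s' ↔ n + 1 ∈ s := by
    intro n
    simp only [s', Finset.mem_image, Finset.mem_erase]
    constructor
    · rintro ⟨a, ⟨ha, hs⟩, rfl⟩
      obtain ⟨k, rfl⟩ := Nat.exists_eq_succ_of_ne_zero ha
      simpa using hs
    · intro h
      exact ⟨n + 1, ⟨by simp, h⟩, by simp⟩
  have : ((fun p : ℝ × (ℕ → ℝ) => scons p.1 p.2) ⁻¹' (Set.pi (s : Set ℕ) t))
      = A ×ˢ (Set.pi (s' : Set ℕ) (fun n => t (n + 1))) := by
    ext ⟨z, w⟩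
    simp only [mem_preimage, Set.mem_pi, Finset.mem_coe, mem_prod, hs']
    constructor
    · intro h
      refine ⟨?_, fun n hn => by simpa using h (n + 1) hn⟩
      simp only [A]; split_ifs with h0
      · simpa using h 0 h0
      · trivial
    · rintro ⟨h1, h2⟩ n hn
      cases n with
      | zero => simpa [A, hn] using h1
      | succ n => simpa using h2 n hn
  rw [this, Measure.prod_prod, Measure.infinitePi_pi _ (fun i _ => ht (i + 1))]
  have hprod : ∏ i ∈ s', ν (t (i + 1)) = ∏ i ∈ s.erase 0, ν (t i) := by
    simp only [s']
    rw [Finset.prod_image]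
    · apply Finset.prod_congr rfl
      intro x hx
      have : x ≠ 0 := (Finset.mem_erase.1 hx).1
      have : x.pred + 1 = x := Nat.succ_pred_eq_of_ne_zero this
      rw [this]
    · intro x hx y hy h
      have hx : x ≠ 0 := (Finset.mem_erase.1 hx).1
      have hy : y ≠ 0 := (Finset.mem_erase.1 hy).1
      simp only [Nat.pred_eq_sub_one] at h; omega
  rw [hprod]
  by_cases h0 : 0 ∈ s
  · simp only [A, h0, if_true]
    rw [← Finset.mul_prod_erase s (fun i => ν (t i)) h0]
  · simp [A, h0]

lemma measurable_scons_right (z : ℝ) : Measurable (scons z) :=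
  measurable_scons.comp (measurable_const.prodMk measurable_id)

lemma first_step {E : Set (ℕ → ℝ)} (hE : MeasurableSet E) :
    PP ν E = ∫⁻ z, PP ν (scons z ⁻¹' E) ∂ν := by
  conv_lhs => rw [← cons_map ν]
  rw [Measure.map_apply measurable_scons hE, Measure.prod_apply (measurable_scons hE)]
  rfl

lemma first_step_meas {E : Set (ℕ → ℝ)} (hE : MeasurableSet E) :
    Measurable (fun z => (PP ν).real (scons z ⁻¹' E)) := by
  have := measurable_measure_prodMk_left (ν := PP ν) (measurable_scons hE)
  exact this.ennreal_toReal

lemma first_step_integrable {E : Set (ℕ → ℝ)} (hE : MeasurableSet E) :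
    Integrable (fun z => (PP ν).real (scons z ⁻¹' E)) ν := by
  refine Integrable.of_bound (first_step_meas ν hE).aestronglyMeasurable 1 ?_
  filter_upwards with z
  rw [Real.norm_of_nonneg measureReal_nonneg]
  exact measureReal_le_one

lemma first_step_real {E : Set (ℕ → ℝ)} (hE : MeasurableSet E) :
    (PP ν).real E = ∫ z, (PP ν).real (scons z ⁻¹' E) ∂ν := by
  unfold Measure.real
  rw [first_step ν hE, integral_toReal]
  · exact (measurable_measure_prodMk_left (ν := PP ν) (measurable_scons hE)).aemeasurable
  · filter_upwards with z
    exact measure_lt_top _ _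

lemma step_le {E : Set (ℕ → ℝ)} (hE : MeasurableSet E) (φ : ℝ → ℝ) (hφ : Integrable φ ν)
    (h : ∀ᵐ z ∂ν, (PP ν).real (scons z ⁻¹' E) ≤ φ z) : (PP ν).real E ≤ ∫ z, φ z ∂ν := by
  rw [first_step_real ν hE]
  exact integral_mono_ae (first_step_integrable ν hE) hφ h

/-- shift of a sequence -/
def shft (k : ℕ) (w : ℕ → ℝ) : ℕ → ℝ := fun i => w (k + i)

@[fun_prop]
lemma measurable_shft (k : ℕ) : Measurable (shft k) := by
  rw [measurable_pi_iff]; intro n; unfold shft; fun_prop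

lemma W_shft (w : ℕ → ℝ) (k m : ℕ) : W (shft k w) m = W w (k + m) - W w k := by
  simp [W, shft, Finset.sum_range_add]

/-- dependence on the first `m` coordinates -/
def DepFirst (m : ℕ) (A : Set (ℕ → ℝ)) : Prop :=
  ∀ w w' : ℕ → ℝ, (∀ i < m, w i = w' i) → (w ∈ A ↔ w' ∈ A)

lemma W_congr {w w' : ℕ → ℝ} {n m : ℕ} (h : ∀ i < n, w i = w' i) (hm : m ≤ n) : W w m = W w' m := by
  unfold W
  apply Finset.sum_congr rfl
  intro i hi
  exact h i (lt_of_lt_of_le (Finset.mem_range.1 hi) hm)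

lemma concat_indep (m : ℕ) : ∀ (A B : Set (ℕ → ℝ)), MeasurableSet A → MeasurableSet B →
    DepFirst m A → PP ν (A ∩ shft m ⁻¹' B) = PP ν A * PP ν B := by
  induction m with
  | zero =>
    intro A B hA hB hd
    have hs : shft 0 ⁻¹' B = B := by
      have : ∀ w : ℕ → ℝ, shft 0 w = w := by intro w; ext i; simp [shft]
      ext w; simp only [mem_preimage, this]
    rw [hs]
    rcases A.eq_empty_or_nonempty with h | ⟨w, hw⟩
    · simp [h]
    · have : A = univ := by
        ext w'; simp only [mem_univ, iff_true]
        exact (hd w w' (by simp)).1 hw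
      simp [this]
  | succ m ih =>
    intro A B hA hB hd
    rw [first_step ν (hA.inter (measurable_shft _ hB)), first_step ν hA]
    have : ∀ z, PP ν (scons z ⁻¹' (A ∩ shft (m + 1) ⁻¹' B)) = PP ν (scons z ⁻¹' A) * PP ν B := by
      intro z
      rw [← ih (scons z ⁻¹' A) B (measurable_scons_right z hA) hB]
      · congr 1
        ext w
        simp only [mem_preimage, mem_inter_iff]
        have : shft (m + 1) (scons z w) = shft m w := by
          ext i
          have : m + 1 + i = (m + i) + 1 := by ring
          simp [shft, this]
        rw [this]
      · intro w w' h
        apply hd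
        intro i hi
        cases i with
        | zero => simp
        | succ i => simpa using h i (by omega)
    simp_rw [this]
    rw [lintegral_mul_const]
    exact measurable_measure_prodMk_left (ν := PP ν) (measurable_scons hA)

/-- product of block probabilities -/
lemma blocks_ge (N : ℕ) (c : ℝ) (hc : 0 ≤ c) : ∀ (n : ℕ) (B : ℕ → Set (ℕ → ℝ)), (∀ i, MeasurableSet (B i)) →
    (∀ i, DepFirst N (B i)) → (∀ i, c ≤ (PP ν).real (B i)) →
    c ^ n ≤ (PP ν).real {w | ∀ i < n, shft (i * N) w ∈ B i} := by
  intro n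
  induction n with
  | zero => intro B _ _ _; simp
  | succ n ih =>
    intro B hB hd hp
    have hset : {w | ∀ i < n + 1, shft (i * N) w ∈ B i}
        = B 0 ∩ shft N ⁻¹' {w | ∀ i < n, shft (i * N) w ∈ B (i + 1)} := by
      ext w
      simp only [mem_ofPred_eq, mem_inter_iff, mem_preimage]
      have hs0 : shft (0 * N) w = w := by ext i; simp [shft]
      have hs : ∀ i, shft (i * N) (shft N w) = shft ((i + 1) * N) w := by
        intro i; ext j; simp only [shft]; congr 1; ring
      constructor
      · intro h
        refine ⟨by have := h 0 (by omega); rwa [hs0] at this, fun i hi => ?_⟩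
        rw [hs]; exact h (i + 1) (by omega)
      · rintro ⟨h0, h⟩ i hi
        cases i with
        | zero => rwa [hs0]
        | succ i => rw [← hs]; exact h i (by omega)
    have hmeas : MeasurableSet {w | ∀ i < n, shft (i * N) w ∈ B (i + 1)} := by
      have : {w | ∀ i < n, shft (i * N) w ∈ B (i + 1)} =
        ⋂ i, ⋂ (_ : i < n), shft (i * N) ⁻¹' B (i + 1) := by ext; simp
      rw [this]
      exact MeasurableSet.iInter fun i => MeasurableSet.iInter fun _ => measurable_shft _ (hB _)
    rw [hset, Measure.real, concat_indep ν N _ _ (hB 0) hmeas (hd 0), ENNReal.toReal_mul, pow_succ,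
      mul_comm]
    have := ih (fun i => B (i + 1)) (fun i => hB _) (fun i => hd _) (fun i => hp _)
    exact mul_le_mul (hp 0) this (by positivity) measureReal_nonneg

end Sinai

namespace Sinai

/-- survival event -/
def Epos (N : ℕ) (v : ℝ) : Set (ℕ → ℝ) := {w | ∀ m ≤ N, 0 ≤ v + W w m}

lemma meas_Epos (N : ℕ) (v : ℝ) : MeasurableSet (Epos N v) := by
  have : Epos N v = ⋂ m, ⋂ (_ : m ≤ N), {w | 0 ≤ v + W w m} := by ext; simp [Epos]
  rw [this]
  exact MeasurableSet.iInter fun i => MeasurableSet.iInter fun _ =>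
    measurableSet_le (by fun_prop) (by fun_prop)

lemma Epos_scons (N : ℕ) (v z : ℝ) (hv : 0 ≤ v) : scons z ⁻¹' (Epos (N + 1) v) = Epos N (v + z) := by
  ext w
  simp only [Epos, mem_preimage, mem_ofPred_eq]
  constructor
  · intro h m hm
    have := h (m + 1) (by omega)
    rw [W_scons] at this; linarith
  · intro h m hm
    cases m with
    | zero => simpa using hv
    | succ m => rw [W_scons]; have := h m (by omega); linarith

lemma Epos_neg (N : ℕ) (v : ℝ) (hv : v < 0) : Epos N v = ∅ := by
  ext w
  simp only [Epos, mem_ofPred_eq, mem_empty_iff_false, iff_false]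
  intro h
  have := h 0 (by omega)
  simp at this; linarith

lemma Epos_anti {N N' : ℕ} (h : N ≤ N') (v : ℝ) : Epos N' v ⊆ Epos N v :=
  fun _ hw m hm => hw m (hm.trans h)

/-- standing assumptions on the step law -/
structure StepLaw (ν : Measure ℝ) (c σ2 : ℝ) : Prop where
  bdd : ∀ᵐ z ∂ν, |z| ≤ c
  mean : ∫ z, z ∂ν = 0
  var : ∫ z, z ^ 2 ∂ν = σ2
  pos : 0 < σ2

variable {ν : Measure ℝ} [IsProbabilityMeasure ν] {c σ2 : ℝ}

lemma StepLaw.c_nonneg (h : StepLaw ν c σ2) : 0 ≤ c := by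
  obtain ⟨z, hz⟩ := h.bdd.exists
  exact (abs_nonneg z).trans hz

lemma StepLaw.int_pow (h : StepLaw ν c σ2) (k : ℕ) : Integrable (fun z => z ^ k) ν := by
  refine Integrable.of_bound (by fun_prop) (c ^ k) ?_
  filter_upwards [h.bdd] with z hz
  rw [norm_pow, Real.norm_eq_abs]
  exact pow_le_pow_left₀ (abs_nonneg _) hz k

lemma StepLaw.int_id (h : StepLaw ν c σ2) : Integrable (fun z => z) ν := by
  simpa using h.int_pow 1

lemma StepLaw.neg (h : StepLaw ν c σ2) : StepLaw (ν.map (fun z => -z)) c σ2 where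
  bdd := by
    rw [ae_map_iff (by fun_prop) (measurableSet_le (by fun_prop) (by fun_prop))]
    simpa using h.bdd
  mean := by
    rw [integral_map (by fun_prop) (by fun_prop), integral_neg, h.mean, neg_zero]
  var := by
    rw [integral_map (by fun_prop) (by fun_prop)]
    simpa using h.var
  pos := h.pos

lemma StepLaw.quad (h : StepLaw ν c σ2) (α β κ : ℝ) :
    Integrable (fun z => α + β * z + κ * z ^ 2) ν ∧
    ∫ z, (α + β * z + κ * z ^ 2) ∂ν = α + κ * σ2 := by
  have h1 : Integrable (fun z => α + β * z) ν := (integrable_const α).add (h.int_id.const_mul β)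
  have h2 : Integrable (fun z => κ * z ^ 2) ν := (h.int_pow 2).const_mul κ
  refine ⟨h1.add h2, ?_⟩
  rw [integral_add h1 h2, integral_add (integrable_const α) (h.int_id.const_mul β),
    integral_const_mul, integral_const_mul, h.mean, h.var]
  simp

lemma survival_sum (h : StepLaw ν c σ2) (N : ℕ) (L : ℝ) (hL : 0 < L) (hLN : σ2 * N ≤ L ^ 2) :
    ∀ n ≤ N, ∀ v, -c ≤ v → v ≤ L + c →
    ∑ j ∈ Finset.range n, (PP ν).real (Epos j v) ≤ (v + c) * (2 * L + c - v) / σ2 := by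
  have hσ := h.pos
  have hc := h.c_nonneg
  intro n
  induction n with
  | zero =>
    intro _ v h1 h2
    simp only [Finset.range_zero, Finset.sum_empty]
    apply div_nonneg (mul_nonneg (by linarith) (by linarith)) hσ.le
  | succ n ih =>
    intro hn v h1 h2
    have hnn : 0 ≤ (v + c) * (2 * L + c - v) / σ2 :=
      div_nonneg (mul_nonneg (by linarith) (by linarith)) hσ.le
    rcases lt_or_ge v 0 with hv | hv
    · simp [Epos_neg _ _ hv, hnn]
    rcases le_or_gt L v with hv' | hv'
    · have : ∑ j ∈ Finset.range (n + 1), (PP ν).real (Epos j v) ≤ (N : ℝ) := by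
        calc _ ≤ ∑ j ∈ Finset.range (n + 1), (1 : ℝ) := Finset.sum_le_sum fun i _ => measureReal_le_one
          _ ≤ N := by simpa using (by exact_mod_cast hn)
      refine this.trans ?_
      rw [le_div_iff₀ hσ]
      nlinarith [mul_nonneg (by linarith : 0 ≤ v - L) (by linarith : 0 ≤ L + c - v)]
    · rw [Finset.sum_range_succ']
      have hstep : ∀ j, (PP ν).real (Epos (j + 1) v) = ∫ z, (PP ν).real (Epos j (v + z)) ∂ν := by
        intro j
        rw [first_step_real ν (meas_Epos _ _)]
        simp_rw [Epos_scons j v _ hv]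
      have hint : ∀ j, Integrable (fun z => (PP ν).real (Epos j (v + z))) ν := by
        intro j
        have := first_step_integrable ν (meas_Epos (j + 1) v)
        simpa only [Epos_scons j v _ hv] using this
      simp_rw [hstep]
      rw [← integral_finsetSum _ (fun j _ => hint j)]
      obtain ⟨hq1, hq2⟩ := h.quad ((v + c) * (2 * L + c - v) / σ2)
        (((2 * L + c - v) - (v + c)) / σ2) (-1 / σ2)
      have hmono : ∫ z, ∑ j ∈ Finset.range n, (PP ν).real (Epos j (v + z)) ∂ν ≤
          ∫ z, ((v + c) * (2 * L + c - v) / σ2 + ((2 * L + c - v) - (v + c)) / σ2 * z + (-1 / σ2) * z ^ 2) ∂ν := by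
        apply integral_mono_ae (integrable_finsetSum _ (fun j _ => hint j)) hq1
        filter_upwards [h.bdd] with z hz
        rw [abs_le] at hz
        refine (ih (by omega) (v + z) (by linarith) (by linarith)).trans (le_of_eq ?_)
        field_simp; ring
      rw [hq2] at hmono
      have h0 : (PP ν).real (Epos 0 v) ≤ 1 := measureReal_le_one
      have : -1 / σ2 * σ2 = -1 := by field_simp
      linarith

lemma survival_bound (h : StepLaw ν c σ2) : ∃ C > 0, ∀ N : ℕ, 1 ≤ N → ∀ v : ℝ, 0 ≤ v →
    (PP ν).real (Epos N v) ≤ C * (v + 1) / √N := by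
  have hσ := h.pos
  have hc := h.c_nonneg
  refine ⟨(1 + c) * (2 * √σ2 + c) / σ2 + 1 / √σ2, by positivity, ?_⟩
  intro N hN v hv
  have hN' : (1 : ℝ) ≤ N := by exact_mod_cast hN
  have hsN : 1 ≤ √(N : ℝ) := Real.one_le_sqrt.2 hN'
  have hsN2 : √(N : ℝ) * √(N : ℝ) = N := Real.mul_self_sqrt (by linarith)
  have hsσ : √σ2 * √σ2 = σ2 := Real.mul_self_sqrt hσ.le
  have hsσ0 : 0 < √σ2 := Real.sqrt_pos.2 hσ
  set L := √σ2 * √N with hL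
  have hLpos : 0 < L := by positivity
  rcases le_or_gt v L with hvL | hvL
  · have hs := survival_sum h N L hLpos (by rw [hL, mul_pow, sq, sq, hsσ, hsN2]) N le_rfl v
      (by linarith) (by linarith)
    have hmono : (N : ℝ) * (PP ν).real (Epos N v) ≤
        ∑ j ∈ Finset.range N, (PP ν).real (Epos j v) := by
      calc (N : ℝ) * (PP ν).real (Epos N v) = ∑ j ∈ Finset.range N, (PP ν).real (Epos N v) := by simp
        _ ≤ _ := Finset.sum_le_sum fun j hj =>
          measureReal_mono (Epos_anti (Finset.mem_range.1 hj).le v) (by finiteness)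
    have h1 : (PP ν).real (Epos N v) ≤ (1 + c) * (2 * √σ2 + c) / σ2 * (v + 1) / √N := by
      rw [le_div_iff₀ (by positivity)]
      have h2 : (v + c) * (2 * L + c - v) / σ2 ≤ (1 + c) * (2 * √σ2 + c) / σ2 * (v + 1) * √N := by
        have e : (1 + c) * (2 * √σ2 + c) / σ2 * (v + 1) * √N =
          ((1 + c) * (v + 1)) * ((2 * √σ2 + c) * √N) / σ2 := by ring
        rw [e]
        gcongr
        · nlinarith
        · nlinarith
        · rw [hL]; nlinarith
      have h3 : √(N:ℝ) * ((PP ν).real (Epos N v) * √N) ≤ √N * ((1 + c) * (2 * √σ2 + c) / σ2 * (v + 1)) := by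
        calc √(N:ℝ) * ((PP ν).real (Epos N v) * √N) = N * (PP ν).real (Epos N v) := by
              linear_combination ((PP ν).real (Epos N v)) * hsN2
          _ ≤ _ := by linarith
      exact le_of_mul_le_mul_left h3 (by positivity)
    refine h1.trans ?_
    gcongr
    have : 0 < 1 / √σ2 := by positivity
    linarith
  · have h1 : (1 : ℝ) ≤ 1 / √σ2 * (v + 1) / √N := by
      rw [le_div_iff₀ (by positivity), one_div, ← div_eq_inv_mul, le_div_iff₀ hsσ0]
      nlinarith
    refine (measureReal_le_one).trans (h1.trans ?_)
    gcongr
    have : 0 ≤ (1 + c) * (2 * √σ2 + c) / σ2 := by positivity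
    linarith

end Sinai

namespace Sinai

variable {ν : Measure ℝ} [IsProbabilityMeasure ν] {c σ2 : ℝ}

/-- the walk goes below `h` at a time in `[a, a+k)` and remains nonnegative for `N` more steps -/
def Tlow (h : ℝ) (N a k : ℕ) (y : ℝ) : Set (ℕ → ℝ) :=
  {w | ∃ m, a ≤ m ∧ m < a + k ∧ y + W w m < h ∧ ∀ i ≤ m + N, 0 ≤ y + W w i}

lemma meas_Tlow (h : ℝ) (N a k : ℕ) (y : ℝ) : MeasurableSet (Tlow h N a k y) := by
  have : Tlow h N a k y = ⋃ m, ⋃ (_ : a ≤ m ∧ m < a + k),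
      ({w | y + W w m < h} ∩ Epos (m + N) y) := by
    ext w
    simp only [Tlow, Epos, mem_iUnion, mem_inter_iff, mem_ofPred_eq]
    exact exists_congr fun m => ⟨fun ⟨a, b, c, d⟩ => ⟨⟨a, b⟩, c, d⟩, fun ⟨⟨a, b⟩, c, d⟩ => ⟨a, b, c, d⟩⟩
  rw [this]
  exact MeasurableSet.iUnion fun m => MeasurableSet.iUnion fun _ =>
    (measurableSet_lt (by fun_prop) (by fun_prop)).inter (meas_Epos _ _)

lemma Tlow_zero_le (h : ℝ) (N : ℕ) (K : ℝ) (hK0 : 0 ≤ K)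
    (hK : ∀ y, 0 ≤ y → y < h → (PP ν).real (Epos N y) ≤ K) (k : ℕ) :
    ∀ y, (PP ν).real (Tlow h N 0 k y) ≤ K := by
  induction k with
  | zero =>
    intro y
    have : Tlow h N 0 0 y = ∅ := by ext; simp [Tlow]
    simp [this, hK0]
  | succ k ih =>
    intro y
    rcases lt_or_ge y h with hy | hy
    · have hsub : Tlow h N 0 (k + 1) y ⊆ Epos N y := by
        rintro w ⟨m, _, _, _, hw⟩ i hi
        exact hw i (by omega)
      refine (measureReal_mono hsub (by finiteness)).trans ?_
      rcases lt_or_ge y 0 with hy0 | hy0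
      · simp [Epos_neg _ _ hy0, hK0]
      · exact hK y hy0 hy
    · have := step_le ν (meas_Tlow h N 0 (k + 1) y) (fun _ => K) (integrable_const K) ?_
      · simpa using this
      · filter_upwards with z
        refine (measureReal_mono ?_ (by finiteness)).trans (ih (y + z))
        rintro w ⟨m, _, hm, hw1, hw2⟩
        cases m with
        | zero => simp at hw1; linarith
        | succ m =>
          refine ⟨m, by omega, by omega, ?_, ?_⟩
          · rw [W_scons] at hw1; linarith
          · intro i hi
            have := hw2 (i + 1) (by omega)
            rw [W_scons] at this; linarith

lemma Tlow_le (h : ℝ) (N : ℕ) (K : ℝ) (hK0 : 0 ≤ K)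
    (hK : ∀ y, 0 ≤ y → y < h → (PP ν).real (Epos N y) ≤ K) (k : ℕ) (a : ℕ) :
    ∀ y, (PP ν).real (Tlow h N (a + 1) k y) ≤ K * (PP ν).real (Epos a y) := by
  induction a with
  | zero =>
    intro y
    rcases lt_or_ge y 0 with hy | hy
    · have : Tlow h N (0 + 1) k y = ∅ := by
        ext w
        simp only [mem_empty_iff_false, iff_false]
        rintro ⟨m, _, _, _, hw⟩
        have := hw 0 (by omega)
        simp at this; linarith
      rw [this]; simp; exact mul_nonneg hK0 measureReal_nonneg
    · have h1 : Epos 0 y = univ := by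
        ext w; simp [Epos, hy]
      rw [h1, probReal_univ, mul_one]
      have := step_le ν (meas_Tlow h N (0 + 1) k y) (fun _ => K) (integrable_const K) ?_
      · simpa using this
      · filter_upwards with z
        refine (measureReal_mono ?_ (by finiteness)).trans (Tlow_zero_le h N K hK0 hK k (y + z))
        rintro w ⟨m, hm0, hm, hw1, hw2⟩
        cases m with
        | zero => omega
        | succ m =>
          refine ⟨m, by omega, by omega, ?_, ?_⟩
          · rw [W_scons] at hw1; linarith
          · intro i hi
            have := hw2 (i + 1) (by omega)
            rw [W_scons] at this; linarith
  | succ a ih =>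
    intro y
    rcases lt_or_ge y 0 with hy | hy
    · have : Tlow h N (a + 1 + 1) k y = ∅ := by
        ext w
        simp only [mem_empty_iff_false, iff_false]
        rintro ⟨m, _, _, _, hw⟩
        have := hw 0 (by omega)
        simp at this; linarith
      rw [this]; simp; exact mul_nonneg hK0 measureReal_nonneg
    · rw [first_step_real ν (meas_Epos (a + 1) y), ← integral_const_mul]
      refine step_le ν (meas_Tlow h N (a + 1 + 1) k y) _
        ((first_step_integrable ν (meas_Epos (a + 1) y)).const_mul K) ?_
      filter_upwards with z
      rw [Epos_scons a y z hy]
      refine (measureReal_mono ?_ (by finiteness)).trans (ih (y + z))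
      rintro w ⟨m, hm0, hm, hw1, hw2⟩
      cases m with
      | zero => omega
      | succ m =>
        refine ⟨m, by omega, by omega, ?_, ?_⟩
        · rw [W_scons] at hw1; linarith
        · intro i hi
          have := hw2 (i + 1) (by omega)
          rw [W_scons] at this; linarith

/-- bad event: nonnegative up to `l`, but below the curve at some time in `[M, l - N]` -/
def Bd (γ : ℝ) (M N l : ℕ) : Set (ℕ → ℝ) :=
  {w | (∀ i ≤ l, 0 ≤ W w i) ∧ ∃ m, M ≤ m ∧ m + N ≤ l ∧ W w m < 2 * (m : ℝ) ^ γ}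

lemma Bd_bound (h : StepLaw ν c σ2) (γ : ℝ) (hγ0 : 0 < γ) (hγ : γ < 1 / 2) (ε : ℝ) (hε : 0 < ε) :
    ∃ M0 : ℕ, ∀ M ≥ M0, ∀ N ≥ 1, ∀ l, (PP ν).real (Bd γ M N l) ≤ ε / √N := by
  obtain ⟨C, hC, hsurv⟩ := survival_bound h
  let hj : ℕ → ℝ := fun j => 2 * (2 : ℝ) ^ (γ * (j + 1))
  let aj : ℕ → ℝ := fun j => C * (hj j + 1) * (C * (2 : ℝ) * (2 : ℝ) ^ (-(1 / 2 : ℝ) * j))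
  have haj0 : ∀ j, 0 ≤ aj j := fun j => by positivity
  have hpw : ∀ x : ℝ, ∀ j : ℕ, (2 : ℝ) ^ (x * j) = ((2 : ℝ) ^ x) ^ j := by
    intro x j; rw [Real.rpow_mul (by norm_num), Real.rpow_natCast]
  have hsum : Summable aj := by
    have e : aj = fun j : ℕ => (4 * C ^ 2 * 2 ^ γ) * ((2 : ℝ) ^ (γ - 1 / 2)) ^ j
        + (2 * C ^ 2) * ((2 : ℝ) ^ (-(1 / 2) : ℝ)) ^ j := by
      funext j
      simp only [aj, hj]
      rw [← hpw, ← hpw]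
      have : (2 : ℝ) ^ ((γ - 1 / 2) * j) = (2 : ℝ) ^ (γ * j) * 2 ^ (-(1 / 2 : ℝ) * j) := by
        rw [← Real.rpow_add (by norm_num)]; congr 1; ring
      rw [this]
      have : (2 : ℝ) ^ (γ * (j + 1)) = 2 ^ (γ * j) * 2 ^ γ := by
        rw [← Real.rpow_add (by norm_num)]; congr 1; ring
      rw [this]
      ring
    rw [e]
    apply Summable.add
    · apply Summable.mul_left
      apply summable_geometric_of_lt_one (by positivity)
      apply Real.rpow_lt_one_of_one_lt_of_neg <;> linarith
    · apply Summable.mul_left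
      apply summable_geometric_of_lt_one (by positivity)
      apply Real.rpow_lt_one_of_one_lt_of_neg <;> norm_num
  have htail := tendsto_sum_nat_add aj
  obtain ⟨j0, hj0⟩ := (htail.eventually (ge_mem_nhds hε)).exists_forall_of_atTop
  refine ⟨2 ^ (j0 + 1), fun M hM N hN l => ?_⟩
  have hN' : (0 : ℝ) < √N := Real.sqrt_pos.2 (by exact_mod_cast hN)
  -- each dyadic block
  have hblock : ∀ j ≥ 1, (PP ν).real (Tlow (hj j) N (2 ^ j) (2 ^ j) 0) ≤ aj j / √N := by
    intro j hj1
    have h2 : 2 ≤ 2 ^ j := by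
      calc 2 = 2 ^ 1 := by norm_num
        _ ≤ 2 ^ j := Nat.pow_le_pow_right (by norm_num) hj1
    obtain ⟨q, hq⟩ : ∃ q, 2 ^ j = q + 1 := ⟨2 ^ j - 1, by omega⟩
    have hq1 : 1 ≤ q := by omega
    have := Tlow_le (ν := ν) (hj j) N (C * (hj j + 1) / √N) (by positivity) (fun y hy hyh => by
      refine (hsurv N hN y hy).trans ?_
      gcongr) (2 ^ j) q 0
    conv_lhs => rw [show Tlow (hj j) N (2 ^ j) (2 ^ j) 0 = Tlow (hj j) N (q + 1) (2 ^ j) 0 by rw [← hq]]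
    refine this.trans ?_
    have hs := hsurv q hq1 0 le_rfl
    have hsq : (2 : ℝ) ^ ((1 / 2 : ℝ) * j) ≤ 2 * √q := by
      have e1 : (2 : ℝ) ^ ((1 / 2 : ℝ) * j) = √((2 : ℝ) ^ j) := by
        rw [Real.sqrt_eq_rpow, ← Real.rpow_natCast, ← Real.rpow_mul (by norm_num)]; congr 1; ring
      rw [e1]
      have e2 : 2 * √(q : ℝ) = √(4 * q) := by
        rw [Real.sqrt_mul (by norm_num), show (4 : ℝ) = 2 ^ 2 by norm_num, Real.sqrt_sq (by norm_num)]
      rw [e2]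
      apply Real.sqrt_le_sqrt
      have : (2 : ℝ) ^ j = q + 1 := by exact_mod_cast hq
      have : (1 : ℝ) ≤ q := by exact_mod_cast hq1
      linarith
    have hqpos : 0 < √(q : ℝ) := Real.sqrt_pos.2 (by exact_mod_cast hq1)
    have hs2 : (PP ν).real (Epos q 0) ≤ C * (2 : ℝ) * (2 : ℝ) ^ (-(1 / 2 : ℝ) * j) := by
      refine hs.trans ?_
      rw [div_le_iff₀ hqpos, neg_mul, Real.rpow_neg (by norm_num)]
      have hp : (0 : ℝ) < 2 ^ ((1 / 2 : ℝ) * j) := by positivity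
      have : 1 ≤ (2 * √q) * (2 ^ ((1 / 2 : ℝ) * j))⁻¹ := by
        rw [← div_eq_mul_inv, le_div_iff₀ hp]; linarith
      nlinarith
    simp only [aj]
    calc C * (hj j + 1) / √N * (PP ν).real (Epos q 0)
        ≤ C * (hj j + 1) / √N * (C * (2 : ℝ) * (2 : ℝ) ^ (-(1 / 2 : ℝ) * j)) :=
          mul_le_mul_of_nonneg_left hs2 (by positivity)
      _ = _ := by ring
  -- cover
  have hcover : Bd γ M N l ⊆ ⋃ j ∈ Finset.range l, Tlow (hj (j + (j0 + 1))) N (2 ^ (j + (j0 + 1))) (2 ^ (j + (j0 + 1))) 0 := by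
    rintro w ⟨hw, m, hMm, hml, hlow⟩
    have hm0 : m ≠ 0 := by
      have : 0 < 2 ^ (j0 + 1) := by positivity
      omega
    have h1 : 2 ^ (Nat.log 2 m) ≤ m := Nat.pow_log_le_self 2 hm0
    have h2 : m < 2 ^ (Nat.log 2 m + 1) := Nat.lt_pow_succ_log_self (by norm_num) m
    have h3 : j0 + 1 ≤ Nat.log 2 m := by
      apply (Nat.le_log_iff_pow_le (by norm_num) hm0).2
      omega
    have h4 : Nat.log 2 m < m := Nat.log_lt_self 2 hm0
    obtain ⟨j, hj'⟩ : ∃ j, Nat.log 2 m = j + (j0 + 1) := ⟨Nat.log 2 m - (j0 + 1), by omega⟩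
    simp only [mem_iUnion]
    refine ⟨j, Finset.mem_range.2 (by omega), m, ?_, ?_, ?_, ?_⟩
    · rw [← hj']; exact h1
    · rw [← hj']; rw [pow_succ] at h2; omega
    · rw [zero_add, ← hj']
      refine hlow.trans_le ?_
      simp only [hj]
      have : (m : ℝ) ^ γ ≤ 2 ^ (γ * ((Nat.log 2 m : ℕ) + 1)) := by
        rw [mul_comm, Real.rpow_mul (by norm_num)]
        apply Real.rpow_le_rpow (by positivity) _ hγ0.le
        have : (2 : ℝ) ^ ((Nat.log 2 m : ℝ) + 1) = ((2 ^ (Nat.log 2 m + 1) : ℕ) : ℝ) := by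
          push_cast
          rw [← Real.rpow_natCast]; push_cast; rfl
        rw [this]
        exact_mod_cast h2.le
      linarith
    · intro i hi
      rw [zero_add]; exact hw i (by omega)
  refine (measureReal_mono hcover (measure_ne_top _ _)).trans ?_
  refine (measureReal_biUnion_finset_le _ _).trans ?_
  calc _ ≤ ∑ j ∈ Finset.range l, aj (j + (j0 + 1)) / √N :=
        Finset.sum_le_sum fun j _ => hblock _ (by omega)
    _ = (∑ j ∈ Finset.range l, aj (j + (j0 + 1))) / √N := by rw [Finset.sum_div]
    _ ≤ ε / √N := by
      gcongr
      refine le_trans ?_ (hj0 (j0 + 1) (by omega))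
      exact Summable.sum_le_tsum _ (fun _ _ => haj0 _) ((summable_nat_add_iff (j0 + 1)).2 hsum)

lemma meas_Bd (γ : ℝ) (M N l : ℕ) : MeasurableSet (Bd γ M N l) := by
  have : Bd γ M N l = Epos l 0 ∩ ⋃ m, ⋃ (_ : M ≤ m ∧ m + N ≤ l),
      {w | W w m < 2 * (m : ℝ) ^ γ} := by
    ext; simp [Bd, Epos, and_assoc]
  rw [this]
  exact (meas_Epos _ _).inter (MeasurableSet.iUnion fun m => MeasurableSet.iUnion fun _ =>
    (measurableSet_lt (by fun_prop) (by fun_prop)))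

end Sinai

namespace Sinai

variable {ν : Measure ℝ} [IsProbabilityMeasure ν] {c σ2 : ℝ}

lemma StepLaw.quart (h : StepLaw ν c σ2) {m3 m4 : ℝ} (hm3 : ∫ z, z ^ 3 ∂ν = m3)
    (hm4 : ∫ z, z ^ 4 ∂ν = m4) (a0 a1 a2 a3 a4 : ℝ) :
    Integrable (fun z => a0 + a1 * z + a2 * z ^ 2 + a3 * z ^ 3 + a4 * z ^ 4) ν ∧
    ∫ z, (a0 + a1 * z + a2 * z ^ 2 + a3 * z ^ 3 + a4 * z ^ 4) ∂ν
      = a0 + a2 * σ2 + a3 * m3 + a4 * m4 := by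
  obtain ⟨h1, h1'⟩ := h.quad a0 a1 a2
  have h3 : Integrable (fun z => a3 * z ^ 3) ν := (h.int_pow 3).const_mul a3
  have h4 : Integrable (fun z => a4 * z ^ 4) ν := (h.int_pow 4).const_mul a4
  have h13 : Integrable (fun z => a0 + a1 * z + a2 * z ^ 2 + a3 * z ^ 3) ν := h1.add h3
  refine ⟨h13.add h4, ?_⟩
  rw [integral_add h13 h4, integral_add h1 h3, h1', integral_const_mul, integral_const_mul, hm3, hm4]

lemma poly_lower (h : StepLaw ν c σ2) {m3 m4 : ℝ} (hm3 : ∫ z, z ^ 3 ∂ν = m3)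
    (hm4 : ∫ z, z ^ 4 ∂ν = m4) (A B D s0 s K : ℝ)
    (hpt : ∀ v : ℝ, A * v + B * v ^ 2 - D * v ^ 4 - s0 ≤ if s ≤ v then K else 0) (N : ℕ) :
    ∀ v : ℝ, A * v + B * (v ^ 2 + σ2 * N) - D * (v ^ 4 + 6 * σ2 * N * v ^ 2
      + 4 * m3 * N * v + m4 * N + 3 * σ2 ^ 2 * N * (N - 1)) - s0
      ≤ K * (PP ν).real {w | s ≤ v + W w N} := by
  induction N with
  | zero =>
    intro v
    have := hpt v
    by_cases hs : s ≤ v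
    · simp only [hs, if_true] at this
      simp [hs]; linarith
    · simp only [hs, if_false] at this
      simp [hs]; linarith
  | succ N ih =>
    intro v
    have hm : MeasurableSet {w : ℕ → ℝ | s ≤ v + W w (N + 1)} :=
      measurableSet_le (by fun_prop) (by fun_prop)
    have hpre : ∀ z, scons z ⁻¹' {w : ℕ → ℝ | s ≤ v + W w (N + 1)} = {w | s ≤ (v + z) + W w N} := by
      intro z; ext w; simp [W_scons, add_assoc]
    rw [first_step_real ν hm, ← integral_const_mul]
    obtain ⟨q1, q2⟩ := h.quart hm3 hm4
      (A * v + B * (v ^ 2 + σ2 * N) - D * (v ^ 4 + 6 * σ2 * N * v ^ 2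
        + 4 * m3 * N * v + m4 * N + 3 * σ2 ^ 2 * N * (N - 1)) - s0)
      (A + 2 * B * v - D * (4 * v ^ 3 + 12 * σ2 * N * v + 4 * m3 * N))
      (B - D * (6 * v ^ 2 + 6 * σ2 * N)) (- D * (4 * v)) (- D)
    calc _ = _ := by rw [q2]; push_cast; ring
      _ ≤ _ := integral_mono q1 ((first_step_integrable ν hm).const_mul K) (fun z => ?_)
    simp only [hpre]
    refine le_trans (le_of_eq ?_) (ih (v + z))
    ring

lemma kolm (h : StepLaw ν c σ2) (lam : ℝ) (hl : 0 < lam) (N : ℕ) :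
    ∀ v : ℝ, (PP ν).real {w | ∃ m ≤ N, lam < |v + W w m|} ≤ (v ^ 2 + σ2 * N) / lam ^ 2 := by
  have hσ := h.pos
  induction N with
  | zero =>
    intro v
    by_cases hv : lam < |v|
    · simp [hv]
      rw [le_div_iff₀ (by positivity)]
      have : lam ^ 2 ≤ |v| ^ 2 := pow_le_pow_left₀ hl.le hv.le 2
      rw [sq_abs] at this; linarith
    · simp [hv]; positivity
  | succ N ih =>
    intro v
    by_cases hv : lam < |v|
    · refine measureReal_le_one.trans ?_
      rw [le_div_iff₀ (by positivity)]
      have : lam ^ 2 ≤ |v| ^ 2 := pow_le_pow_left₀ hl.le hv.le 2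
      rw [sq_abs] at this
      have : 0 ≤ σ2 * ((N + 1 : ℕ) : ℝ) := by positivity
      linarith
    · have hm : MeasurableSet {w : ℕ → ℝ | ∃ m ≤ N + 1, lam < |v + W w m|} := by
        have : {w : ℕ → ℝ | ∃ m ≤ N + 1, lam < |v + W w m|} =
          ⋃ m, ⋃ (_ : m ≤ N + 1), {w | lam < |v + W w m|} := by ext; simp
        rw [this]
        exact MeasurableSet.iUnion fun m => MeasurableSet.iUnion fun _ =>
          measurableSet_lt (by fun_prop) (by fun_prop)
      obtain ⟨q1, q2⟩ := h.quad ((v ^ 2 + σ2 * N) / lam ^ 2) (2 * v / lam ^ 2) (1 / lam ^ 2)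
      refine (step_le ν hm _ q1 ?_).trans (le_of_eq ?_)
      · filter_upwards with z
        refine (measureReal_mono ?_ (measure_ne_top _ _)).trans ((ih (v + z)).trans (le_of_eq ?_))
        · rintro w ⟨m, hm, hw⟩
          cases m with
          | zero => simp at hw; exact absurd hw hv
          | succ m => exact ⟨m, by omega, by rwa [W_scons, ← add_assoc] at hw⟩
        · field_simp; ring
      · rw [q2]; push_cast; field_simp; ring

/-- up-block -/
def UpB (s t : ℝ) (H : ℕ) : Set (ℕ → ℝ) :=
  {w | s * H ≤ W w (H * H) ∧ ∀ m ≤ H * H, |W w m| ≤ t * H}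

lemma meas_UpB (s t : ℝ) (H : ℕ) : MeasurableSet (UpB s t H) := by
  have : UpB s t H = {w | s * H ≤ W w (H * H)} ∩ ⋂ m, ⋂ (_ : m ≤ H * H), {w | |W w m| ≤ t * H} := by
    ext; simp [UpB]
  rw [this]
  exact (measurableSet_le (by fun_prop) (by fun_prop)).inter
    (MeasurableSet.iInter fun m => MeasurableSet.iInter fun _ =>
      measurableSet_le (by fun_prop) (by fun_prop))

lemma dep_UpB (s t : ℝ) (H : ℕ) : DepFirst (H * H) (UpB s t H) := by
  intro w w' hw
  simp only [UpB, mem_ofPred_eq]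
  rw [W_congr hw le_rfl]
  refine and_congr Iff.rfl (forall_congr' fun m => forall_congr' fun hm => ?_)
  rw [W_congr hw hm]

set_option maxHeartbeats 1000000 in
lemma block_lower (h : StepLaw ν c σ2) : ∃ s > 0, ∃ T > 0, ∃ c1 > 0, ∀ t ≥ T, ∀ H : ℕ, 1 ≤ H →
    c1 ≤ (PP ν).real (UpB s t H) := by
  have hσ := h.pos
  have hc := h.c_nonneg
  obtain ⟨m3, hm3⟩ : ∃ m3, ∫ z, z ^ 3 ∂ν = m3 := ⟨_, rfl⟩
  obtain ⟨m4, hm4⟩ : ∃ m4, ∫ z, z ^ 4 ∂ν = m4 := ⟨_, rfl⟩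
  have hm40 : 0 ≤ m4 := hm4 ▸ integral_nonneg fun z => by positivity
  set C4 := m4 + 3 * σ2 ^ 2 with hC4
  have hC40 : 0 < C4 := by positivity
  set k := σ2 / (2 * C4) with hk
  have hk0 : 0 < k := by positivity
  set β := √k with hβ
  have hβ0 : 0 < β := Real.sqrt_pos.2 hk0
  have hββ : β ^ 2 = k := Real.sq_sqrt hk0.le
  set s' := β * σ2 / 4 with hs'
  have hs'0 : 0 < s' := by positivity
  set s := min 1 (s' / (1 + β)) with hs
  have hs0 : 0 < s := by positivity
  have hss : s + β * s ^ 2 ≤ s' := by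
    have h1 : s ≤ 1 := min_le_left _ _
    have h2 : s ≤ s' / (1 + β) := min_le_right _ _
    rw [le_div_iff₀ (by positivity)] at h2
    nlinarith [mul_nonneg (mul_nonneg hβ0.le hs0.le) (by linarith : 0 ≤ 1 - s)]
  set K := 1 + (1 + β) ^ 2 / (4 * (k * β)) with hK
  have hK0 : 0 < K := by positivity
  -- pointwise bound in the scaled variable
  have hpt : ∀ x : ℝ, x + β * x ^ 2 - k * β * x ^ 4 - s' ≤ if s ≤ x then K else 0 := by
    intro x
    split_ifs with hx
    · have h1 : (1 + β) * x ^ 2 - k * β * x ^ 4 ≤ (1 + β) ^ 2 / (4 * (k * β)) := by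
        rw [le_div_iff₀ (by positivity)]
        nlinarith [sq_nonneg (2 * (k * β) * x ^ 2 - (1 + β))]
      nlinarith [sq_nonneg (x - 1)]
    · push Not at hx
      rcases le_or_gt 0 x with h0 | h0
      · have : β * x ^ 2 ≤ β * s ^ 2 := by gcongr
        have : 0 ≤ k * β * x ^ 4 := by positivity
        linarith
      · -- y = -x
        have key : 0 ≤ 1 + β * x + k * β * (-x) ^ 3 := by
          rcases le_or_gt 0 (1 + β * x) with h1 | h1
          · have : 0 ≤ (-x) ^ 3 := by
              have : 0 < -x := by linarith
              positivity
            positivity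
          · have h2 : 1 < β * (-x) := by linarith
            have h3 : 1 ≤ k * (-x) ^ 2 := by
              rw [← hββ, ← mul_pow]; nlinarith
            have h4 : 0 < -x := by linarith
            have : β * (-x) * 1 ≤ β * (-x) * (k * (-x) ^ 2) := by gcongr
            nlinarith
        nlinarith
  refine ⟨s, hs0, √(8 * σ2 * K / s'), by positivity, s' / (2 * K), by positivity, ?_⟩
  intro t ht H hH
  have hH' : (1 : ℝ) ≤ H := by exact_mod_cast hH
  have hHpos : (0 : ℝ) < H := by linarith
  have h1 := poly_lower h hm3 hm4 (1 / H) (β / H ^ 2) (k * β / H ^ 4) s' (s * H) K (by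
    intro v
    have := hpt (v / H)
    have e : (s ≤ v / H) ↔ (s * H ≤ v) := le_div_iff₀ hHpos
    simp only [e] at this
    refine le_trans (le_of_eq ?_) this
    field_simp) (H * H) 0
  have h2 : s' ≤ K * (PP ν).real {w | s * H ≤ W w (H * H)} := by
    simp only [zero_add] at h1
    refine le_trans ?_ h1
    push_cast
    have e1 : β / H ^ 2 * (0 ^ 2 + σ2 * (H * H : ℝ)) = β * σ2 := by field_simp; ring
    have e2 : k * β / H ^ 4 * (0 ^ 4 + 6 * σ2 * (H * H : ℝ) * 0 ^ 2 + 4 * m3 * (H * H) * 0 + m4 * (H * H)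
      + 3 * σ2 ^ 2 * (H * H) * (H * H - 1)) ≤ k * β * C4 := by
      rw [div_mul_eq_mul_div, div_le_iff₀ (by positivity), mul_assoc (k * β) C4]
      refine mul_le_mul_of_nonneg_left ?_ (by positivity)
      rw [hC4]
      have : (1 : ℝ) ≤ (H : ℝ) * H := by nlinarith
      have : m4 * (H * H : ℝ) ≤ m4 * H ^ 4 := by
        gcongr; nlinarith
      have hp : 0 ≤ σ2 ^ 2 * (H * H : ℝ) := by positivity
      linarith
    have e3 : k * β * C4 = β * σ2 / 2 := by rw [hk]; field_simp
    rw [e1]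
    rw [e3] at e2
    rw [hs'] at *
    linarith
  have h3 := kolm h (t * H) (by
    have : 0 < √(8 * σ2 * K / s') := by positivity
    have : 0 < t := by linarith
    positivity) (H * H) 0
  have h4 : (0 ^ 2 + σ2 * ((H * H : ℕ) : ℝ)) / (t * H) ^ 2 ≤ s' / (2 * K) := by
    have ht2 : 8 * σ2 * K / s' ≤ t ^ 2 := by
      have := pow_le_pow_left₀ (by positivity) ht 2
      rwa [Real.sq_sqrt (by positivity)] at this
    rw [div_le_iff₀ hs'0] at ht2
    have htp : 0 < t ^ 2 := by
      by_contra hcon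
      have : t ^ 2 = 0 := le_antisymm (not_lt.1 hcon) (sq_nonneg t)
      rw [this] at ht2
      have : 0 < 8 * σ2 * K := by positivity
      linarith
    push_cast
    have e : (0 ^ 2 + σ2 * ((H : ℝ) * H)) / (t * H) ^ 2 = σ2 / t ^ 2 := by field_simp; ring
    rw [e, div_le_div_iff₀ htp (by positivity)]
    nlinarith [mul_pos hσ hK0]
  have h5 : (PP ν).real {w | s * H ≤ W w (H * H)} ≤ (PP ν).real (UpB s t H) +
      (PP ν).real {w | ∃ m ≤ H * H, t * H < |0 + W w m|} := by
    refine (measureReal_mono ?_ (measure_ne_top _ _)).trans (measureReal_union_le _ _)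
    intro w hw
    by_cases hb : ∃ m ≤ H * H, t * H < |0 + W w m|
    · exact Or.inr hb
    · left
      push Not at hb
      exact ⟨hw, fun m hm => by simpa using hb m hm⟩
  have h6 : s' / K ≤ (PP ν).real {w | s * H ≤ W w (H * H)} := by
    rw [div_le_iff₀ hK0]; linarith
  have h7 : s' / K = s' / (2 * K) + s' / (2 * K) := by field_simp; ring
  linarith

end Sinai

namespace Sinai

/-- index set: `inl` for the environment, `inr` for the scenery -/
abbrev Idx := ℤ ⊕ ℤ

/-- one-dimensional marginals -/
noncomputable def fam (ν ρ : Measure ℝ) : Idx → Measure ℝ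
  | Sum.inl _ => ν
  | Sum.inr _ => ρ

instance (ν ρ : Measure ℝ) [IsProbabilityMeasure ν] [IsProbabilityMeasure ρ] (i : Idx) :
    IsProbabilityMeasure (fam ν ρ i) := by
  cases i <;> simp only [fam] <;> infer_instance

/-- canonical law -/
noncomputable abbrev PM (ν ρ : Measure ℝ) [IsProbabilityMeasure ν] [IsProbabilityMeasure ρ] :
    Measure (Idx → ℝ) := Measure.infinitePi (fam ν ρ)

/-- dependence on the coordinates in `S` -/
def DepOn (S : Set Idx) (A : Set (Idx → ℝ)) : Prop :=
  ∀ x x' : Idx → ℝ, (∀ i ∈ S, x i = x' i) → (x ∈ A ↔ x' ∈ A)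

lemma DepOn.mono {S T : Set Idx} {A : Set (Idx → ℝ)} (h : DepOn S A) (hST : S ⊆ T) : DepOn T A :=
  fun x x' hx => h x x' fun i hi => hx i (hST hi)

lemma DepOn.inter {S : Set Idx} {A B : Set (Idx → ℝ)} (hA : DepOn S A) (hB : DepOn S B) :
    DepOn S (A ∩ B) := fun x x' hx => and_congr (hA x x' hx) (hB x x' hx)

lemma DepOn.compl {S : Set Idx} {A : Set (Idx → ℝ)} (hA : DepOn S A) :
    DepOn S Aᶜ := fun x x' hx => not_congr (hA x x' hx)

lemma DepOn.iUnion {κ : Sort*} {S : Set Idx} {A : κ → Set (Idx → ℝ)} (hA : ∀ k, DepOn S (A k)) :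
    DepOn S (⋃ k, A k) := fun x x' hx => by
  simp only [mem_iUnion]; exact exists_congr fun k => hA k x x' hx

lemma DepOn.iInter {κ : Sort*} {S : Set Idx} {A : κ → Set (Idx → ℝ)} (hA : ∀ k, DepOn S (A k)) :
    DepOn S (⋂ k, A k) := fun x x' hx => by
  simp only [mem_iInter]; exact forall_congr' fun k => hA k x x' hx

variable (ν ρ : Measure ℝ) [IsProbabilityMeasure ν] [IsProbabilityMeasure ρ]

lemma coords_indep : iIndepFun (fun (i : Idx) (x : Idx → ℝ) => x i) (PM ν ρ) :=
  iIndepFun_infinitePi (P := fam ν ρ) (X := fun _ x => x) (fun _ => measurable_id)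

lemma indep_coords {S T : Set Idx} (hST : Disjoint S T) {A B : Set (Idx → ℝ)}
    (hA : MeasurableSet A) (hB : MeasurableSet B) (dA : DepOn S A) (dB : DepOn T B) :
    (PM ν ρ).real (A ∩ B) = (PM ν ρ).real A * (PM ν ρ).real B := by
  have key : ∀ (S : Set Idx) (A : Set (Idx → ℝ)), MeasurableSet A → DepOn S A →
      MeasurableSet[⨆ i ∈ S, MeasurableSpace.comap (fun x : Idx → ℝ => x i) inferInstance] A := by
    intro S A hA dA
    classical
    let φ : (Idx → ℝ) → (Idx → ℝ) := fun x i => if i ∈ S then x i else 0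
    have hφ : Measurable[⨆ i ∈ S, MeasurableSpace.comap (fun x : Idx → ℝ => x i) inferInstance] φ := by
      refine @measurable_pi_lambda _ _ _ (_) _ φ fun i => ?_
      by_cases hi : i ∈ S
      · simp only [φ, hi, if_true]
        have : MeasurableSpace.comap (fun x : Idx → ℝ => x i) inferInstance ≤
          ⨆ i ∈ S, MeasurableSpace.comap (fun x : Idx → ℝ => x i) inferInstance :=
          le_iSup₂_of_le i hi le_rfl
        exact (comap_measurable (fun x : Idx → ℝ => x i)).mono this le_rfl
      · simp only [φ, hi, if_false]
        exact @measurable_const _ _ (_) (_) _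
    have : A = φ ⁻¹' A := by
      ext x
      simp only [mem_preimage]
      exact dA x (φ x) fun i hi => by simp [φ, hi]
    rw [this]
    exact hφ hA
  have hind := indep_iSup_of_disjoint (fun i => (measurable_pi_apply i).comap_le)
    (coords_indep ν ρ).iIndep hST
  have := (Indep_iff _ _ _).1 hind A B (key S A hA dA) (key T B hB dB)
  simp only [Measure.real, this, ENNReal.toReal_mul]

/-- rightward increments from `y` -/
def wR (y : ℤ) (x : Idx → ℝ) : ℕ → ℝ := fun i => x (Sum.inl (y + 1 + i))

/-- leftward increments from `y` -/
def wL (y : ℤ) (x : Idx → ℝ) : ℕ → ℝ := fun i => -x (Sum.inl (y - i))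

@[fun_prop]
lemma measurable_wR (y : ℤ) : Measurable (wR y) := by
  rw [measurable_pi_iff]; intro n; unfold wR; fun_prop

@[fun_prop]
lemma measurable_wL (y : ℤ) : Measurable (wL y) := by
  rw [measurable_pi_iff]; intro n; unfold wL; fun_prop

lemma map_eval_PM (i : Idx) : (PM ν ρ).map (fun x => x i) = fam ν ρ i :=
  (measurePreserving_eval_infinitePi (fam ν ρ) i).map_eq

lemma map_wR (y : ℤ) : (PM ν ρ).map (wR y) = PP ν := by
  have h1 := (coords_indep ν ρ).precomp (g := fun i : ℕ => (Sum.inl (y + 1 + i) : Idx))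
    (fun i j h => by simpa using h)
  have h2 := h1.map_fun_eq_infinitePi_map (fun i => by fun_prop)
  have : ∀ i : ℕ, (PM ν ρ).map (fun x => x (Sum.inl (y + 1 + i))) = ν := fun i => map_eval_PM ν ρ _
  unfold wR
  simp only [this] at h2
  exact h2

instance : IsProbabilityMeasure (ν.map (fun z => -z)) := Measure.isProbabilityMeasure_map (by fun_prop)

lemma map_wL (y : ℤ) : (PM ν ρ).map (wL y) = PP (ν.map (fun z => -z)) := by
  have h1 := ((coords_indep ν ρ).precomp (g := fun i : ℕ => (Sum.inl (y - i) : Idx))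
    (fun i j h => by simpa using h)).comp (fun _ z => -z) (fun _ => measurable_neg)
  have h2 := h1.map_fun_eq_infinitePi_map (fun i => by unfold Function.comp; fun_prop)
  have : ∀ i : ℕ, (PM ν ρ).map ((fun z => -z) ∘ fun x => x (Sum.inl (y - i))) = ν.map (fun z => -z) := by
    intro i
    rw [← Measure.map_map (by fun_prop) (by fun_prop), map_eval_PM]
    rfl
  simp only [this] at h2
  exact h2

lemma map_neg_PP : (PP ν).map (fun w i => -w i) = PP (ν.map (fun z => -z)) :=
  Measure.infinitePi_map_pi (fun _ => ν) (f := fun _ z => -z) (fun _ => measurable_neg)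

lemma real_wR (y : ℤ) {A : Set (ℕ → ℝ)} (hA : MeasurableSet A) :
    (PM ν ρ).real (wR y ⁻¹' A) = (PP ν).real A := by
  rw [← map_wR ν ρ y, map_measureReal_apply (by fun_prop) hA]

lemma real_wL (y : ℤ) {A : Set (ℕ → ℝ)} (hA : MeasurableSet A) :
    (PM ν ρ).real (wL y ⁻¹' A) = (PP (ν.map (fun z => -z))).real A := by
  rw [← map_wL ν ρ y, map_measureReal_apply (by fun_prop) hA]

lemma dep_wR (y : ℤ) {m : ℕ} {A : Set (ℕ → ℝ)} (hA : DepFirst m A) :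
    DepOn (Sum.inl '' Ioc y (y + m)) (wR y ⁻¹' A) := by
  intro x x' h
  apply hA
  intro i hi
  apply h
  exact ⟨_, ⟨by omega, by omega⟩, rfl⟩

lemma dep_wL (y : ℤ) {m : ℕ} {A : Set (ℕ → ℝ)} (hA : DepFirst m A) :
    DepOn (Sum.inl '' Ioc (y - m) y) (wL y ⁻¹' A) := by
  intro x x' h
  apply hA
  intro i hi
  unfold wL
  rw [h]
  exact ⟨_, ⟨by omega, by omega⟩, rfl⟩

lemma dep_Epos (N : ℕ) (v : ℝ) : DepFirst N (Epos N v) := by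
  intro w w' hw
  refine forall_congr' fun m => forall_congr' fun hm => ?_
  rw [W_congr hw hm]

lemma dep_Bd (γ : ℝ) (M N l : ℕ) : DepFirst l (Bd γ M N l) := by
  intro w w' hw
  refine and_congr (forall_congr' fun m => forall_congr' fun hm => ?_) (exists_congr fun m => ?_)
  · rw [W_congr hw hm]
  · refine and_congr_right fun _ => and_congr_right fun hm => ?_
    rw [W_congr hw (by omega)]

lemma DepFirst.mono {m m' : ℕ} (h : m ≤ m') {A : Set (ℕ → ℝ)} (hA : DepFirst m A) : DepFirst m' A :=
  fun w w' hw => hA w w' fun i hi => hw i (by omega)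

/-- bad event at `y` -/
def Bad (γ : ℝ) (M N R : ℕ) (r : ℤ) (b : ℕ) : Set (Idx → ℝ) :=
  (wR (r + b) ⁻¹' Bd γ M N (R - b) ∩ wL (r + b) ⁻¹' Epos N 0) ∪
  (wR (r + b) ⁻¹' Epos N 0 ∩ wL (r + b) ⁻¹' Bd γ M N b)

lemma meas_Bad (γ : ℝ) (M N R : ℕ) (r : ℤ) (b : ℕ) : MeasurableSet (Bad γ M N R r b) :=
  ((measurable_wR _ (meas_Bd _ _ _ _)).inter (measurable_wL _ (meas_Epos _ _))).union
  ((measurable_wR _ (meas_Epos _ _)).inter (measurable_wL _ (meas_Bd _ _ _ _)))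

lemma dep_Bad (γ : ℝ) (M N R : ℕ) (r : ℤ) (b : ℕ) (h1 : N ≤ b) (h2 : b + N ≤ R) :
    DepOn (Sum.inl '' Ioc r (r + R)) (Bad γ M N R r b) := by
  have k1 : ∀ l, b + l ≤ R → (Sum.inl '' Ioc (r + b) (r + b + (l : ℕ)) : Set Idx) ⊆ Sum.inl '' Ioc r (r + R) := by
    intro l hl
    apply image_mono
    intro x hx
    simp only [mem_Ioc] at *; omega
  have k2 : ∀ l, l ≤ b → (Sum.inl '' Ioc (r + b - (l : ℕ)) (r + b) : Set Idx) ⊆ Sum.inl '' Ioc r (r + R) := by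
    intro l hl
    apply image_mono
    intro x hx
    simp only [mem_Ioc] at *; omega
  have a1 := (dep_wR (r + b) (dep_Bd γ M N (R - b))).mono (k1 _ (by omega))
  have a2 := (dep_wL (r + b) (dep_Epos N 0)).mono (k2 _ (by omega))
  have a3 := (dep_wR (r + b) (dep_Epos N 0)).mono (k1 _ (by omega))
  have a4 := (dep_wL (r + b) (dep_Bd γ M N b)).mono (k2 _ (by omega))
  intro x x' hx
  exact or_congr (and_congr (a1 x x' hx) (a2 x x' hx)) (and_congr (a3 x x' hx) (a4 x x' hx))

lemma wRL_indep (y : ℤ) {n m : ℕ} {A B : Set (ℕ → ℝ)} (hA : MeasurableSet A) (hB : MeasurableSet B)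
    (dA : DepFirst n A) (dB : DepFirst m B) :
    (PM ν ρ).real (wR y ⁻¹' A ∩ wL y ⁻¹' B) = (PP ν).real A * (PP (ν.map (fun z => -z))).real B := by
  rw [indep_coords ν ρ (S := Sum.inl '' Ioc y (y + n)) (T := Sum.inl '' Ioc (y - m) y) ?_
    (measurable_wR _ hA) (measurable_wL _ hB) (dep_wR y dA) (dep_wL y dB), real_wR ν ρ y hA, real_wL ν ρ y hB]
  rw [Set.disjoint_left]
  rintro _ ⟨u, hu, rfl⟩ ⟨v, hv, h⟩
  simp only [Sum.inl.injEq, mem_Ioc] at *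
  omega

lemma Bad_bound {c σ2 : ℝ} (h : StepLaw ν c σ2) : ∃ C > 0, ∀ γ : ℝ, 0 < γ → γ < 1 / 2 → ∀ ε > 0,
    ∃ M0 : ℕ, ∀ M ≥ M0, ∀ N ≥ 1, ∀ R r b, (PM ν ρ).real (Bad γ M N R r b) ≤ C * ε / N := by
  obtain ⟨C1, hC1, hs1⟩ := survival_bound h
  obtain ⟨C2, hC2, hs2⟩ := survival_bound h.neg
  refine ⟨C1 + C2, by positivity, ?_⟩
  intro γ hγ0 hγ ε hε
  obtain ⟨M1, hM1⟩ := Bd_bound h γ hγ0 hγ ε hε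
  obtain ⟨M2, hM2⟩ := Bd_bound h.neg γ hγ0 hγ ε hε
  refine ⟨max M1 M2, fun M hM N hN R r b => ?_⟩
  have hN' : (0 : ℝ) < N := by exact_mod_cast hN
  have hsq : √(N : ℝ) * √N = N := Real.mul_self_sqrt hN'.le
  have hsp : 0 < √(N : ℝ) := Real.sqrt_pos.2 hN'
  refine (measureReal_union_le _ _).trans ?_
  rw [wRL_indep ν ρ _ (meas_Bd _ _ _ _) (meas_Epos _ _) (dep_Bd _ _ _ _) (dep_Epos _ _),
    wRL_indep ν ρ _ (meas_Epos _ _) (meas_Bd _ _ _ _) (dep_Epos _ _) (dep_Bd _ _ _ _)]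
  have a1 := hM1 M (le_trans (le_max_left _ _) hM) N hN (R - b)
  have a2 := hM2 M (le_trans (le_max_right _ _) hM) N hN b
  have b1 := hs1 N hN 0 le_rfl
  have b2 := hs2 N hN 0 le_rfl
  have e1 := mul_le_mul a1 b2 measureReal_nonneg (by positivity)
  have e2 := mul_le_mul b1 a2 measureReal_nonneg (by positivity)
  refine (add_le_add e1 e2).trans (le_of_eq ?_)
  rw [div_mul_div_comm, div_mul_div_comm, hsq]
  ring

end Sinai

namespace Sinai

/-- down-block -/
def DnB (s t : ℝ) (H : ℕ) : Set (ℕ → ℝ) := {w | (fun i => -w i) ∈ UpB s t H}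

lemma meas_DnB (s t : ℝ) (H : ℕ) : MeasurableSet (DnB s t H) := by
  have : Measurable (fun (w : ℕ → ℝ) (i : ℕ) => -w i) := by fun_prop
  exact this (meas_UpB s t H)

lemma dep_DnB (s t : ℝ) (H : ℕ) : DepFirst (H * H) (DnB s t H) := by
  intro w w' hw
  exact dep_UpB s t H _ _ fun i hi => by rw [hw i hi]

/-- coarse event on the right -/
def CR (J Q : ℕ) (s t : ℝ) (H : ℕ) : Set (ℕ → ℝ) :=
  {w | ∀ i < Q, shft (i * (H * H)) w ∈ (if i < J then DnB s t H else UpB s t H)}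

/-- coarse event on the left -/
def CL (Q : ℕ) (s t : ℝ) (H : ℕ) : Set (ℕ → ℝ) :=
  {w | ∀ i < Q, shft (i * (H * H)) w ∈ UpB s t H}

lemma CL_eq (Q : ℕ) (s t : ℝ) (H : ℕ) : CL Q s t H = CR 0 Q s t H := by
  simp [CL, CR]

lemma meas_CR (J Q : ℕ) (s t : ℝ) (H : ℕ) : MeasurableSet (CR J Q s t H) := by
  have : CR J Q s t H = ⋂ i, ⋂ (_ : i < Q),
      shft (i * (H * H)) ⁻¹' (if i < J then DnB s t H else UpB s t H) := by
    ext; simp [CR]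
  rw [this]
  refine MeasurableSet.iInter fun i => MeasurableSet.iInter fun _ => measurable_shft _ ?_
  split_ifs
  · exact meas_DnB _ _ _
  · exact meas_UpB _ _ _

lemma dep_CR (J Q : ℕ) (s t : ℝ) (H : ℕ) : DepFirst (Q * (H * H)) (CR J Q s t H) := by
  intro w w' hw
  refine forall_congr' fun i => forall_congr' fun hi => ?_
  have hle : i * (H * H) + H * H ≤ Q * (H * H) := by
    calc i * (H * H) + H * H = (i + 1) * (H * H) := by ring
      _ ≤ Q * (H * H) := Nat.mul_le_mul_right _ hi
  have : ∀ j < H * H, shft (i * (H * H)) w j = shft (i * (H * H)) w' j := by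
    intro j hj
    exact hw _ (by omega)
  split_ifs
  · exact dep_DnB _ _ _ _ _ this
  · exact dep_UpB _ _ _ _ _ this

/-- `b` is the first argmin of the walk on `[0,R]` -/
def Arg (R b : ℕ) : Set (ℕ → ℝ) :=
  {w | (∀ m < b, W w b < W w m) ∧ ∀ m ≤ R, W w b ≤ W w m}

lemma meas_Arg (R b : ℕ) : MeasurableSet (Arg R b) := by
  have : Arg R b = (⋂ m, ⋂ (_ : m < b), {w | W w b < W w m}) ∩ ⋂ m, ⋂ (_ : m ≤ R), {w | W w b ≤ W w m} := by
    ext; simp [Arg]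
  rw [this]
  exact (MeasurableSet.iInter fun m => MeasurableSet.iInter fun _ =>
      measurableSet_lt (by fun_prop) (by fun_prop)).inter
    (MeasurableSet.iInter fun m => MeasurableSet.iInter fun _ =>
      measurableSet_le (by fun_prop) (by fun_prop))

lemma dep_Arg (R b : ℕ) (hb : b ≤ R) : DepFirst R (Arg R b) := by
  intro w w' hw
  refine and_congr (forall_congr' fun m => forall_congr' fun hm => ?_)
    (forall_congr' fun m => forall_congr' fun hm => ?_)
  · rw [W_congr hw hb, W_congr hw (by omega)]
  · rw [W_congr hw hb, W_congr hw hm]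

lemma Arg_exists (R : ℕ) (w : ℕ → ℝ) : ∃ b ≤ R, w ∈ Arg R b := by
  classical
  obtain ⟨b0, hb0, hmin⟩ := Finset.exists_min_image (Finset.range (R + 1)) (W w) ⟨0, by simp⟩
  have hex : ∃ b, b ≤ R ∧ ∀ m ≤ R, W w b ≤ W w m :=
    ⟨b0, by simpa [Nat.lt_succ_iff] using hb0, fun m hm => hmin m (by simpa [Nat.lt_succ_iff] using hm)⟩
  refine ⟨Nat.find hex, (Nat.find_spec hex).1, fun m hm => ?_, (Nat.find_spec hex).2⟩
  have hn := Nat.find_min hex hm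
  by_contra hcon
  push Not at hcon
  refine hn ⟨by have := (Nat.find_spec hex).1; omega, fun m' hm' => hcon.trans ((Nat.find_spec hex).2 m' hm')⟩

lemma Arg_disj (R : ℕ) {b b' : ℕ} (hb : b ≤ R) (hb' : b' ≤ R) (w : ℕ → ℝ) (h : w ∈ Arg R b) (h' : w ∈ Arg R b') :
    b = b' := by
  rcases lt_trichotomy b b' with hl | hl | hl
  · have := h'.1 b hl
    have := h.2 b' hb'
    linarith
  · exact hl
  · have := h.1 b' hl
    have := h'.2 b hb
    linarith

/-- fine event -/
def Fine (γ : ℝ) (M N R : ℕ) (r : ℤ) : Set (Idx → ℝ) :=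
  ⋂ b ∈ Finset.Icc N (R - N), (Bad γ M N R r b)ᶜ

/-- scenery allowance -/
noncomputable def hh (γ : ℝ) (M : ℕ) (j : ℕ) : ℝ := if j < M then 0 else Real.exp ((j : ℝ) ^ γ)

/-- sites of the annulus -/
noncomputable def Sites (r R : ℕ) : Finset ℤ := Finset.Ioc (r : ℤ) (r + R) ∪ Finset.Ico (-(r : ℤ) - R) (-r)

/-- scenery event -/
def FS (h : ℕ → ℝ) (S : Finset ℤ) (y : ℤ) : Set (Idx → ℝ) :=
  {x | ∀ u ∈ S, x (Sum.inr u) ≤ h (u - y).natAbs}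

/-- coordinates of the annulus -/
def Ann (r R : ℕ) : Set Idx :=
  Sum.inl '' (Ioc (r : ℤ) (r + R) ∪ Ioc (-(r : ℤ) - R) (-r)) ∪ Sum.inr '' (Sites r R : Set ℤ)

/-- right event with scenery -/
def GR (J Q : ℕ) (s t : ℝ) (H : ℕ) (γ : ℝ) (M : ℕ) (r : ℕ) (b : ℕ) : Set (Idx → ℝ) :=
  ((wR r ⁻¹' CR J Q s t H ∩ Fine γ M (H * H) (Q * (H * H)) r) ∩ wR r ⁻¹' Arg (Q * (H * H)) b)

/-- the annulus event -/
def GG (J Q : ℕ) (s t : ℝ) (H : ℕ) (γ : ℝ) (M : ℕ) (r : ℕ) : Set (Idx → ℝ) :=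
  wL (-(r : ℤ)) ⁻¹' CL Q s t H ∩ ⋃ b ∈ Finset.range (Q * (H * H) + 1),
    (GR J Q s t H γ M r b ∩ FS (hh γ M) (Sites r (Q * (H * H))) (r + b))

lemma meas_Fine (γ : ℝ) (M N R : ℕ) (r : ℤ) : MeasurableSet (Fine γ M N R r) :=
  Finset.measurableSet_biInter _ fun b _ => (meas_Bad _ _ _ _ _ _).compl

lemma dep_Fine (γ : ℝ) (M N R : ℕ) (r : ℤ) : DepOn (Sum.inl '' Ioc r (r + R)) (Fine γ M N R r) := by
  refine DepOn.iInter fun b => DepOn.iInter fun hb => (DepOn.compl ?_)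
  rw [Finset.mem_Icc] at hb
  rcases Nat.lt_or_ge R N with h | h
  · have hb0 : b = 0 := by omega
    have hN0 : N = 0 := by omega
    omega
  · exact dep_Bad _ _ _ _ _ _ hb.1 (by omega)

lemma meas_FS (h : ℕ → ℝ) (S : Finset ℤ) (y : ℤ) : MeasurableSet (FS h S y) := by
  have : FS h S y = ⋂ u ∈ S, {x | x (Sum.inr u) ≤ h (u - y).natAbs} := by ext; simp [FS]
  rw [this]
  exact Finset.measurableSet_biInter _ fun b _ => measurableSet_le (by fun_prop) (by fun_prop)

lemma dep_FS (h : ℕ → ℝ) (S : Finset ℤ) (y : ℤ) : DepOn (Sum.inr '' (S : Set ℤ)) (FS h S y) := by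
  intro x x' hx
  refine forall_congr' fun u => forall_congr' fun hu => ?_
  rw [hx _ ⟨u, hu, rfl⟩]

lemma meas_GR (J Q : ℕ) (s t : ℝ) (H : ℕ) (γ : ℝ) (M : ℕ) (r : ℕ) (b : ℕ) :
    MeasurableSet (GR J Q s t H γ M r b) :=
  ((measurable_wR _ (meas_CR _ _ _ _ _)).inter (meas_Fine _ _ _ _ _)).inter (measurable_wR _ (meas_Arg _ _))

lemma dep_GR (J Q : ℕ) (s t : ℝ) (H : ℕ) (γ : ℝ) (M : ℕ) (r : ℕ) (b : ℕ) (hb : b ≤ Q * (H * H)) :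
    DepOn (Sum.inl '' Ioc (r : ℤ) (r + (Q * (H * H) : ℕ))) (GR J Q s t H γ M r b) :=
  ((dep_wR _ (dep_CR _ _ _ _ _)).inter (dep_Fine _ _ _ _ _)).inter (dep_wR _ (dep_Arg _ _ hb))

lemma meas_GG (J Q : ℕ) (s t : ℝ) (H : ℕ) (γ : ℝ) (M : ℕ) (r : ℕ) :
    MeasurableSet (GG J Q s t H γ M r) := by
  refine (measurable_wL _ (CL_eq Q s t H ▸ meas_CR _ _ _ _ _)).inter
    (Finset.measurableSet_biUnion _ fun b _ => (meas_GR _ _ _ _ _ _ _ _ _).inter (meas_FS _ _ _))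

lemma dep_GG (J Q : ℕ) (s t : ℝ) (H : ℕ) (γ : ℝ) (M : ℕ) (r : ℕ) :
    DepOn (Ann r (Q * (H * H))) (GG J Q s t H γ M r) := by
  refine DepOn.inter ((dep_wL _ (CL_eq Q s t H ▸ dep_CR _ _ _ _ _)).mono ?_)
    (DepOn.iUnion fun b => DepOn.iUnion fun hb => DepOn.inter ((dep_GR _ _ _ _ _ _ _ _ _ ?_).mono ?_)
    ((dep_FS _ _ _).mono ?_))
  · exact (image_mono subset_union_right).trans subset_union_left
  · simpa [Nat.lt_succ_iff] using hb
  · exact (image_mono subset_union_left).trans subset_union_left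
  · exact subset_union_right

variable (ν ρ : Measure ℝ) [IsProbabilityMeasure ν] [IsProbabilityMeasure ρ]

lemma FS_real (h : ℕ → ℝ) (S : Finset ℤ) (y : ℤ) :
    (PM ν ρ).real (FS h S y) = ∏ u ∈ S, ρ.real (Iic (h (u - y).natAbs)) := by
  classical
  have : FS h S y = Set.pi ((S.map ⟨Sum.inr, Sum.inr_injective⟩ : Finset Idx) : Set Idx)
      (fun i => Sum.elim (fun _ => univ) (fun u => Iic (h (u - y).natAbs)) i) := by
    ext x; simp [FS, Set.mem_pi]
  rw [this, Measure.real, Measure.infinitePi_pi, ENNReal.toReal_prod, Finset.prod_map]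
  · rfl
  · intro i _
    cases i
    · exact MeasurableSet.univ
    · exact measurableSet_Iic

lemma one_sub_sum_le_prod (f : ℕ → ℝ) (h0 : ∀ j, 0 ≤ f j) (h1 : ∀ j, f j ≤ 1) (n : ℕ) :
    1 - ∑ j ∈ Finset.range n, f j ≤ ∏ j ∈ Finset.range n, (1 - f j) := by
  induction n with
  | zero => simp
  | succ n ih =>
    rw [Finset.sum_range_succ, Finset.prod_range_succ]
    have hp : ∏ j ∈ Finset.range n, (1 - f j) ≤ 1 :=
      Finset.prod_le_one (fun j _ => by linarith [h1 j]) (fun j _ => by linarith [h0 j])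
    nlinarith [h0 n, h1 n]

lemma FS_lower (γ : ℝ) (hp : 0 < ρ.real (Iic 0))
    (hτ : Summable fun j : ℕ => ρ.real (Ioi (Real.exp ((j : ℝ) ^ γ)))) :
    ∃ M0 : ℕ, ∀ M ≥ M0, ∃ c > 0, ∀ (S : Finset ℤ) (y : ℤ), c ≤ (PM ν ρ).real (FS (hh γ M) S y) := by
  classical
  obtain ⟨M0, hM0⟩ := ((tendsto_sum_nat_add (fun j : ℕ => ρ.real (Ioi (Real.exp ((j : ℝ) ^ γ))))).eventually
    (ge_mem_nhds (show (0 : ℝ) < 1 / 2 by norm_num))).exists_forall_of_atTop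
  refine ⟨M0, fun M hM => ?_⟩
  set τ := fun j : ℕ => ρ.real (Ioi (Real.exp ((j : ℝ) ^ γ))) with hτdef
  set p := ρ.real (Iic (0 : ℝ)) with hpdef
  set f : ℕ → ℝ := fun j => ρ.real (Iic (hh γ M j)) with hf
  have hf0 : ∀ j, 0 ≤ f j := fun j => measureReal_nonneg
  have hf1 : ∀ j, f j ≤ 1 := fun j => measureReal_le_one
  have hprod : ∀ L, p ^ M * (1 / 2) ≤ ∏ j ∈ Finset.range L, f j := by
    intro L
    have h1 : ∏ j ∈ Finset.range (M + L), f j ≤ ∏ j ∈ Finset.range L, f j := by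
      rw [add_comm, Finset.prod_range_add]
      exact mul_le_of_le_one_right (Finset.prod_nonneg fun j _ => hf0 j)
        (Finset.prod_le_one (fun j _ => hf0 _) (fun j _ => hf1 _))
    refine le_trans ?_ h1
    rw [Finset.prod_range_add]
    have h2 : ∏ j ∈ Finset.range M, f j = p ^ M := by
      rw [Finset.prod_congr rfl (g := fun _ => p), Finset.prod_const, Finset.card_range]
      intro j hj
      simp [hf, hh, Finset.mem_range.1 hj, hpdef]
    rw [h2]
    refine mul_le_mul_of_nonneg_left ?_ (by positivity)
    have h3 : ∀ j, f (M + j) = 1 - τ (j + M) := by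
      intro j
      simp only [hf, hh, hτdef]
      rw [if_neg (by omega), ← compl_Ioi, measureReal_compl measurableSet_Ioi, probReal_univ, add_comm]
    simp_rw [h3]
    refine le_trans ?_ (one_sub_sum_le_prod (fun j => τ (j + M)) (fun j => measureReal_nonneg)
      (fun j => measureReal_le_one) L)
    have h4 : ∑ j ∈ Finset.range L, τ (j + M) ≤ ∑' j, τ (j + M) :=
      Summable.sum_le_tsum _ (fun _ _ => measureReal_nonneg) ((summable_nat_add_iff M).2 hτ)
    have := hM0 M hM
    linarith
  refine ⟨(p ^ M * (1 / 2)) * (p ^ M * (1 / 2)), by positivity, fun S y => ?_⟩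
  rw [FS_real]
  have hsub : ∀ T : Finset ℤ, Set.InjOn (fun u : ℤ => (u - y).natAbs) T →
      p ^ M * (1 / 2) ≤ ∏ u ∈ T, f (u - y).natAbs := by
    intro T hT
    rw [← Finset.prod_image (f := f) hT]
    obtain ⟨L, hL⟩ : ∃ L, (T.image fun u : ℤ => (u - y).natAbs) ⊆ Finset.range L := by
      refine ⟨(T.image fun u : ℤ => (u - y).natAbs).sup id + 1, fun j hj => ?_⟩
      have := Finset.le_sup (f := id) hj
      simp only [id] at this
      rw [Finset.mem_range]; omega
    refine (hprod L).trans ?_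
    rw [← Finset.prod_sdiff hL]
    exact mul_le_of_le_one_left (Finset.prod_nonneg fun j _ => hf0 _)
      (Finset.prod_le_one (fun j _ => hf0 _) (fun j _ => hf1 _))
  rw [← Finset.prod_filter_mul_prod_filter_not S (fun u => y ≤ u)]
  refine mul_le_mul (hsub _ ?_) (hsub _ ?_) (by positivity) (Finset.prod_nonneg fun j _ => hf0 _)
  · intro u hu v hv h
    simp at hu hv h; omega
  · intro u hu v hv h
    simp at hu hv h; omega

end Sinai

namespace Sinai
variable (ν ρ : Measure ℝ) [IsProbabilityMeasure ν] [IsProbabilityMeasure ρ]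

lemma UpB_mono {s s' t : ℝ} (h : s' ≤ s) (H : ℕ) : UpB s t H ⊆ UpB s' t H :=
  fun _ hw => ⟨(mul_le_mul_of_nonneg_right h (by positivity)).trans hw.1, hw.2⟩

lemma blocks_both {c σ2 : ℝ} (h : StepLaw ν c σ2) : ∃ s > 0, ∃ t > 0, ∃ c1 > 0, ∀ H : ℕ, 1 ≤ H →
    c1 ≤ (PP ν).real (UpB s t H) ∧ c1 ≤ (PP ν).real (DnB s t H) ∧
    c1 ≤ (PP (ν.map (fun z => -z))).real (UpB s t H) := by
  obtain ⟨s1, hs1, T1, hT1, c1, hc1, h1⟩ := block_lower h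
  obtain ⟨s2, hs2, T2, hT2, c2, hc2, h2⟩ := block_lower h.neg
  refine ⟨min s1 s2, by positivity, max T1 T2, by positivity, min c1 c2, by positivity, fun H hH => ?_⟩
  have a1 := (h1 (max T1 T2) (le_max_left _ _) H hH).trans
    (measureReal_mono (UpB_mono (min_le_left s1 s2) H) (measure_ne_top _ _))
  have a2 := (h2 (max T1 T2) (le_max_right _ _) H hH).trans
    (measureReal_mono (UpB_mono (min_le_right s1 s2) H) (measure_ne_top _ _))
  refine ⟨(min_le_left _ _).trans a1, ?_, (min_le_right _ _).trans a2⟩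
  refine (min_le_right _ _).trans (a2.trans (le_of_eq ?_))
  rw [← map_neg_PP, map_measureReal_apply (by fun_prop) (meas_UpB _ _ _)]
  rfl

lemma GG_lower {c σ2 : ℝ} (h : StepLaw ν c σ2) (γ : ℝ) (hγ0 : 0 < γ) (hγ : γ < 1 / 2)
    (hp : 0 < ρ.real (Iic 0))
    (hτ : Summable fun j : ℕ => ρ.real (Ioi (Real.exp ((j : ℝ) ^ γ)))) :
    ∃ s > 0, ∃ t > 0, ∀ J Q : ℕ, ∃ M0 : ℕ, ∀ M ≥ M0, ∃ c3 > 0, ∀ H : ℕ, 1 ≤ H → ∀ r : ℕ,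
      c3 ≤ (PM ν ρ).real (GG J Q s t H γ M r) := by
  obtain ⟨s, hs, t, ht, c1, hc1, hblk⟩ := blocks_both ν h
  obtain ⟨C, hC, hBad⟩ := Bad_bound ν ρ h
  obtain ⟨M1, hM1⟩ := FS_lower ν ρ γ hp hτ
  refine ⟨s, hs, t, ht, fun J Q => ?_⟩
  obtain ⟨M2, hM2⟩ := hBad γ hγ0 hγ (c1 ^ Q / (2 * C * (Q + 1))) (by positivity)
  refine ⟨max M1 M2, fun M hM => ?_⟩
  obtain ⟨c2, hc2, hFS⟩ := hM1 M (le_trans (le_max_left _ _) hM)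
  refine ⟨c1 ^ Q * (c1 ^ Q / 2 * c2), by positivity, fun H hH r => ?_⟩
  set R := Q * (H * H) with hR
  have hN : 1 ≤ H * H := Nat.mul_pos hH hH
  -- left
  have hL : c1 ^ Q ≤ (PM ν ρ).real (wL (-(r : ℤ)) ⁻¹' CL Q s t H) := by
    rw [real_wL ν ρ _ (CL_eq Q s t H ▸ meas_CR _ _ _ _ _)]
    exact blocks_ge _ (H * H) c1 hc1.le Q (fun _ => UpB s t H) (fun _ => meas_UpB _ _ _)
      (fun _ => dep_UpB _ _ _) (fun _ => (hblk H hH).2.2)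
  have hRt : c1 ^ Q ≤ (PM ν ρ).real (wR r ⁻¹' CR J Q s t H) := by
    rw [real_wR ν ρ _ (meas_CR _ _ _ _ _)]
    refine blocks_ge _ (H * H) c1 hc1.le Q (fun i => if i < J then DnB s t H else UpB s t H)
      (fun i => ?_) (fun i => ?_) (fun i => ?_)
    · show MeasurableSet (if i < J then DnB s t H else UpB s t H)
      split_ifs
      · exact meas_DnB _ _ _
      · exact meas_UpB _ _ _
    · show DepFirst _ (if i < J then DnB s t H else UpB s t H)
      split_ifs
      · exact dep_DnB _ _ _
      · exact dep_UpB _ _ _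
    · show c1 ≤ (PP ν).real (if i < J then DnB s t H else UpB s t H)
      split_ifs
      · exact (hblk H hH).2.1
      · exact (hblk H hH).1
  -- fine
  have hBadU : (PM ν ρ).real (⋃ b ∈ Finset.Icc (H * H) (R - H * H), Bad γ M (H * H) R r b) ≤ c1 ^ Q / 2 := by
    refine (measureReal_biUnion_finset_le _ _).trans ?_
    have hb := fun b => hM2 M (le_trans (le_max_right _ _) hM) (H * H) hN R r b
    refine (Finset.sum_le_sum fun b _ => hb b).trans ?_
    rw [Finset.sum_const, nsmul_eq_mul]
    have hcard : ((Finset.Icc (H * H) (R - H * H)).card : ℝ) ≤ Q * (H * H : ℕ) := by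
      rw [Nat.card_Icc]
      have : R - H * H + 1 - H * H ≤ Q * (H * H) := by omega
      exact_mod_cast this
    have hNpos : (0 : ℝ) < ((H * H : ℕ) : ℝ) := by exact_mod_cast hN
    calc _ ≤ (Q * (H * H : ℕ) : ℝ) * (C * (c1 ^ Q / (2 * C * (Q + 1))) / (H * H : ℕ)) := by gcongr
      _ = c1 ^ Q / 2 * (Q / (Q + 1)) := by field_simp
      _ ≤ c1 ^ Q / 2 * 1 := by
        gcongr
        rw [div_le_one (by positivity)]; linarith
      _ = _ := by ring
  have hE : c1 ^ Q / 2 ≤ (PM ν ρ).real (wR r ⁻¹' CR J Q s t H ∩ Fine γ M (H * H) R r) := by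
    have : (PM ν ρ).real (wR r ⁻¹' CR J Q s t H) ≤
      (PM ν ρ).real (wR r ⁻¹' CR J Q s t H ∩ Fine γ M (H * H) R r) +
      (PM ν ρ).real (⋃ b ∈ Finset.Icc (H * H) (R - H * H), Bad γ M (H * H) R r b) := by
      refine (measureReal_mono ?_ (measure_ne_top _ _)).trans (measureReal_union_le _ _)
      intro x hx
      by_cases hb : x ∈ ⋃ b ∈ Finset.Icc (H * H) (R - H * H), Bad γ M (H * H) R r b
      · exact Or.inr hb
      · refine Or.inl ⟨hx, ?_⟩
        simp only [mem_iUnion, not_exists] at hb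
        simp only [Fine, mem_iInter, mem_compl_iff]
        exact hb
    linarith
  -- with scenery
  have hdisj : Set.PairwiseDisjoint ((Finset.range (R + 1) : Finset ℕ) : Set ℕ)
      (fun b => GR J Q s t H γ M r b) := by
    intro b hb b' hb' hne
    rw [Function.onFun, Set.disjoint_left]
    intro x hx hx'
    simp [Nat.lt_succ_iff] at hb hb'
    exact hne (Arg_disj R hb hb' _ hx.2 hx'.2)
  have hdisj' : Set.PairwiseDisjoint ((Finset.range (R + 1) : Finset ℕ) : Set ℕ)
      (fun b => GR J Q s t H γ M r b ∩ FS (hh γ M) (Sites r R) (r + b)) := by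
    intro b hb b' hb' hne
    exact (hdisj hb hb' hne).mono inter_subset_left inter_subset_left
  have hGR : c1 ^ Q / 2 * c2 ≤ (PM ν ρ).real (⋃ b ∈ Finset.range (R + 1),
      (GR J Q s t H γ M r b ∩ FS (hh γ M) (Sites r R) (r + b))) := by
    rw [measureReal_biUnion_finset hdisj' (fun b _ => (meas_GR _ _ _ _ _ _ _ _ _).inter (meas_FS _ _ _))]
    have e : ∀ b ∈ Finset.range (R + 1), (PM ν ρ).real (GR J Q s t H γ M r b) * c2 ≤
        (PM ν ρ).real (GR J Q s t H γ M r b ∩ FS (hh γ M) (Sites r R) (r + b)) := by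
      intro b hb
      rw [Finset.mem_range, Nat.lt_succ_iff] at hb
      rw [indep_coords ν ρ ?_ (meas_GR _ _ _ _ _ _ _ _ _) (meas_FS _ _ _) (dep_GR _ _ _ _ _ _ _ _ _ hb)
        (dep_FS _ _ _)]
      · exact mul_le_mul_of_nonneg_left (hFS _ _) measureReal_nonneg
      · rw [Set.disjoint_left]
        rintro _ ⟨u, _, rfl⟩ ⟨v, _, hv⟩
        simp at hv
    refine le_trans ?_ (Finset.sum_le_sum e)
    rw [← Finset.sum_mul, ← measureReal_biUnion_finset hdisj (fun b _ => meas_GR _ _ _ _ _ _ _ _ _)]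
    refine mul_le_mul_of_nonneg_right (hE.trans (measureReal_mono ?_ (measure_ne_top _ _))) hc2.le
    intro x hx
    obtain ⟨b, hb, hbA⟩ := Arg_exists R (wR r x)
    simp only [mem_iUnion]
    exact ⟨b, by simpa [Nat.lt_succ_iff] using hb, hx, hbA⟩
  unfold GG
  rw [indep_coords ν ρ (S := Sum.inl '' Ioc (-(r : ℤ) - (R : ℕ)) (-r))
    (T := Sum.inl '' Ioc (r : ℤ) (r + (R : ℕ)) ∪ Sum.inr '' (Sites r R : Set ℤ))
    ?_ (measurable_wL _ (CL_eq Q s t H ▸ meas_CR _ _ _ _ _))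
    (Finset.measurableSet_biUnion _ fun b _ => (meas_GR _ _ _ _ _ _ _ _ _).inter (meas_FS _ _ _))
    (dep_wL _ (CL_eq Q s t H ▸ dep_CR _ _ _ _ _))
    (DepOn.iUnion fun b => DepOn.iUnion fun hb => DepOn.inter
      ((dep_GR _ _ _ _ _ _ _ _ _ (by simpa [Nat.lt_succ_iff] using hb)).mono subset_union_left)
      ((dep_FS _ _ _).mono subset_union_right))]
  · exact mul_le_mul hL hGR (by positivity) measureReal_nonneg
  · rw [Set.disjoint_left]
    rintro _ ⟨u, hu, rfl⟩ (⟨v, hv, hvu⟩ | ⟨v, _, hvu⟩)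
    · simp only [Sum.inl.injEq, mem_Ioc] at *
      omega
    · simp at hvu

end Sinai

namespace Sinai

lemma io_of_indep (ν ρ : Measure ℝ) [IsProbabilityMeasure ν] [IsProbabilityMeasure ρ]
    (G : ℕ → Set (Idx → ℝ)) (S : ℕ → Set Idx) (hG : ∀ k, MeasurableSet (G k))
    (dG : ∀ k, DepOn (S k) (G k)) (hS : ∀ k l, k < l → Disjoint (S k) (S l))
    (c3 : ℝ) (hc3 : 0 < c3) (hP : ∀ k, c3 ≤ (PM ν ρ).real (G k)) :
    ∀ᵐ x ∂(PM ν ρ), ∀ k0, ∃ k ≥ k0, x ∈ G k := by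
  rw [ae_all_iff]
  intro k0
  have hc1 : c3 ≤ 1 := (hP 0).trans measureReal_le_one
  have key : ∀ n : ℕ, (PM ν ρ).real (⋂ k ∈ Finset.Ico k0 (k0 + n), (G k)ᶜ) ≤ (1 - c3) ^ n := by
    intro n
    induction n with
    | zero => simp
    | succ n ih =>
      have e : (⋂ k ∈ Finset.Ico k0 (k0 + (n + 1)), (G k)ᶜ)
          = (⋂ k ∈ Finset.Ico k0 (k0 + n), (G k)ᶜ) ∩ (G (k0 + n))ᶜ := by
        ext x
        simp only [mem_iInter, Finset.mem_Ico, mem_inter_iff, mem_compl_iff]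
        constructor
        · intro hx
          exact ⟨fun k hk => hx k ⟨hk.1, by omega⟩, hx _ ⟨by omega, by omega⟩⟩
        · rintro ⟨h1, h2⟩ k hk
          rcases Nat.lt_or_ge k (k0 + n) with hl | hl
          · exact h1 k ⟨hk.1, hl⟩
          · have : k = k0 + n := by omega
            rw [this]; exact h2
      rw [e, indep_coords ν ρ (S := ⋃ k ∈ Finset.Ico k0 (k0 + n), S k) (T := S (k0 + n)) ?_
        (Finset.measurableSet_biInter _ fun k _ => (hG k).compl) (hG _).compl ?_ (dG _).compl]
      · rw [pow_succ]
        refine mul_le_mul ih ?_ measureReal_nonneg (pow_nonneg (by linarith) _)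
        rw [probReal_compl_eq_one_sub (hG _)]
        linarith [hP (k0 + n)]
      · rw [Set.disjoint_left]
        intro i hi hi'
        simp only [mem_iUnion, Finset.mem_Ico] at hi
        obtain ⟨k, hk, hik⟩ := hi
        exact Set.disjoint_left.1 (hS k (k0 + n) hk.2) hik hi'
      · refine DepOn.iInter fun k => DepOn.iInter fun hk => ((dG k).compl).mono ?_
        exact subset_biUnion_of_mem (u := fun k => S k) hk
  have hz : (PM ν ρ).real (⋂ k ∈ Ici k0, (G k)ᶜ) ≤ 0 := by
    refine ge_of_tendsto' (tendsto_pow_atTop_nhds_zero_of_lt_one (r := 1 - c3) (by linarith) (by linarith))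
      fun n => le_trans (measureReal_mono ?_ (measure_ne_top _ _)) (key n)
    refine biInter_mono ?_ fun _ _ => le_rfl
    intro k hk
    exact (Finset.mem_Ico.1 hk).1
  have hz' : (PM ν ρ) (⋂ k ∈ Ici k0, (G k)ᶜ) = 0 :=
    (measureReal_eq_zero_iff).1 (le_antisymm hz measureReal_nonneg)
  refine measure_mono_null ?_ hz'
  intro x hx
  simp only [mem_compl_iff, Set.mem_ofPred_eq, not_exists, not_and] at hx
  simp only [mem_iInter, mem_compl_iff]
  exact fun k hk => hx k hk

/-- inner radius of the `k`-th annulus -/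
def rr (Q : ℕ) : ℕ → ℕ
  | 0 => 0
  | k + 1 => rr Q k + Q * (((rr Q k + k + 1) ^ 2) * ((rr Q k + k + 1) ^ 2))

lemma rr_mono (Q : ℕ) : Monotone (rr Q) := monotone_nat_of_le_succ fun k => by
  simp only [rr]; omega

lemma GG_io (ν ρ : Measure ℝ) [IsProbabilityMeasure ν] [IsProbabilityMeasure ρ]
    (J Q : ℕ) (s t γ : ℝ) (M : ℕ) (c3 : ℝ) (hc3 : 0 < c3)
    (h : ∀ H, 1 ≤ H → ∀ r : ℕ, c3 ≤ (PM ν ρ).real (GG J Q s t H γ M r)) :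
    ∀ᵐ x ∂(PM ν ρ), ∀ k0, ∃ q r : ℕ, k0 ≤ q ∧ r ≤ q ∧ x ∈ GG J Q s t (q ^ 2) γ M r := by
  have := io_of_indep ν ρ (fun k => GG J Q s t ((rr Q k + k + 1) ^ 2) γ M (rr Q k))
    (fun k => Ann (rr Q k) (Q * (((rr Q k + k + 1) ^ 2) * ((rr Q k + k + 1) ^ 2))))
    (fun k => meas_GG _ _ _ _ _ _ _ _) (fun k => dep_GG _ _ _ _ _ _ _ _) ?_ c3 hc3
    (fun k => h _ (Nat.one_le_pow _ _ (by omega)) _)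
  · filter_upwards [this] with x hx k0
    obtain ⟨k, hk, hxk⟩ := hx k0
    exact ⟨rr Q k + k + 1, rr Q k, by omega, by omega, hxk⟩
  · intro k l hkl
    have h1 : rr Q (k + 1) ≤ rr Q l := rr_mono Q hkl
    simp only [rr] at h1
    generalize Q * (((rr Q k + k + 1) ^ 2) * ((rr Q k + k + 1) ^ 2)) = R at *
    generalize Q * (((rr Q l + l + 1) ^ 2) * ((rr Q l + l + 1) ^ 2)) = R' at *
    generalize rr Q k = r at *
    generalize rr Q l = r' at *
    rw [Set.disjoint_left]
    rintro _ (⟨u, hu, rfl⟩ | ⟨u, hu, rfl⟩) (⟨v, hv, hvu⟩ | ⟨v, hv, hvu⟩)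
    · simp only [Sum.inl.injEq] at hvu
      subst hvu
      simp only [mem_union, mem_Ioc] at hu hv
      omega
    · simp at hvu
    · simp at hvu
    · simp only [Sum.inr.injEq] at hvu
      subst hvu
      simp only [Sites, Finset.coe_union, Finset.coe_Ioc, Finset.coe_Ico, mem_union, mem_Ioc, mem_Ico] at hu hv
      omega

end Sinai

namespace Sinai

/-- potential -/
noncomputable def V (z : ℤ → ℝ) (y : ℤ) : ℝ := ∑ i ∈ Finset.Ioc 0 y, z i - ∑ i ∈ Finset.Ioc y 0, z i

lemma V_zero (z : ℤ → ℝ) : V z 0 = 0 := by simp [V]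

lemma V_succ (z : ℤ → ℝ) (y : ℤ) : V z (y + 1) = V z y + z (y + 1) := by
  unfold V
  rcases le_or_gt 0 y with h | h
  · have e : Finset.Ioc 0 (y + 1) = insert (y + 1) (Finset.Ioc 0 y) := by
      ext u; simp only [Finset.mem_Ioc, Finset.mem_insert]; omega
    have e1 : Finset.Ioc (y + 1) 0 = ∅ := by ext u; simp; omega
    have e2 : Finset.Ioc y 0 = ∅ := by ext u; simp; omega
    rw [e, e1, e2, Finset.sum_insert (by simp)]
    simp; ring
  · have e : Finset.Ioc y 0 = insert (y + 1) (Finset.Ioc (y + 1) 0) := by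
      ext u; simp only [Finset.mem_Ioc, Finset.mem_insert]; omega
    have e1 : Finset.Ioc 0 (y + 1) = ∅ := by ext u; simp; omega
    have e2 : Finset.Ioc 0 y = ∅ := by ext u; simp; omega
    rw [e, e1, e2, Finset.sum_insert (by simp)]
    simp

lemma V_pred (z : ℤ → ℝ) (y : ℤ) : V z y = V z (y - 1) + z y := by
  have := V_succ z (y - 1)
  simpa using this

/-- reversible measure -/
noncomputable def piM (z : ℤ → ℝ) (y : ℤ) : ℝ := Real.exp (-V z y) + Real.exp (-V z (y - 1))

lemma piM_pos (z : ℤ → ℝ) (y : ℤ) : 0 < piM z y := by unfold piM; positivity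

/-- partial sums of `exp V` -/
noncomputable def SV (z : ℤ → ℝ) (b : ℕ) : ℝ := ∑ j ∈ Finset.range b, Real.exp (V z j)

/-- good triple -/
def Good (z D : ℤ → ℝ) (κ m : ℝ) : Prop :=
  ∃ A B b : ℕ, 0 < b ∧ b < B ∧ 0 < A ∧ SV z b * (piM z (-A) + piM z B) ≤ κ ∧
    ∑ x ∈ Finset.Ioo (-(A : ℤ)) B, D x * piM z x ≤ κ * piM z b ∧ m ≤ SV z b * piM z b

lemma W_succ' (w : ℕ → ℝ) (m : ℕ) : W w (m + 1) = W w m + w m := by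
  simp [W, Finset.sum_range_succ]

lemma W_wR (x : Idx → ℝ) (y : ℤ) (m : ℕ) :
    W (wR y x) m = V (fun u => x (Sum.inl u)) (y + m) - V (fun u => x (Sum.inl u)) y := by
  induction m with
  | zero => simp [W]
  | succ m ih =>
    rw [W_succ', ih]
    have := V_succ (fun u => x (Sum.inl u)) (y + m)
    push_cast
    rw [← add_assoc, this]
    simp only [wR]
    rw [show y + 1 + (m : ℤ) = y + m + 1 by ring]
    ring

lemma W_wL (x : Idx → ℝ) (y : ℤ) (m : ℕ) :
    W (wL y x) m = V (fun u => x (Sum.inl u)) (y - m) - V (fun u => x (Sum.inl u)) y := by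
  induction m with
  | zero => simp [W]
  | succ m ih =>
    rw [W_succ', ih]
    have := V_pred (fun u => x (Sum.inl u)) (y - m)
    push_cast
    rw [this]
    simp only [wL]
    rw [show y - ((m : ℤ) + 1) = y - m - 1 by ring]
    ring

lemma V_bound (z : ℤ → ℝ) (c : ℝ) (hz : ∀ u, |z u| ≤ c) (y : ℤ) : |V z y| ≤ c * y.natAbs := by
  induction y using Int.induction_on with
  | zero => simp [V_zero]
  | succ i ih =>
    rw [V_succ]
    have := hz (i + 1)
    have e : ((i : ℤ) + 1).natAbs = i + 1 := by omega
    rw [e]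
    rw [Int.natAbs_natCast] at ih
    push_cast
    calc _ ≤ |V z i| + |z (i + 1)| := abs_add_le _ _
      _ ≤ _ := by linarith
  | pred i ih =>
    have h := V_pred z (-i)
    have := hz (-i)
    have e : (-(i : ℤ) - 1).natAbs = i + 1 := by omega
    rw [e]
    rw [Int.natAbs_neg, Int.natAbs_natCast] at ih
    push_cast
    have : V z (-i - 1) = V z (-i) - z (-i) := by linarith
    rw [this]
    calc _ ≤ |V z (-i)| + |z (-i)| := abs_sub _ _
      _ ≤ _ := by linarith

/-- consequences of the coarse event -/
lemma coarse (J Q : ℕ) (s t : ℝ) (H : ℕ) (hH : 1 ≤ H) (hs : 0 ≤ s) (ht : 0 ≤ t) (w : ℕ → ℝ) (hw : w ∈ CR J Q s t H) :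
    (∀ i < Q, ∀ m ≤ H * H, |W w (i * (H * H) + m) - W w (i * (H * H))| ≤ t * H) ∧
    (∀ i ≤ J, i ≤ Q → W w (i * (H * H)) ≤ -(i * (s * H))) ∧
    (∀ i ≤ Q, -(i * (t * H)) ≤ W w (i * (H * H))) ∧
    (∀ i k, J ≤ i → i + k ≤ Q → W w (i * (H * H)) + k * (s * H) ≤ W w ((i + k) * (H * H))) := by
  have h1 : ∀ i < Q, ∀ m ≤ H * H, |W w (i * (H * H) + m) - W w (i * (H * H))| ≤ t * H := by
    intro i hi m hm
    have := hw i hi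
    split_ifs at this with hJ
    · have h2 := this.2 m hm
      have e : W (fun j => -shft (i * (H * H)) w j) m = - W (shft (i * (H * H)) w) m := by
        simp [W]
      rw [e, abs_neg, W_shft] at h2
      exact h2
    · have h2 := this.2 m hm
      rw [W_shft] at h2
      exact h2
  have hn : ∀ i, (i + 1) * (H * H) = i * (H * H) + H * H := fun i => by ring
  refine ⟨h1, ?_, ?_, ?_⟩
  · intro i
    induction i with
    | zero => intro _ _; simp [W]
    | succ i ih =>
      intro hJ hQ
      have := hw i (by omega)
      rw [if_pos (by omega)] at this
      have h2 := this.1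
      have e : W (fun j => -shft (i * (H * H)) w j) (H * H) = - W (shft (i * (H * H)) w) (H * H) := by
        simp [W]
      rw [e, W_shft] at h2
      have := ih (by omega) (by omega)
      rw [hn]
      push_cast
      linarith
  · intro i
    induction i with
    | zero => intro _; simp [W]
    | succ i ih =>
      intro hQ
      have h2 := (abs_le.1 (h1 i (by omega) (H * H) le_rfl)).1
      have := ih (by omega)
      rw [hn]
      push_cast
      linarith
  · intro i k
    induction k with
    | zero => intro _ _; simp
    | succ k ih =>
      intro hJ hQ
      have := hw (i + k) (by omega)
      rw [if_neg (by omega)] at this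
      have h2 := this.1
      rw [W_shft] at h2
      have := ih (by omega) (by omega)
      rw [← add_assoc, hn]
      push_cast
      linarith

lemma block_index (Q N m : ℕ) (hN : 1 ≤ N) (hm : m ≤ Q * N) (hQ : 1 ≤ Q) : ∃ i m', i < Q ∧ m' ≤ N ∧ m = i * N + m' ∧ i = min (m / N) (Q - 1) := by
  rcases Nat.lt_or_ge m (Q * N) with h | h
  · have h1 : m / N < Q := (Nat.div_lt_iff_lt_mul (by omega)).2 h
    refine ⟨m / N, m % N, h1, (Nat.mod_lt _ (by omega)).le, ?_, by omega⟩
    rw [mul_comm]; exact (Nat.div_add_mod m N).symm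
  · have : m = Q * N := le_antisymm hm h
    refine ⟨Q - 1, N, by omega, le_rfl, ?_, ?_⟩
    · rw [this]
      obtain ⟨p, rfl⟩ : ∃ p, Q = p + 1 := ⟨Q - 1, by omega⟩
      simp; ring
    · rw [this, Nat.mul_div_cancel _ (by omega)]; omega

lemma coarse2 (J Q : ℕ) (s t : ℝ) (H : ℕ) (hH : 1 ≤ H) (hs : 0 < s) (ht : 0 < t) (w : ℕ → ℝ) (hw : w ∈ CR J Q s t H)
    (hJ1 : 1 ≤ J) (hJQ : J + 1 ≤ Q)
    (hJ : 6 * t ≤ J * s) (hJQ' : (J + 7) * t ≤ (Q - 1 - J : ℝ) * s) (b : ℕ) (hbR : b ≤ Q * (H * H)) (hb : w ∈ Arg (Q * (H * H)) b) :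
    (∀ m ≤ b, W w m ≤ 2 * (t * H)) ∧ W w b ≤ -(6 * (t * H)) ∧
    (∀ m ≤ H * H, -(t * H) ≤ W w m) ∧ (∀ m ≤ Q * (H * H), Q * (H * H) ≤ m + H * H → 6 * (t * H) ≤ W w m) ∧
    H * H < b ∧ b + H * H < Q * (H * H) := by
  obtain ⟨h1, h2, h3, h4⟩ := coarse J Q s t H hH hs.le ht.le w hw
  have hN : 1 ≤ H * H := Nat.mul_pos hH hH
  have hHr : (1 : ℝ) ≤ H := by exact_mod_cast hH
  have hT : 0 < t * H := by positivity
  have hle : ∀ i ≤ Q, i * (H * H) ≤ Q * (H * H) := fun i hi => Nat.mul_le_mul_right _ hi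
  have hb6 : W w b ≤ -(6 * (t * H)) := by
    have := hb.2 (J * (H * H)) (hle J (by omega))
    have h5 := h2 J le_rfl (by omega)
    nlinarith
  have h0 : ∀ m ≤ H * H, -(t * H) ≤ W w m := by
    intro m hm
    have := (abs_le.1 (h1 0 (by omega) m hm)).1
    simp only [zero_mul, zero_add] at this
    simpa [W] using this
  have hlast : ∀ m ≤ Q * (H * H), Q * (H * H) ≤ m + H * H → 6 * (t * H) ≤ W w m := by
    intro m hm hm'
    obtain ⟨p, rfl⟩ : ∃ p, Q = p + 1 := ⟨Q - 1, by omega⟩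
    obtain ⟨k, rfl⟩ : ∃ k, p = J + k := ⟨p - J, by omega⟩
    have e : (J + k + 1) * (H * H) = (J + k) * (H * H) + H * H := by ring
    rw [e] at hm hm'
    have h5 := (abs_le.1 (h1 (J + k) (by omega) (m - (J + k) * (H * H)) (by omega))).1
    rw [show (J + k) * (H * H) + (m - (J + k) * (H * H)) = m by omega] at h5
    have h6 := h4 J k le_rfl (by omega)
    have h7 := h3 J (by omega)
    push_cast at hJQ'
    have : (J + 7) * t * H ≤ k * s * H := by
      refine mul_le_mul_of_nonneg_right ?_ (by linarith)
      linarith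
    nlinarith
  refine ⟨?_, hb6, h0, hlast, ?_, ?_⟩
  · intro m hm
    obtain ⟨i, m', hi, hm', hmi, hi'⟩ := block_index Q (H * H) m hN (hm.trans hbR) (by omega)
    have h5 := (abs_le.1 (h1 i hi m' hm')).2
    rw [← hmi] at h5
    rcases Nat.lt_or_ge i J with hiJ | hiJ
    · have h6 := h2 i hiJ.le hi.le
      have : 0 ≤ (i : ℝ) * (s * H) := by positivity
      linarith
    · obtain ⟨ib, mb, hib, hmb, hmib, hib'⟩ := block_index Q (H * H) b hN hbR (by omega)
      have h6 := (abs_le.1 (h1 ib hib mb hmb)).1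
      rw [← hmib] at h6
      have hii : i ≤ ib := by
        rw [hi', hib']
        exact min_le_min_right _ (Nat.div_le_div_right hm)
      have h7 := h4 i (ib - i) hiJ (by omega)
      rw [show i + (ib - i) = ib by omega] at h7
      have : 0 ≤ ((ib - i : ℕ) : ℝ) * (s * H) := by positivity
      have h8 := hb.2 0 (by omega)
      have h9 : W w 0 = 0 := by simp [W]
      linarith
  · by_contra hcon
    have := h0 b (by omega)
    linarith
  · by_contra hcon
    have := hlast b hbR (by omega)
    linarith

lemma coarseL (Q : ℕ) (s t : ℝ) (H : ℕ) (hH : 1 ≤ H) (hs : 0 < s) (ht : 0 < t) (w : ℕ → ℝ) (hw : w ∈ CL Q s t H)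
    (hQ : 1 ≤ Q) (hQs : 6 * t ≤ Q * s) :
    (∀ m ≤ Q * (H * H), -(t * H) ≤ W w m) ∧ 6 * (t * H) ≤ W w (Q * (H * H)) := by
  rw [CL_eq] at hw
  obtain ⟨h1, h2, h3, h4⟩ := coarse 0 Q s t H hH hs.le ht.le w hw
  have hN : 1 ≤ H * H := Nat.mul_pos hH hH
  have hHr : (1 : ℝ) ≤ H := by exact_mod_cast hH
  have h00 : W w 0 = 0 := by simp [W]
  constructor
  · intro m hm
    obtain ⟨i, m', hi, hm', hmi, hi'⟩ := block_index Q (H * H) m hN hm hQ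
    have h5 := (abs_le.1 (h1 i hi m' hm')).1
    rw [← hmi] at h5
    have h6 := h4 0 i le_rfl (by omega)
    simp only [zero_mul, zero_add, h00] at h6
    have : 0 ≤ (i : ℝ) * (s * H) := by positivity
    linarith
  · have h6 := h4 0 Q le_rfl (by omega)
    simp only [zero_mul, zero_add, h00] at h6
    nlinarith

end Sinai

namespace Sinai

/-- weights of the bottom of the valley -/
noncomputable def fM (γ : ℝ) (M : ℕ) (j : ℕ) : ℝ := if j < M then 0 else Real.exp (-(j : ℝ) ^ γ)

lemma fM_nonneg (γ : ℝ) (M j : ℕ) : 0 ≤ fM γ M j := by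
  unfold fM; split_ifs <;> positivity

lemma hh_le (γ : ℝ) (M j : ℕ) (hγ : 0 < γ) (L : ℝ) (hj : (j : ℝ) ≤ L) : hh γ M j ≤ Real.exp (L ^ γ) := by
  unfold hh; split_ifs
  · positivity
  · exact Real.exp_le_exp.2 (Real.rpow_le_rpow (by positivity) hj hγ.le)

lemma piM_le (z : ℤ → ℝ) (c : ℝ) (hz : ∀ u, |z u| ≤ c) (y : ℤ) :
    piM z y ≤ (1 + Real.exp c) * Real.exp (-V z y) := by
  unfold piM
  have h1 := V_pred z y
  have h2 := (abs_le.1 (hz y)).2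
  have : Real.exp (-V z (y - 1)) ≤ Real.exp c * Real.exp (-V z y) := by
    rw [← Real.exp_add]; exact Real.exp_le_exp.2 (by linarith)
  linarith

lemma middle (γ : ℝ) (M N R r b : ℕ) (x : Idx → ℝ) (hx : x ∈ Fine γ M N R r) (hb : wR r x ∈ Arg R b)
    (hNb : N ≤ b) (hbN : b + N ≤ R) (m : ℕ) (hm1 : N ≤ m) (hm2 : m + N ≤ R) (hM : M ≤ ((m : ℤ) - b).natAbs) :
    2 * ((((m : ℤ) - b).natAbs : ℕ) : ℝ) ^ γ ≤ W (wR r x) m - W (wR r x) b := by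
  simp only [Fine, mem_iInter] at hx
  have hbad := hx b (by simp; omega)
  simp only [Bad, mem_compl_iff, mem_union, not_or, mem_inter_iff, mem_preimage, not_and] at hbad
  have eR : ∀ k, W (wR (r + b) x) k = W (wR r x) (b + k) - W (wR r x) b := by
    intro k; rw [W_wR, W_wR, W_wR]; push_cast; ring_nf
  have eL : ∀ k ≤ b, W (wL (r + b) x) k = W (wR r x) (b - k) - W (wR r x) b := by
    intro k hk
    rw [W_wL, W_wR, W_wR]; push_cast [hk]; ring_nf
  have pR : ∀ k ≤ R - b, 0 ≤ W (wR (r + b) x) k := by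
    intro k hk; rw [eR]; have := hb.2 (b + k) (by omega); linarith
  have pL : ∀ k ≤ b, 0 ≤ W (wL (r + b) x) k := by
    intro k hk; rw [eL k hk]; have := hb.2 (b - k) (by omega); linarith
  have E1 : wR (r + b) x ∈ Epos N 0 := fun k hk => by rw [zero_add]; exact pR k (by omega)
  have E2 : wL (r + b) x ∈ Epos N 0 := fun k hk => by rw [zero_add]; exact pL k (by omega)
  rcases le_or_gt b m with h | h
  · have h1 : wR (r + b) x ∉ Bd γ M N (R - b) := fun hc => hbad.1 hc E2
    by_contra hcon
    push Not at hcon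
    have e : ((m : ℤ) - b).natAbs = m - b := by omega
    rw [e] at hM hcon
    refine h1 ⟨pR, m - b, hM, by omega, ?_⟩
    rw [eR, show b + (m - b) = m by omega]
    exact hcon
  · have h1 : wL (r + b) x ∉ Bd γ M N b := fun hc => hbad.2 E1 hc
    by_contra hcon
    push Not at hcon
    have e : ((m : ℤ) - b).natAbs = b - m := by omega
    rw [e] at hM hcon
    refine h1 ⟨pL, b - m, hM, by omega, ?_⟩
    rw [eL _ (by omega), show b - (b - m) = m by omega]
    exact hcon

lemma det_bounds (J Q : ℕ) (s t : ℝ) (H : ℕ) (hH : 1 ≤ H) (hs : 0 < s) (ht : 0 < t)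
    (hJ1 : 1 ≤ J) (hJQ : J + 1 ≤ Q)
    (hJ : 6 * t ≤ J * s) (hJQ' : (J + 7) * t ≤ (Q - 1 - J : ℝ) * s) (γ : ℝ) (hγ : 0 < γ) (M r : ℕ)
    (x : Idx → ℝ) (hx : x ∈ GG J Q s t H γ M r) (c K : ℝ) (hz : ∀ u, |x (Sum.inl u)| ≤ c)
    (hD : ∀ u, 0 ≤ x (Sum.inr u)) (hK : ∀ u : ℤ, x (Sum.inr u) ≤ K * Real.exp u.natAbs) :
    ∃ b : ℕ, 0 < b ∧ b < r + Q * (H * H) ∧ 0 < r + Q * (H * H) ∧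
    SV (fun u => x (Sum.inl u)) b ≤ (r + Q * (H * H) : ℕ) * Real.exp (c * r + 2 * (t * H)) ∧
    1 ≤ SV (fun u => x (Sum.inl u)) b ∧
    V (fun u => x (Sum.inl u)) b ≤ c * r - 6 * (t * H) ∧
    6 * (t * H) - c * r ≤ V (fun u => x (Sum.inl u)) (-(r + Q * (H * H) : ℕ)) ∧
    6 * (t * H) - c * r ≤ V (fun u => x (Sum.inl u)) (r + Q * (H * H) : ℕ) ∧
    ∀ u ∈ Finset.Ioo (-((r + Q * (H * H) : ℕ) : ℤ)) (r + Q * (H * H) : ℕ),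
      x (Sum.inr u) * Real.exp (V (fun u => x (Sum.inl u)) b - V (fun u => x (Sum.inl u)) u) ≤
        (1 + K) * Real.exp ((2 * (r + Q * (H * H) : ℕ) : ℝ) ^ γ + (2 * c + 1) * r - 5 * (t * H))
          + fM γ M (u - b).natAbs := by
  obtain ⟨z, hzdef⟩ : ∃ z : ℤ → ℝ, z = fun u => x (Sum.inl u) := ⟨_, rfl⟩
  rw [← hzdef]
  have hz' : ∀ u, |z u| ≤ c := by rw [hzdef]; exact hz
  have hc : 0 ≤ c := (abs_nonneg _).trans (hz 0)
  have hK0 : 0 ≤ K := by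
    have := (hD 0).trans (hK 0)
    simpa using this
  obtain ⟨hL, hx⟩ := hx
  simp only [mem_iUnion, Finset.mem_range, Nat.lt_succ_iff] at hx
  obtain ⟨b, hbR, ⟨⟨hCR, hF⟩, hArg⟩, hFS⟩ := hx
  obtain ⟨c1, c2, c3, c4, c5, c6⟩ := coarse2 J Q s t H hH hs ht _ hCR hJ1 hJQ hJ hJQ' b hbR hArg
  have hJQs : (J : ℝ) * s ≤ Q * s :=
    mul_le_mul_of_nonneg_right (by exact_mod_cast (by omega : J ≤ Q)) hs.le
  obtain ⟨l1, l2⟩ := coarseL Q s t H hH hs ht _ hL (by omega) (by linarith)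
  have hMid := middle γ M (H * H) (Q * (H * H)) r b x hF hArg c5.le c6.le
  have hN : 1 ≤ H * H := Nat.mul_pos hH hH
  have hHr : (1 : ℝ) ≤ H := by exact_mod_cast hH
  have hT : 0 < t * H := by positivity
  generalize t * (H : ℝ) = T at *
  generalize hRdef : Q * (H * H) = R at *
  generalize H * H = N at *
  have WR : ∀ m : ℕ, W (wR r x) m = V z (r + m) - V z r := fun m => by rw [W_wR, hzdef]
  have WL : ∀ m : ℕ, W (wL (-r) x) m = V z (-r - m) - V z (-r) := fun m => by rw [W_wL, hzdef]
  simp only [WR] at c1 c2 c3 c4 hMid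
  simp only [WL] at l1 l2
  have Vr := abs_le.1 (V_bound z c hz' r)
  have Vr' := abs_le.1 (V_bound z c hz' (-r))
  rw [Int.natAbs_natCast] at Vr
  rw [Int.natAbs_neg, Int.natAbs_natCast] at Vr'
  have Vcore : ∀ u : ℤ, u.natAbs ≤ r → |V z u| ≤ c * r := fun u hu => (V_bound z c hz' u).trans
    (mul_le_mul_of_nonneg_left (by exact_mod_cast hu) hc)
  have hVb : V z (r + b : ℕ) ≤ c * r - 6 * T := by push_cast; linarith
  have hE : ∀ e : ℝ, e ≤ (2 * ((r + R : ℕ) : ℝ)) ^ γ + (2 * c + 1) * r - 5 * T →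
      Real.exp e ≤ (1 + K) * Real.exp ((2 * ((r + R : ℕ) : ℝ)) ^ γ + (2 * c + 1) * r - 5 * T) := by
    intro e he
    have := Real.exp_le_exp.2 he
    nlinarith [Real.exp_pos ((2 * ((r + R : ℕ) : ℝ)) ^ γ + (2 * c + 1) * r - 5 * T)]
  have hr0 : (0 : ℝ) ≤ r := by positivity
  have hcr : 0 ≤ c * r := by positivity
  have hP0 : 0 ≤ (2 * ((r + R : ℕ) : ℝ)) ^ γ := by positivity
  refine ⟨r + b, by omega, by omega, by omega, ?_, ?_, hVb, ?_, ?_, ?_⟩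
  · unfold SV
    have : ∀ j ∈ Finset.range (r + b), Real.exp (V z j) ≤ Real.exp (c * r + 2 * T) := by
      intro j hj
      rw [Finset.mem_range] at hj
      refine Real.exp_le_exp.2 ?_
      rcases Nat.lt_or_ge r j with h | h
      · have := c1 (j - r) (by omega)
        rw [show (r : ℤ) + (j - r : ℕ) = j by omega] at this
        linarith
      · have := (abs_le.1 (Vcore j (by simpa using h))).2
        linarith
    refine (Finset.sum_le_card_nsmul _ _ _ this).trans ?_
    rw [Finset.card_range, nsmul_eq_mul]
    refine mul_le_mul_of_nonneg_right ?_ (by positivity)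
    exact_mod_cast (by omega : r + b ≤ r + R)
  · unfold SV
    have h1 : Real.exp (V z ((0 : ℕ) : ℤ)) ≤ ∑ j ∈ Finset.range (r + b), Real.exp (V z j) :=
      Finset.single_le_sum (f := fun j : ℕ => Real.exp (V z j)) (fun j _ => (Real.exp_pos _).le)
        (by simp; omega)
    simpa [V_zero] using h1
  · rw [show (-((r + R : ℕ) : ℤ)) = -r - R by push_cast; ring]
    linarith
  · have := c4 R le_rfl (by omega)
    push_cast; linarith
  · intro u hu
    rw [Finset.mem_Ioo] at hu
    have hf := fM_nonneg γ M (u - (r + b : ℕ)).natAbs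
    have hDist : (((u - ((r : ℤ) + b)).natAbs : ℕ) : ℝ) ≤ 2 * ((r + R : ℕ) : ℝ) := by
      exact_mod_cast (by omega : (u - ((r : ℤ) + b)).natAbs ≤ 2 * (r + R))
    -- generic bound on the annulus
    have gen : u ∈ Sites r R → V z (r + b : ℕ) - V z u ≤ 2 * c * r - 5 * T →
        x (Sum.inr u) * Real.exp (V z (r + b : ℕ) - V z u) ≤
        (1 + K) * Real.exp ((2 * ((r + R : ℕ) : ℝ)) ^ γ + (2 * c + 1) * r - 5 * T)
          + fM γ M (u - (r + b : ℕ)).natAbs := by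
      intro hS hV
      have h1 := (hFS u hS).trans (hh_le γ M _ hγ _ hDist)
      have h2 := hE ((2 * ((r + R : ℕ) : ℝ)) ^ γ + (V z (r + b : ℕ) - V z u)) (by linarith)
      rw [Real.exp_add] at h2
      have h3 := mul_le_mul_of_nonneg_right h1 (Real.exp_pos (V z (r + b : ℕ) - V z u)).le
      linarith
    rcases le_or_gt u.natAbs r with hcore | hout
    · have h1 := abs_le.1 (Vcore u hcore)
      have h2 : Real.exp (u.natAbs) * Real.exp (V z (r + b : ℕ) - V z u) ≤
          Real.exp ((2 * ((r + R : ℕ) : ℝ)) ^ γ + (2 * c + 1) * r - 5 * T) := by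
        rw [← Real.exp_add]
        refine Real.exp_le_exp.2 ?_
        have : ((u.natAbs : ℕ) : ℝ) ≤ r := by exact_mod_cast hcore
        linarith
      have h3 := mul_le_mul_of_nonneg_right (hK u) (Real.exp_pos (V z (r + b : ℕ) - V z u)).le
      have h4 := mul_le_mul_of_nonneg_left h2 hK0
      have := Real.exp_pos ((2 * ((r + R : ℕ) : ℝ)) ^ γ + (2 * c + 1) * r - 5 * T)
      linarith
    · rcases lt_or_ge u 0 with hneg | hpos
      · refine gen (by simp only [Sites, Finset.mem_union, Finset.mem_Ioc, Finset.mem_Ico]; omega) ?_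
        have := l1 (-u - r).toNat (by omega)
        rw [show -(r : ℤ) - ((-u - r).toNat : ℕ) = u by omega] at this
        linarith
      · have hS : u ∈ Sites r R := by
          simp only [Sites, Finset.mem_union, Finset.mem_Ioc, Finset.mem_Ico]; omega
        obtain ⟨m, rfl⟩ : ∃ m : ℕ, u = r + m := ⟨(u - r).toNat, by omega⟩
        by_cases hm1 : m < N
        · refine gen hS ?_
          have := c3 m hm1.le
          push_cast
          linarith
        by_cases hm2 : R < m + N
        · refine gen hS ?_
          have := c4 m (by omega) (by omega)
          push_cast
          linarith
        have e : ((r : ℤ) + m - ((r : ℤ) + b)) = m - b := by ring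
        have hfs := hFS _ hS
        rw [e] at hfs
        by_cases hM : ((m : ℤ) - b).natAbs < M
        · simp only [hh, hM, if_true] at hfs
          have h0 : x (Sum.inr (r + m)) = 0 := le_antisymm hfs (hD _)
          rw [h0, zero_mul]
          have := Real.exp_pos ((2 * ((r + R : ℕ) : ℝ)) ^ γ + (2 * c + 1) * r - 5 * T)
          have : 0 ≤ (1 + K) * Real.exp ((2 * ((r + R : ℕ) : ℝ)) ^ γ + (2 * c + 1) * r - 5 * T) := by positivity
          linarith
        · simp only [hh, hM, if_false] at hfs
          have h1 := hMid m (by omega) (by omega) (by omega)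
          have h2 := mul_le_mul_of_nonneg_right hfs (Real.exp_pos (V z (r + b : ℕ) - V z (r + m))).le
          rw [← Real.exp_add] at h2
          have h3 : fM γ M ((r : ℤ) + m - (r + b : ℕ)).natAbs = Real.exp (-((((m : ℤ) - b).natAbs : ℕ) : ℝ) ^ γ) := by
            push_cast
            rw [e]
            simp only [fM, hM, if_false]
          rw [h3]
          have h4 : Real.exp ((((m : ℤ) - b).natAbs : ℝ) ^ γ + (V z (r + b : ℕ) - V z (r + m))) ≤
              Real.exp (-((((m : ℤ) - b).natAbs : ℕ) : ℝ) ^ γ) := by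
            refine Real.exp_le_exp.2 ?_
            push_cast at h1 ⊢
            linarith
          have : 0 ≤ (1 + K) * Real.exp ((2 * ((r + R : ℕ) : ℝ)) ^ γ + (2 * c + 1) * r - 5 * T) := by positivity
          linarith

end Sinai

namespace Sinai

lemma summable_natAbs {g : ℕ → ℝ} (hg : Summable g) : Summable (fun u : ℤ => g u.natAbs) := by
  rw [summable_int_iff_summable_nat_and_neg]
  simp only [Int.natAbs_natCast, Int.natAbs_neg, and_self]
  exact hg

lemma summable_exp_neg_rpow (γ : ℝ) (hγ : 0 < γ) : Summable (fun j : ℕ => Real.exp (-(j : ℝ) ^ γ)) := by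
  have h1 := (isLittleO_exp_neg_mul_rpow_atTop (a := 1) one_pos (-(2 / γ))).isBigO.comp_tendsto
    ((tendsto_rpow_atTop hγ).comp tendsto_natCast_atTop_atTop)
  have h2 : Summable (fun j : ℕ => (j : ℝ) ^ (-2 : ℝ)) := Real.summable_nat_rpow.2 (by norm_num)
  refine summable_of_isBigO_nat h2 ?_
  refine (h1.congr (fun j => ?_) (fun j => ?_))
  · simp
  · simp only [Function.comp]
    rw [← Real.rpow_mul (by positivity)]
    congr 1; field_simp

lemma fM_sum (γ : ℝ) (hγ : 0 < γ) (κ : ℝ) (hκ : 0 < κ) : ∃ M0 : ℕ, ∀ M ≥ M0, ∀ (I : Finset ℤ) (b : ℤ),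
    ∑ u ∈ I, fM γ M (u - b).natAbs ≤ κ := by
  classical
  obtain ⟨s, hs⟩ := summable_iff_vanishing_norm.1 (summable_natAbs (summable_exp_neg_rpow γ hγ)) κ hκ
  refine ⟨s.sup Int.natAbs + 1, fun M hM I b => ?_⟩
  have h1 := hs (((I.filter fun u => M ≤ (u - b).natAbs)).image fun u => u - b) (by
    rw [Finset.disjoint_left]
    intro v hv hv'
    simp only [Finset.mem_image, Finset.mem_filter] at hv
    obtain ⟨u, ⟨_, hu⟩, rfl⟩ := hv
    have := Finset.le_sup (f := Int.natAbs) hv'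
    omega)
  rw [Finset.sum_image (by intro u _ v _ h; simpa using h)] at h1
  refine le_trans (le_of_eq ?_) ((le_abs_self _).trans h1.le)
  rw [Finset.sum_filter]
  refine Finset.sum_congr rfl fun u _ => ?_
  unfold fM
  by_cases h : (u - b).natAbs < M
  · rw [if_pos h, if_neg (by omega)]
  · rw [if_neg h, if_pos (by omega)]

lemma asym1 (Q : ℕ) (t c γ : ℝ) (ht : 0 < t) (hγ : 0 < γ) (hγ2 : γ < 1 / 2) :
    ∀ᶠ q : ℕ in atTop, (2 * (q + Q * q ^ 4 : ℝ)) ^ γ + (2 * c + 1) * q ≤ 2 * (t * q ^ 2) := by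
  have h1 : ∀ᶠ q : ℕ in atTop, (2 * c + 1) * q ≤ t * (q : ℝ) ^ 2 := by
    filter_upwards [tendsto_natCast_atTop_atTop.eventually_ge_atTop ((2 * c + 1) / t)] with q hq
    rw [div_le_iff₀ ht] at hq
    have : (0 : ℝ) ≤ q := by positivity
    nlinarith
  have h2 : ∀ᶠ q : ℕ in atTop, (2 + 2 * Q : ℝ) ^ γ / t ≤ (q : ℝ) ^ (2 - 4 * γ) :=
    ((tendsto_rpow_atTop (by linarith)).comp tendsto_natCast_atTop_atTop).eventually_ge_atTop _
  filter_upwards [h1, h2, eventually_ge_atTop 1] with q h1 h2 hq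
  have hq1 : (1 : ℝ) ≤ q := by exact_mod_cast hq
  have h3 : (2 * (q + Q * q ^ 4 : ℝ)) ^ γ ≤ ((2 + 2 * Q) * (q : ℝ) ^ 4) ^ γ := by
    refine Real.rpow_le_rpow (by positivity) ?_ hγ.le
    have : (q : ℝ) ≤ q ^ 4 := le_self_pow₀ hq1 (by norm_num)
    nlinarith
  have h4 : ((2 + 2 * Q) * (q : ℝ) ^ 4) ^ γ = (2 + 2 * Q : ℝ) ^ γ * (q : ℝ) ^ (4 * γ) := by
    rw [Real.mul_rpow (by positivity) (by positivity), ← Real.rpow_natCast, ← Real.rpow_mul (by positivity)]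
    norm_num
  rw [div_le_iff₀ ht] at h2
  have h5 : (q : ℝ) ^ 2 = (q : ℝ) ^ (2 - 4 * γ) * (q : ℝ) ^ (4 * γ) := by
    rw [← Real.rpow_add (by linarith), ← Real.rpow_natCast]
    congr 1; push_cast; ring
  have h6 : 0 ≤ (q : ℝ) ^ (4 * γ) := by positivity
  have : (2 + 2 * Q : ℝ) ^ γ * (q : ℝ) ^ (4 * γ) ≤ t * q ^ 2 := by
    rw [h5]; nlinarith
  linarith

lemma asym2 (t C κ : ℝ) (ht : 0 < t) (hκ : 0 < κ) :
    ∀ᶠ q : ℕ in atTop, C * (q : ℝ) ^ 4 * Real.exp (-(t * q ^ 2)) ≤ κ := by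
  have h0 : Tendsto (fun y : ℝ => C * (y ^ (2 : ℕ) * Real.exp (-(t * y)))) atTop (nhds 0) := by
    have h1 := tendsto_rpow_mul_exp_neg_mul_atTop_nhds_zero 2 t ht
    have := h1.const_mul C
    simp only [mul_zero] at this
    refine this.congr fun y => ?_
    norm_num
  have h2 : Tendsto (fun q : ℕ => (q : ℝ) ^ 2) atTop atTop :=
    (tendsto_pow_atTop (by norm_num)).comp tendsto_natCast_atTop_atTop
  filter_upwards [(h0.comp h2).eventually_le_const hκ] with q hq
  simp only [Function.comp] at hq
  calc _ = C * (((q : ℝ) ^ 2) ^ 2 * Real.exp (-(t * q ^ 2))) := by ring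
    _ ≤ κ := hq

lemma good_of_io (J Q : ℕ) (s t : ℝ) (hs : 0 < s) (ht : 0 < t)
    (hJ1 : 1 ≤ J) (hJQ : J + 1 ≤ Q)
    (hJ : 6 * t ≤ J * s) (hJQ' : (J + 7) * t ≤ (Q - 1 - J : ℝ) * s) (γ : ℝ) (hγ : 0 < γ) (hγ2 : γ < 1 / 2) (M : ℕ)
    (x : Idx → ℝ) (hx : ∀ k0, ∃ q r : ℕ, k0 ≤ q ∧ r ≤ q ∧ x ∈ GG J Q s t (q ^ 2) γ M r)
    (c K : ℝ) (hz : ∀ u, |x (Sum.inl u)| ≤ c)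
    (hD : ∀ u, 0 ≤ x (Sum.inr u)) (hK : ∀ u : ℤ, x (Sum.inr u) ≤ K * Real.exp u.natAbs)
    (κ m : ℝ) (hκ : 0 < κ)
    (hM : ∀ (I : Finset ℤ) (b : ℤ), ∑ u ∈ I, fM γ M (u - b).natAbs ≤ κ / (2 * (1 + Real.exp c))) :
    Good (fun u => x (Sum.inl u)) (fun u => x (Sum.inr u)) κ m := by
  have hc : 0 ≤ c := (abs_nonneg _).trans (hz 0)
  have hK0 : 0 ≤ K := by
    have := (hD 0).trans (hK 0)
    simpa using this
  have a1 := asym1 Q t c γ ht hγ hγ2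
  have a2 := asym2 t (2 * (1 + Real.exp c) * (1 + Q)) κ ht hκ
  have a3 := asym2 t ((2 * (1 + Q)) * ((1 + Real.exp c) * (1 + K))) (κ / 2) ht (by linarith)
  have a4 : ∀ᶠ q : ℕ in atTop, m ≤ t * (q : ℝ) ^ 2 :=
    (((tendsto_pow_atTop (α := ℝ) (n := 2) (by norm_num)).comp tendsto_natCast_atTop_atTop).const_mul_atTop ht).eventually_ge_atTop m
  obtain ⟨k0, hk0⟩ := eventually_atTop.1 (a1.and (a2.and (a3.and (a4.and (eventually_ge_atTop 1)))))
  obtain ⟨q, r, hq, hrq, hG⟩ := hx k0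
  obtain ⟨b1, b2, b3, b4, b5⟩ := hk0 q hq
  have hq1 : (1 : ℝ) ≤ q := by exact_mod_cast b5
  obtain ⟨b, d1, d2, d3, d4, d5, d6, d7, d8, d9⟩ := det_bounds J Q s t (q ^ 2) (Nat.one_le_pow _ _ b5) hs ht hJ1 hJQ hJ hJQ'
    γ hγ M r x hG c K hz hD hK
  have hRr : ((r + Q * (q ^ 2 * q ^ 2) : ℕ) : ℝ) ≤ q + Q * q ^ 4 := by
    have : (r : ℝ) ≤ q := by exact_mod_cast hrq
    push_cast
    have : (Q : ℝ) * (q ^ 2 * q ^ 2) = Q * q ^ 4 := by ring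
    linarith
  have hRr2 : (q + Q * q ^ 4 : ℝ) ≤ (1 + Q) * q ^ 4 := by
    have : (q : ℝ) ≤ q ^ 4 := le_self_pow₀ hq1 (by norm_num)
    nlinarith
  have hRr0 : (0 : ℝ) ≤ ((r + Q * (q ^ 2 * q ^ 2) : ℕ) : ℝ) := by positivity
  have hP := Real.rpow_le_rpow (by positivity) (mul_le_mul_of_nonneg_left hRr (by norm_num : (0 : ℝ) ≤ 2)) hγ.le
  have hP0 : 0 ≤ (2 * ((r + Q * (q ^ 2 * q ^ 2) : ℕ) : ℝ)) ^ γ := by positivity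
  have hcr : c * r ≤ c * q := mul_le_mul_of_nonneg_left (by exact_mod_cast hrq) hc
  have hcr1 : (r : ℝ) ≤ q := by exact_mod_cast hrq
  generalize r + Q * (q ^ 2 * q ^ 2) = A at *
  generalize hzdef : (fun u => x (Sum.inl u)) = z at *
  have hz' : ∀ u, |z u| ≤ c := by rw [← hzdef]; exact hz
  push_cast at d4 d6 d7 d8 d9
  have hcq : 0 ≤ c * q := by positivity
  have hpos : 0 < Real.exp c := Real.exp_pos c
  refine ⟨A, A, b, d1, d2, d3, ?_, ?_, ?_⟩
  · have e1 : ∀ y, 6 * (t * q ^ 2) - c * r ≤ V z y → piM z y ≤ (1 + Real.exp c) * Real.exp (c * r - 6 * (t * q ^ 2)) := by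
      intro y hy
      refine (piM_le z c hz' y).trans (mul_le_mul_of_nonneg_left (Real.exp_le_exp.2 (by linarith)) (by positivity))
    have e2 := e1 _ d7
    have e3 := e1 _ d8
    have e4 : piM z (-A) + piM z A ≤ 2 * (1 + Real.exp c) * Real.exp (c * r - 6 * (t * q ^ 2)) := by linarith
    refine le_trans (mul_le_mul d4 e4 (add_pos (piM_pos _ _) (piM_pos _ _)).le (by positivity)) ?_
    calc _ = (2 * (1 + Real.exp c) * A) * (Real.exp (c * r + 2 * (t * q ^ 2)) * Real.exp (c * r - 6 * (t * q ^ 2))) := by ring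
      _ ≤ (2 * (1 + Real.exp c) * ((1 + Q) * q ^ 4)) * Real.exp (-(t * q ^ 2)) := by
        refine mul_le_mul (mul_le_mul_of_nonneg_left (hRr.trans hRr2) (by positivity)) ?_ (by positivity) (by positivity)
        rw [← Real.exp_add]
        refine Real.exp_le_exp.2 ?_
        have : 0 ≤ t * (q : ℝ) ^ 2 := by positivity
        linarith
      _ ≤ κ := by rw [← mul_assoc]; exact b2
  · have key : ∀ u ∈ Finset.Ioo (-(A : ℤ)) A, x (Sum.inr u) * piM z u ≤
        (1 + Real.exp c) * ((1 + K) * Real.exp (-(t * q ^ 2)) + fM γ M (u - b).natAbs) * piM z b := by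
      intro u hu
      have h1 := d9 u hu
      have h2 : Real.exp (-V z b) ≤ piM z b := by unfold piM; linarith [Real.exp_pos (-V z (b - 1))]
      have h3 := piM_le z c hz' u
      have h4 : Real.exp (-V z u) = Real.exp (V z b - V z u) * Real.exp (-V z b) := by
        rw [← Real.exp_add]; congr 1; ring
      have h5 : Real.exp ((2 * (A : ℝ)) ^ γ + (2 * c + 1) * r - 5 * (t * q ^ 2)) ≤ Real.exp (-(t * q ^ 2)) := by
        refine Real.exp_le_exp.2 ?_
        have : 0 ≤ t * (q : ℝ) ^ 2 := by positivity
        have : (2 * c + 1) * r ≤ (2 * c + 1) * q := mul_le_mul_of_nonneg_left hcr1 (by linarith)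
        linarith
      calc x (Sum.inr u) * piM z u ≤ x (Sum.inr u) * ((1 + Real.exp c) * Real.exp (-V z u)) :=
            mul_le_mul_of_nonneg_left h3 (hD u)
        _ = (1 + Real.exp c) * (x (Sum.inr u) * Real.exp (V z b - V z u)) * Real.exp (-V z b) := by rw [h4]; ring
        _ ≤ (1 + Real.exp c) * ((1 + K) * Real.exp (-(t * q ^ 2)) + fM γ M (u - b).natAbs) * piM z b := by
          refine mul_le_mul (mul_le_mul_of_nonneg_left (h1.trans ?_) (by positivity)) h2 (Real.exp_pos _).le ?_
          · have := mul_le_mul_of_nonneg_left h5 (by linarith : 0 ≤ 1 + K)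
            linarith
          · have := fM_nonneg γ M (u - b).natAbs
            positivity
    refine (Finset.sum_le_sum key).trans ?_
    rw [← Finset.sum_mul, ← Finset.mul_sum, Finset.sum_add_distrib, Finset.sum_const, nsmul_eq_mul]
    refine mul_le_mul_of_nonneg_right ?_ (piM_pos _ _).le
    have hcard : ((Finset.Ioo (-(A : ℤ)) A).card : ℝ) ≤ 2 * A := by
      have : (Finset.Ioo (-(A : ℤ)) A).card ≤ 2 * A := by rw [Int.card_Ioo]; omega
      exact_mod_cast this
    have hm := hM (Finset.Ioo (-(A : ℤ)) A) b
    rw [le_div_iff₀ (by positivity)] at hm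
    have h7 : ((Finset.Ioo (-(A : ℤ)) A).card : ℝ) * ((1 + K) * Real.exp (-(t * q ^ 2)))
        ≤ (2 * ((1 + Q) * q ^ 4)) * ((1 + K) * Real.exp (-(t * q ^ 2))) := by
      refine mul_le_mul_of_nonneg_right (hcard.trans ?_) (by positivity)
      linarith
    have h8 := mul_le_mul_of_nonneg_left h7 (by positivity : 0 ≤ 1 + Real.exp c)
    have h9 : (1 + Real.exp c) * ((2 * ((1 + Q) * q ^ 4)) * ((1 + K) * Real.exp (-(t * q ^ 2)))) ≤ κ / 2 := by
      refine le_trans (le_of_eq ?_) b3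
      ring
    rw [mul_add]
    linarith
  · have h2 : Real.exp (-V z b) ≤ piM z b := by unfold piM; linarith [Real.exp_pos (-V z (b - 1))]
    have h3 : t * q ^ 2 ≤ -V z b := by
      have : 0 ≤ t * (q : ℝ) ^ 2 := by positivity
      linarith
    have h4 := Real.add_one_le_exp (-V z b)
    have := piM_pos z b
    nlinarith

lemma env_good (ν ρ : Measure ℝ) [IsProbabilityMeasure ν] [IsProbabilityMeasure ρ] {c σ2 : ℝ}
    (h : StepLaw ν c σ2) (γ : ℝ) (hγ : 0 < γ) (hγ2 : γ < 1 / 2) (hp : 0 < ρ.real (Iic 0))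
    (hτ : Summable fun j : ℕ => ρ.real (Ioi (Real.exp ((j : ℝ) ^ γ)))) (hρ : ∀ᵐ d ∂ρ, 0 ≤ d)
    (κ m : ℝ) (hκ : 0 < κ) :
    ∀ᵐ x ∂(PM ν ρ), Good (fun u => x (Sum.inl u)) (fun u => x (Sum.inr u)) κ m := by
  obtain ⟨s, hs, t, ht, hGG⟩ := GG_lower ν ρ h γ hγ hγ2 hp hτ
  obtain ⟨J, hJ⟩ := exists_nat_ge (6 * t / s + 1)
  obtain ⟨J', hJ'⟩ := exists_nat_ge ((J + 7) * t / s)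
  obtain ⟨M0, hM0⟩ := hGG J (J + J' + 1)
  obtain ⟨M1, hM1⟩ := fM_sum γ hγ (κ / (2 * (1 + Real.exp c))) (by positivity)
  obtain ⟨c3, hc3, hc3'⟩ := hM0 (max M0 M1) (le_max_left _ _)
  have hio := GG_io ν ρ J (J + J' + 1) s t γ (max M0 M1) c3 hc3 hc3'
  have hz : ∀ᵐ x ∂(PM ν ρ), ∀ u, |x (Sum.inl u)| ≤ c := by
    rw [ae_all_iff]
    intro u
    have := h.bdd
    rw [← show (PM ν ρ).map (fun x => x (Sum.inl u)) = ν from map_eval_PM ν ρ _] at this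
    exact ae_of_ae_map (measurable_pi_apply _).aemeasurable this
  have hD : ∀ᵐ x ∂(PM ν ρ), ∀ u, 0 ≤ x (Sum.inr u) := by
    rw [ae_all_iff]
    intro u
    have := hρ
    rw [← show (PM ν ρ).map (fun x => x (Sum.inr u)) = ρ from map_eval_PM ν ρ _] at this
    exact ae_of_ae_map (measurable_pi_apply _).aemeasurable this
  have hK : ∀ᵐ x ∂(PM ν ρ), {u : ℤ | x ∈ {x : Idx → ℝ | Real.exp u.natAbs < x (Sum.inr u)}}.Finite := by
    refine ae_finite_setOfPred_mem ?_
    have h1 := summable_natAbs hτ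
    have h2 : ∀ u : ℤ, (PM ν ρ) {x : Idx → ℝ | Real.exp u.natAbs < x (Sum.inr u)} ≤
        ENNReal.ofReal (ρ.real (Ioi (Real.exp ((u.natAbs : ℝ) ^ γ)))) := by
      intro u
      have e : {x : Idx → ℝ | Real.exp u.natAbs < x (Sum.inr u)} = (fun x : Idx → ℝ => x (Sum.inr u)) ⁻¹' (Ioi (Real.exp u.natAbs)) := rfl
      rw [e, ← Measure.map_apply (by fun_prop) measurableSet_Ioi,
        show (PM ν ρ).map (fun x => x (Sum.inr u)) = ρ from map_eval_PM ν ρ _, ofReal_measureReal]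
      refine measure_mono (Ioi_subset_Ioi (Real.exp_le_exp.2 ?_))
      rcases Nat.eq_zero_or_pos u.natAbs with h0 | h0
      · rw [h0]; simp [hγ.ne']
      · have : (1 : ℝ) ≤ (u.natAbs : ℕ) := by exact_mod_cast h0
        calc ((u.natAbs : ℕ) : ℝ) ^ γ ≤ ((u.natAbs : ℕ) : ℝ) ^ (1 : ℝ) := Real.rpow_le_rpow_of_exponent_le this (by linarith)
          _ = _ := Real.rpow_one _
    refine ne_top_of_le_ne_top ?_ (ENNReal.tsum_le_tsum h2)
    rw [← ENNReal.ofReal_tsum_of_nonneg (fun _ => measureReal_nonneg) h1]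
    exact ENNReal.ofReal_ne_top
  filter_upwards [hio, hz, hD, hK] with x x1 x2 x3 x4
  rw [div_add_one hs.ne', div_le_iff₀ hs] at hJ
  rw [div_le_iff₀ hs] at hJ'
  have hJ0 : 0 < (J : ℝ) := by
    by_contra hc
    have : (J : ℝ) * s ≤ 0 := mul_nonpos_of_nonpos_of_nonneg (not_lt.1 hc) hs.le
    linarith
  refine good_of_io J (J + J' + 1) s t hs ht (by exact_mod_cast hJ0) (by omega) (by linarith) ?_ γ hγ hγ2 _ x x1 c
    (1 + ∑ u ∈ x4.toFinset, x (Sum.inr u)) x2 x3 ?_ κ m hκ (hM1 _ (le_max_right _ _))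
  · push_cast
    rw [show ((J : ℝ) + J' + 1 - 1 - J) = J' by ring]
    exact hJ'
  · intro u
    have h0 : 0 ≤ ∑ u ∈ x4.toFinset, x (Sum.inr u) := Finset.sum_nonneg fun u _ => x3 u
    have h1 : 1 ≤ Real.exp (u.natAbs : ℕ) := Real.one_le_exp (by positivity)
    by_cases hu : Real.exp u.natAbs < x (Sum.inr u)
    · have := Finset.single_le_sum (f := fun u => x (Sum.inr u)) (fun u _ => x3 u) (x4.mem_toFinset.2 hu)
      nlinarith
    · nlinarith

end Sinai

namespace Sinai

/-- quenched law at time `i` -/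
noncomputable def uu (e : ℤ → ℝ) : ℕ → ℤ → ℝ
  | 0, x => if x = 0 then 1 else 0
  | i + 1, x => uu e i (x - 1) * e (x - 1) + uu e i (x + 1) * (1 - e (x + 1))

/-- Green function -/
noncomputable def gg (e : ℤ → ℝ) (n : ℕ) (x : ℤ) : ℝ := ∑ i ∈ Finset.range n, uu e i x

/-- log ratio -/
noncomputable def zz (e : ℤ → ℝ) (u : ℤ) : ℝ := Real.log ((1 - e u) / e u)

lemma gg_succ (e : ℤ → ℝ) (n : ℕ) (x : ℤ) : gg e (n + 1) x =
    (if x = 0 then 1 else 0) + (gg e n (x - 1) * e (x - 1) + gg e n (x + 1) * (1 - e (x + 1))) := by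
  unfold gg
  rw [Finset.sum_range_succ']
  simp only [uu, Finset.sum_add_distrib, Finset.sum_mul]
  ring

/-- tail sums of `exp V` -/
noncomputable def RV (z : ℤ → ℝ) (b : ℕ) (x : ℤ) : ℝ := ∑ j ∈ Finset.Ico (max x 0) b, Real.exp (V z j)

lemma RV_nonneg (z : ℤ → ℝ) (b : ℕ) (x : ℤ) : 0 ≤ RV z b x :=
  Finset.sum_nonneg fun _ _ => (Real.exp_pos _).le

lemma RV_step (z : ℤ → ℝ) (b : ℕ) (x : ℤ) : RV z b x = RV z b (x + 1) +
    if 0 ≤ x ∧ x < b then Real.exp (V z x) else 0 := by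
  unfold RV
  split_ifs with h
  · have e : Finset.Ico (max x 0) (b : ℤ) = insert x (Finset.Ico (max (x + 1) 0) (b : ℤ)) := by
      ext u; simp only [Finset.mem_Ico, Finset.mem_insert]; omega
    rw [e, Finset.sum_insert (by simp only [Finset.mem_Ico]; omega)]
    ring
  · have e : Finset.Ico (max x 0) (b : ℤ) = Finset.Ico (max (x + 1) 0) (b : ℤ) := by
      ext u; simp only [Finset.mem_Ico]; omega
    rw [e]; ring

lemma RV_le (z : ℤ → ℝ) (b : ℕ) (x : ℤ) : RV z b x ≤ SV z b := by
  unfold RV SV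
  have : ∑ j ∈ Finset.range b, Real.exp (V z j) = ∑ j ∈ Finset.Ico (0 : ℤ) b, Real.exp (V z j) := by
    refine Finset.sum_bij (fun j _ => (j : ℤ)) ?_ ?_ ?_ ?_
    · intro j hj; simp at hj ⊢; omega
    · intro i _ j _ h; simpa using h
    · intro u hu
      simp only [Finset.mem_Ico] at hu
      exact ⟨u.toNat, by simp; omega, by omega⟩
    · intro _ _; rfl
  rw [this]
  refine Finset.sum_le_sum_of_subset_of_nonneg ?_ fun _ _ _ => (Real.exp_pos _).le
  intro u hu
  simp only [Finset.mem_Ico] at *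
  omega

lemma exp_V_pred (e : ℤ → ℝ) (he : ∀ u, 0 < e u ∧ e u < 1) (x : ℤ) : Real.exp (-V (zz e) (x - 1)) = Real.exp (-V (zz e) x) * ((1 - e x) / e x) := by
  have h := V_pred (zz e) x
  rw [show -V (zz e) (x - 1) = -V (zz e) x + zz e x by linarith, Real.exp_add]
  congr 1
  unfold zz
  rw [Real.exp_log]
  have := he x
  exact div_pos (by linarith) this.1

lemma pi_e (e : ℤ → ℝ) (he : ∀ u, 0 < e u ∧ e u < 1) (x : ℤ) : piM (zz e) x * e x = Real.exp (-V (zz e) x) := by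
  unfold piM
  rw [exp_V_pred e he]
  have := (he x).1.ne'
  field_simp
  ring

lemma pi_e' (e : ℤ → ℝ) (he : ∀ u, 0 < e u ∧ e u < 1) (x : ℤ) : piM (zz e) x * (1 - e x) = Real.exp (-V (zz e) (x - 1)) := by
  have h1 := pi_e e he x
  have : piM (zz e) x = Real.exp (-V (zz e) x) + Real.exp (-V (zz e) (x - 1)) := rfl
  linarith

lemma gg_bound (e : ℤ → ℝ) (he : ∀ u, 0 < e u ∧ e u < 1) (b : ℕ) (hb : 0 < b) (n : ℕ) : ∀ x, gg e n x ≤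
    piM (zz e) x * RV (zz e) b x + n * piM (zz e) x / piM (zz e) b := by
  induction n with
  | zero =>
    intro x
    have h1 := piM_pos (zz e) x
    have h2 := RV_nonneg (zz e) b x
    simp only [gg, Finset.range_zero, Finset.sum_empty]
    have := mul_nonneg h1.le h2
    simpa using this
  | succ n ih =>
    intro x
    rw [gg_succ]
    have hb' := piM_pos (zz e) b
    have h1 := mul_le_mul_of_nonneg_right (ih (x - 1)) (he (x - 1)).1.le
    have h2 := mul_le_mul_of_nonneg_right (ih (x + 1)) (by have := (he (x + 1)).2; linarith : 0 ≤ 1 - e (x + 1))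
    have p1 := pi_e e he (x - 1)
    have p2 := pi_e' e he (x + 1)
    rw [show x + 1 - 1 = x by ring] at p2
    have hx : piM (zz e) x = Real.exp (-V (zz e) x) + Real.exp (-V (zz e) (x - 1)) := rfl
    have r1 := RV_step (zz e) b x
    have r2 := RV_step (zz e) b (x - 1)
    rw [show x - 1 + 1 = x by ring] at r2
    have e1 : (piM (zz e) (x - 1) * RV (zz e) b (x - 1) + n * piM (zz e) (x - 1) / piM (zz e) b) * e (x - 1)
        = Real.exp (-V (zz e) (x - 1)) * RV (zz e) b (x - 1) + n * Real.exp (-V (zz e) (x - 1)) / piM (zz e) b := by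
      rw [← p1]; ring
    have e2 : (piM (zz e) (x + 1) * RV (zz e) b (x + 1) + n * piM (zz e) (x + 1) / piM (zz e) b) * (1 - e (x + 1))
        = Real.exp (-V (zz e) x) * RV (zz e) b (x + 1) + n * Real.exp (-V (zz e) x) / piM (zz e) b := by
      rw [← p2]; ring
    have i1 : Real.exp (-V (zz e) (x - 1)) * (if 0 ≤ x - 1 ∧ x - 1 < b then Real.exp (V (zz e) (x - 1)) else 0)
        = if 0 ≤ x - 1 ∧ x - 1 < b then 1 else 0 := by
      split_ifs
      · rw [← Real.exp_add]; simp
      · simp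
    have i2 : Real.exp (-V (zz e) x) * (if 0 ≤ x ∧ x < b then Real.exp (V (zz e) x) else 0)
        = if 0 ≤ x ∧ x < b then 1 else 0 := by
      split_ifs
      · rw [← Real.exp_add]; simp
      · simp
    have i3 : ((if x = 0 then 1 else 0 : ℝ) + if 0 ≤ x - 1 ∧ x - 1 < b then 1 else 0) ≤
        (if 0 ≤ x ∧ x < b then 1 else 0) + piM (zz e) x / piM (zz e) b := by
      have hpp : 0 < piM (zz e) x / piM (zz e) b := div_pos (piM_pos _ _) hb'
      by_cases hxb : x = b
      · rw [hxb, div_self hb'.ne']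
        split_ifs <;> first | omega | norm_num
      · split_ifs <;> first | omega | linarith
    rw [e1, r2, mul_add, i1] at h1
    have e3 : Real.exp (-V (zz e) x) * RV (zz e) b (x + 1) = Real.exp (-V (zz e) x) * RV (zz e) b x
      - if 0 ≤ x ∧ x < b then 1 else 0 := by rw [r1, mul_add, i2]; ring
    rw [e2, e3] at h2
    have e4 : piM (zz e) x * RV (zz e) b x + ((n + 1 : ℕ) : ℝ) * piM (zz e) x / piM (zz e) b =
      Real.exp (-V (zz e) x) * RV (zz e) b x + Real.exp (-V (zz e) (x - 1)) * RV (zz e) b x +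
       (n * Real.exp (-V (zz e) x) / piM (zz e) b + n * Real.exp (-V (zz e) (x - 1)) / piM (zz e) b)
       + piM (zz e) x / piM (zz e) b := by
      rw [hx]
      push_cast
      ring
    rw [e4]
    linarith

/-- quenched good triple -/
def QGood (e D : ℤ → ℝ) (κ : ℝ) (n A B : ℕ) : Prop :=
  0 < A ∧ 0 < B ∧ gg e n (-A) + gg e n B ≤ κ ∧ ∑ x ∈ Finset.Ioo (-(A : ℤ)) B, D x * gg e n x ≤ κ * n

lemma qgood_of_good (e : ℤ → ℝ) (he : ∀ u, 0 < e u ∧ e u < 1) (D : ℤ → ℝ) (hD : ∀ u, 0 ≤ D u) (κ : ℝ) (m : ℕ) (hm : 1 ≤ m)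
    (h : Good (zz e) D κ m) : ∃ n ≥ m, ∃ A B, QGood e D (3 * κ) n A B := by
  obtain ⟨A, B, b, hb, hbB, hA, h1, h2, h3⟩ := h
  have hm1 : (1 : ℝ) ≤ m := by exact_mod_cast hm
  have hS : 0 ≤ SV (zz e) b := Finset.sum_nonneg fun _ _ => (Real.exp_pos _).le
  have hpb := piM_pos (zz e) b
  obtain ⟨n, hn⟩ : ∃ n, n = ⌈SV (zz e) b * piM (zz e) b⌉₊ := ⟨_, rfl⟩
  have n1 : SV (zz e) b * piM (zz e) b ≤ n := hn ▸ Nat.le_ceil _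
  have n2 : (n : ℝ) < SV (zz e) b * piM (zz e) b + 1 := hn ▸ Nat.ceil_lt_add_one (by positivity)
  have n3 : (n : ℝ) / piM (zz e) b ≤ 2 * SV (zz e) b := by
    rw [div_le_iff₀ hpb]; linarith
  have g : ∀ x, gg e n x ≤ 3 * (SV (zz e) b * piM (zz e) x) := by
    intro x
    have h4 := gg_bound e he b hb n x
    have h5 := mul_le_mul_of_nonneg_left (RV_le (zz e) b x) (piM_pos (zz e) x).le
    have h6 := mul_le_mul_of_nonneg_left n3 (piM_pos (zz e) x).le
    have : (n : ℝ) * piM (zz e) x / piM (zz e) b = piM (zz e) x * (n / piM (zz e) b) := by ring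
    linarith
  refine ⟨n, by exact_mod_cast h3.trans n1, A, B, hA, by omega, ?_, ?_⟩
  · have := g (-A)
    have := g B
    linarith
  · have h7 : ∑ x ∈ Finset.Ioo (-(A : ℤ)) B, D x * gg e n x ≤
        ∑ x ∈ Finset.Ioo (-(A : ℤ)) B, 3 * SV (zz e) b * (D x * piM (zz e) x) := by
      refine Finset.sum_le_sum fun x _ => ?_
      have := mul_le_mul_of_nonneg_left (g x) (hD x)
      linarith
    rw [← Finset.mul_sum] at h7
    have hκ : 0 ≤ κ := le_trans (mul_nonneg hS (add_pos (piM_pos _ _) (piM_pos _ _)).le) h1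
    have h8 := mul_le_mul_of_nonneg_left h2 (by positivity : 0 ≤ 3 * SV (zz e) b)
    have h9 := mul_le_mul_of_nonneg_left n1 hκ
    linarith

end Sinai

namespace Sinai

variable {Ω : Type*} [MeasurableSpace Ω] (μ : Measure Ω) [IsProbabilityMeasure μ]

/-- the quenched law hypothesis -/
def Quenched (E : Ω → ℤ → ℝ) (X : ℕ → Ω → ℤ) : Prop :=
  ∀ (n : ℕ) (x : ℕ → ℤ), x 0 = 0 →
      μ[Set.indicator {ω | ∀ i ≤ n, X i ω = x i} (fun _ => (1 : ℝ)) |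
          MeasurableSpace.comap E MeasurableSpace.pi]
        =ᵐ[μ] fun ω => ∏ i ∈ Finset.range n, stepProb (E ω (x i)) (x (i + 1) - x i)

/-- generalized statement -/
def PathLaw (E : Ω → ℤ → ℝ) (X : ℕ → Ω → ℤ) (i : ℕ) : Prop :=
  ∀ (n : ℕ) (x : ℕ → ℤ), i ≤ n →
      μ[Set.indicator {ω | ∀ l ≤ n, i ≤ l → X l ω = x l} (fun _ => (1 : ℝ)) |
          MeasurableSpace.comap E MeasurableSpace.pi]
        =ᵐ[μ] fun ω => uu (E ω) i (x i) * ∏ l ∈ Finset.Ico i n, stepProb (E ω (x l)) (x (l + 1) - x l)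

lemma meas_path (X : ℕ → Ω → ℤ) (hX : ∀ n, Measurable (X n)) (i n : ℕ) (x : ℕ → ℤ) :
    MeasurableSet {ω | ∀ l ≤ n, i ≤ l → X l ω = x l} := by
  have : {ω | ∀ l ≤ n, i ≤ l → X l ω = x l} = ⋂ l, ⋂ (_ : l ≤ n), ⋂ (_ : i ≤ l), X l ⁻¹' {x l} := by
    ext; simp
  rw [this]
  exact MeasurableSet.iInter fun l => MeasurableSet.iInter fun _ => MeasurableSet.iInter fun _ =>
    hX l (measurableSet_singleton _)

lemma pathLaw_zero (E : Ω → ℤ → ℝ) (X : ℕ → Ω → ℤ) (hX0 : ∀ᵐ ω ∂μ, X 0 ω = 0) (hq : Quenched μ E X) :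
    PathLaw μ E X 0 := by
  intro n x _
  by_cases hx : x 0 = 0
  · have := hq n x hx
    simp only [Nat.zero_le, true_imp_iff, uu, hx, if_true, one_mul, Nat.Ico_zero_eq_range]
    exact this
  · have h1 : Set.indicator {ω | ∀ l ≤ n, 0 ≤ l → X l ω = x l} (fun _ => (1 : ℝ)) =ᵐ[μ] fun _ => 0 := by
      filter_upwards [hX0] with ω hω
      rw [Set.indicator_of_notMem]
      intro hc
      exact hx ((hc 0 (by omega) le_rfl).symm.trans hω)
    refine (condExp_congr_ae h1).trans ?_
    simp only [uu, hx, if_false, zero_mul]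
    have := condExp_const (μ := μ) (m := MeasurableSpace.comap E MeasurableSpace.pi) (m₀ := ‹_›) (c := (0 : ℝ))
    by_cases hm : MeasurableSpace.comap E MeasurableSpace.pi ≤ ‹MeasurableSpace Ω›
    · rw [this hm]
    · rw [condExp_of_not_le hm]; rfl

lemma ae_of_condExp_zero {Ω : Type*} {m m0 : MeasurableSpace Ω} (μ : @Measure Ω m0) [IsProbabilityMeasure μ]
    (hm : m ≤ m0) (A : Set Ω) (hA : MeasurableSet[m0] A)
    (h : μ[A.indicator (fun _ => (1 : ℝ)) | m] =ᵐ[μ] fun _ => 0) : ∀ᵐ ω ∂μ, ω ∉ A := by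
  have h1 := integral_condExp hm (μ := μ) (f := A.indicator (fun _ => (1 : ℝ)))
  rw [integral_congr_ae h, integral_zero, integral_indicator_const _ hA] at h1
  have h2 : μ.real A = 0 := by simpa using h1.symm
  rw [measureReal_eq_zero_iff] at h2
  exact measure_eq_zero_iff_ae_notMem.1 h2

lemma nn_step (E : Ω → ℤ → ℝ) (hE : Measurable E) (X : ℕ → Ω → ℤ) (hX : ∀ n, Measurable (X n)) (i : ℕ)
    (h : PathLaw μ E X i) : ∀ᵐ ω ∂μ, X (i + 1) ω - X i ω = 1 ∨ X (i + 1) ω - X i ω = -1 := by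
  have : ∀ y w : ℤ, ∀ᵐ ω ∂μ, X i ω = y → X (i + 1) ω = w → (w - y = 1 ∨ w - y = -1) := by
    intro y w
    by_cases hyw : w - y = 1 ∨ w - y = -1
    · exact Eventually.of_forall fun _ _ _ => hyw
    · push Not at hyw
      have h1 := h (i + 1) (fun l => if l = i then y else w) (by omega)
      have h2 : ∀ᵐ ω ∂μ, ω ∉ {ω | ∀ l ≤ i + 1, i ≤ l → X l ω = if l = i then y else w} := by
        refine ae_of_condExp_zero μ hE.comap_le _ (meas_path X hX i (i + 1) (fun l => if l = i then y else w)) ?_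
        refine h1.trans (Eventually.of_forall fun ω => ?_)
        simp [stepProb, hyw.1, hyw.2]
      filter_upwards [h2] with ω hω e1 e2
      exfalso
      apply hω
      intro l h1 h2
      rcases Nat.eq_or_lt_of_le h2 with h | h
      · subst h; simpa using e1
      · have : l = i + 1 := by omega
        subst this; simpa using e2
  have h3 : ∀ᵐ ω ∂μ, ∀ y w : ℤ, X i ω = y → X (i + 1) ω = w → (w - y = 1 ∨ w - y = -1) := by
    rw [ae_all_iff]; intro y; rw [ae_all_iff]; exact this y
  filter_upwards [h3] with ω hω
  exact hω _ _ rfl rfl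

lemma pathLaw_succ (E : Ω → ℤ → ℝ) (hE : Measurable E) (X : ℕ → Ω → ℤ) (hX : ∀ n, Measurable (X n)) (i : ℕ)
    (h : PathLaw μ E X i) : PathLaw μ E X (i + 1) := by
  intro n x hin
  have hnn := nn_step μ E hE X hX i h
  have hi1 : ∀ y, ∀ l, l ≠ i → Function.update x i y l = x l := fun y l hl => Function.update_of_ne hl _ _
  have key : ∀ y : ℤ, μ[Set.indicator {ω | ∀ l ≤ n, i ≤ l → X l ω = Function.update x i y l} (fun _ => (1 : ℝ)) |
          MeasurableSpace.comap E MeasurableSpace.pi]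
        =ᵐ[μ] fun ω => uu (E ω) i y * (stepProb (E ω y) (x (i + 1) - y) *
          ∏ l ∈ Finset.Ico (i + 1) n, stepProb (E ω (x l)) (x (l + 1) - x l)) := by
    intro y
    refine (h n (Function.update x i y) (by omega)).trans (Eventually.of_forall fun ω => ?_)
    simp only [Function.update_self]
    rw [Finset.prod_eq_prod_Ico_succ_bot (by omega)]
    simp only [Function.update_self]
    rw [hi1 y (i + 1) (by omega)]
    congr 2
    refine Finset.prod_congr rfl fun l hl => ?_
    rw [Finset.mem_Ico] at hl
    rw [hi1 y l (by omega), hi1 y (l + 1) (by omega)]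
  have mem : ∀ y ω, ω ∈ {ω | ∀ l ≤ n, i ≤ l → X l ω = Function.update x i y l} ↔
      X i ω = y ∧ ω ∈ {ω | ∀ l ≤ n, i + 1 ≤ l → X l ω = x l} := by
    intro y ω
    constructor
    · intro hω
      refine ⟨by simpa using hω i (by omega) le_rfl, fun l h1 h2 => ?_⟩
      rw [hω l h1 (by omega), hi1 y l (by omega)]
    · rintro ⟨h1, h2⟩ l h3 h4
      rcases Nat.eq_or_lt_of_le h4 with h5 | h5
      · subst h5; simpa using h1
      · rw [hi1 y l (by omega)]; exact h2 l h3 h5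
  have hsum : Set.indicator {ω | ∀ l ≤ n, i + 1 ≤ l → X l ω = x l} (fun _ => (1 : ℝ)) =ᵐ[μ]
      Set.indicator {ω | ∀ l ≤ n, i ≤ l → X l ω = Function.update x i (x (i + 1) - 1) l} (fun _ => (1 : ℝ)) +
      Set.indicator {ω | ∀ l ≤ n, i ≤ l → X l ω = Function.update x i (x (i + 1) + 1) l} (fun _ => (1 : ℝ)) := by
    filter_upwards [hnn] with ω hω
    simp only [Pi.add_apply, Set.indicator_apply, mem]
    by_cases hp : ω ∈ {ω | ∀ l ≤ n, i + 1 ≤ l → X l ω = x l}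
    · have h2 := hp (i + 1) hin le_rfl
      simp only [hp, and_true, if_true]
      rw [h2] at hω
      rcases hω with h3 | h3
      · rw [if_pos (by omega), if_neg (by omega)]; norm_num
      · rw [if_neg (by omega), if_pos (by omega)]; norm_num
    · simp only [hp, and_false, if_false]; norm_num
  have hint : ∀ y, Integrable (Set.indicator {ω | ∀ l ≤ n, i ≤ l → X l ω = Function.update x i y l} (fun _ => (1 : ℝ))) μ :=
    fun y => (integrable_const 1).indicator (meas_path X hX i n _)
  refine (condExp_congr_ae hsum).trans ((condExp_add (hint _) (hint _) _).trans ?_)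
  filter_upwards [key (x (i + 1) - 1), key (x (i + 1) + 1)] with ω h1 h2
  rw [Pi.add_apply, h1, h2]
  have s1 : stepProb (E ω (x (i + 1) - 1)) (x (i + 1) - (x (i + 1) - 1)) = E ω (x (i + 1) - 1) := by
    simp [stepProb]
  have s2 : stepProb (E ω (x (i + 1) + 1)) (x (i + 1) - (x (i + 1) + 1)) = 1 - E ω (x (i + 1) + 1) := by
    simp [stepProb]
  rw [s1, s2]
  simp only [uu]
  ring

lemma pathLaw (E : Ω → ℤ → ℝ) (hE : Measurable E) (X : ℕ → Ω → ℤ) (hX : ∀ n, Measurable (X n))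
    (hX0 : ∀ᵐ ω ∂μ, X 0 ω = 0) (hq : Quenched μ E X) (i : ℕ) : PathLaw μ E X i := by
  induction i with
  | zero => exact pathLaw_zero μ E X hX0 hq
  | succ i ih => exact pathLaw_succ μ E hE X hX i ih

lemma marginal (E : Ω → ℤ → ℝ) (hE : Measurable E) (X : ℕ → Ω → ℤ) (hX : ∀ n, Measurable (X n))
    (hX0 : ∀ᵐ ω ∂μ, X 0 ω = 0) (hq : Quenched μ E X) (i : ℕ) (y : ℤ) :
    μ[(X i ⁻¹' {y}).indicator (fun _ => (1 : ℝ)) | MeasurableSpace.comap E MeasurableSpace.pi]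
      =ᵐ[μ] fun ω => uu (E ω) i y := by
  have := pathLaw μ E hE X hX hX0 hq i i (fun _ => y) le_rfl
  have e : {ω | ∀ l ≤ i, i ≤ l → X l ω = y} = X i ⁻¹' {y} := by
    ext ω
    simp only [mem_preimage, mem_singleton_iff, Set.mem_ofPred_eq]
    exact ⟨fun h => h i le_rfl le_rfl, fun h l h1 h2 => by rw [show l = i by omega]; exact h⟩
  simp only [e] at this
  simpa using this

end Sinai

namespace Sinai

variable {Ω : Type*} [MeasurableSpace Ω] (μ : Measure Ω) [IsProbabilityMeasure μ]

lemma measurable_uu (i : ℕ) (y : ℤ) : Measurable (fun e : ℤ → ℝ => uu e i y) := by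
  induction i generalizing y with
  | zero => simp only [uu]; exact measurable_const
  | succ i ih =>
    simp only [uu]
    exact ((ih _).mul (measurable_pi_apply _)).add ((ih _).mul (measurable_const.sub (measurable_pi_apply _)))

lemma measurable_gg (n : ℕ) (y : ℤ) : Measurable (fun e : ℤ → ℝ => gg e n y) := by
  simp only [gg]
  exact Finset.measurable_sum _ fun i _ => measurable_uu i y

/-- the marginals of the walk given the environment -/
def Marg (E : Ω → ℤ → ℝ) (X : ℕ → Ω → ℤ) : Prop :=
  ∀ i y, μ[(X i ⁻¹' {y}).indicator (fun _ => (1 : ℝ)) | MeasurableSpace.comap E MeasurableSpace.pi]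
      =ᵐ[μ] fun ω => uu (E ω) i y

lemma Marg.nonneg {E : Ω → ℤ → ℝ} {X : ℕ → Ω → ℤ} (h : Marg μ E X) (i : ℕ) (y : ℤ) :
    ∀ᵐ ω ∂μ, 0 ≤ uu (E ω) i y := by
  have h1 : 0 ≤ᵐ[μ] μ[(X i ⁻¹' {y}).indicator (fun _ => (1 : ℝ)) | MeasurableSpace.comap E MeasurableSpace.pi] :=
    condExp_nonneg (Eventually.of_forall fun ω => Set.indicator_nonneg (fun _ _ => zero_le_one) _)
  filter_upwards [h1, h i y] with ω h2 h3
  rw [← h3]; exact h2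

lemma Marg.lintegral_env {E : Ω → ℤ → ℝ} (hE : Measurable E) {X : ℕ → Ω → ℤ} (hX : ∀ n, Measurable (X n))
    (h : Marg μ E X) (i : ℕ) (y : ℤ) (φ : (ℤ → ℝ) → ENNReal) (hφ : Measurable φ) :
    ∫⁻ ω, φ (E ω) * (X i ⁻¹' {y}).indicator 1 ω ∂μ = ∫⁻ ω, φ (E ω) * ENNReal.ofReal (uu (E ω) i y) ∂μ := by
  have hA : MeasurableSet (X i ⁻¹' {y}) := hX i (measurableSet_singleton _)
  have hu : Measurable fun ω => ENNReal.ofReal (uu (E ω) i y) := ((measurable_uu i y).comp hE).ennreal_ofReal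
  have key : (μ.restrict (X i ⁻¹' {y})).map E = (μ.withDensity (fun ω => ENNReal.ofReal (uu (E ω) i y))).map E := by
    ext T hT
    rw [Measure.map_apply hE hT, Measure.map_apply hE hT, Measure.restrict_apply (hE hT),
      withDensity_apply _ (hE hT)]
    have hint : Integrable (fun ω => uu (E ω) i y) μ := integrable_condExp.congr (h i y)
    rw [← ofReal_integral_eq_lintegral_ofReal hint.integrableOn (ae_restrict_of_ae (h.nonneg μ i y))]
    have h1 := setIntegral_condExp (μ := μ) (m := MeasurableSpace.comap E MeasurableSpace.pi) hE.comap_le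
      (f := (X i ⁻¹' {y}).indicator (fun _ => (1 : ℝ))) ((integrable_const 1).indicator hA) (s := E ⁻¹' T) ⟨T, hT, rfl⟩
    rw [setIntegral_congr_ae (g := fun ω => uu (E ω) i y) (hE hT) ((h i y).mono fun ω hω _ => hω)] at h1
    rw [h1, integral_indicator_const _ hA, smul_eq_mul, mul_one, Measure.real, ENNReal.ofReal_toReal (measure_ne_top _ _),
      Measure.restrict_apply hA, inter_comm]
  have e1 : ∫⁻ ω, φ (E ω) * (X i ⁻¹' {y}).indicator 1 ω ∂μ = ∫⁻ e, φ e ∂((μ.restrict (X i ⁻¹' {y})).map E) := by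
    rw [lintegral_map hφ hE, ← lintegral_indicator hA]
    refine lintegral_congr fun ω => ?_
    by_cases hω : ω ∈ X i ⁻¹' {y}
    · rw [indicator_of_mem hω, indicator_of_mem hω, Pi.one_apply, mul_one]
    · rw [indicator_of_notMem hω, indicator_of_notMem hω, mul_zero]
  rw [e1, key, lintegral_map hφ hE, lintegral_withDensity_eq_lintegral_mul _ hu (g := fun ω => φ (E ω)) (hφ.comp hE)]
  refine lintegral_congr fun ω => ?_
  simp only [Pi.mul_apply, Function.comp]
  rw [mul_comm]

lemma lintegral_indep {α β : Type*} [MeasurableSpace α] [MeasurableSpace β] {S : Ω → α} {Y : Ω → β}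
    (hS : Measurable S) (hY : Measurable Y) (h : IndepFun S Y μ) (Ψ : α × β → ENNReal) (hΨ : Measurable Ψ) :
    ∫⁻ ω, Ψ (S ω, Y ω) ∂μ = ∫⁻ s, ∫⁻ ω, Ψ (s, Y ω) ∂μ ∂(μ.map S) := by
  have h1 := (indepFun_iff_map_prod_eq_prod_map_map hS.aemeasurable hY.aemeasurable).1 h
  have : IsProbabilityMeasure (μ.map Y) := Measure.isProbabilityMeasure_map hY.aemeasurable
  rw [← lintegral_map (f := Ψ) (g := fun ω => (S ω, Y ω)) hΨ (hS.prodMk hY), h1, lintegral_prod _ hΨ.aemeasurable]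
  refine lintegral_congr fun s => ?_
  rw [lintegral_map (by fun_prop) hY]

lemma Marg.lintegral_both {E : Ω → ℤ → ℝ} (hE : Measurable E) {X : ℕ → Ω → ℤ} (hX : ∀ n, Measurable (X n))
    (h : Marg μ E X) {S : Ω → ℤ → ℝ} (hS : Measurable S)
    (hind : IndepFun S (fun ω => (E ω, fun n => X n ω)) μ)
    (i : ℕ) (y : ℤ) (Φ : (ℤ → ℝ) × (ℤ → ℝ) → ENNReal) (hΦ : Measurable Φ) :
    ∫⁻ ω, Φ (S ω, E ω) * (X i ⁻¹' {y}).indicator 1 ω ∂μ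
      = ∫⁻ ω, Φ (S ω, E ω) * ENNReal.ofReal (uu (E ω) i y) ∂μ := by
  have hX' : Measurable fun ω n => X n ω := measurable_pi_lambda _ hX
  have hy : Measurable (fun p : (ℤ → ℝ) × ((ℤ → ℝ) × (ℕ → ℤ)) => ({y} : Set ℤ).indicator (1 : ℤ → ENNReal) (p.2.2 i)) :=
    (Measurable.of_discrete (f := ({y} : Set ℤ).indicator (1 : ℤ → ENNReal))).comp
      ((measurable_pi_apply i).comp (measurable_snd.comp measurable_snd))
  have h1 := lintegral_indep μ hS (hE.prodMk hX') hind
    (fun p => Φ (p.1, p.2.1) * ({y} : Set ℤ).indicator 1 (p.2.2 i)) ((by fun_prop : Measurable fun p : (ℤ → ℝ) × ((ℤ → ℝ) × (ℕ → ℤ)) => Φ (p.1, p.2.1)).mul hy)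
  have hu : Measurable fun p : (ℤ → ℝ) × ((ℤ → ℝ) × (ℕ → ℤ)) => ENNReal.ofReal (uu p.2.1 i y) :=
    ((measurable_uu i y).comp (measurable_fst.comp measurable_snd)).ennreal_ofReal
  have h2 := lintegral_indep μ hS (hE.prodMk hX') hind
    (fun p => Φ (p.1, p.2.1) * ENNReal.ofReal (uu p.2.1 i y)) ((by fun_prop : Measurable fun p : (ℤ → ℝ) × ((ℤ → ℝ) × (ℕ → ℤ)) => Φ (p.1, p.2.1)).mul hu)
  simp only at h1 h2
  have e : ∀ ω, (X i ⁻¹' {y}).indicator (1 : Ω → ENNReal) ω = ({y} : Set ℤ).indicator 1 (X i ω) := by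
    intro ω
    by_cases hω : X i ω = y
    · rw [indicator_of_mem (by exact hω), indicator_of_mem (by exact hω)]; rfl
    · rw [indicator_of_notMem (by exact hω), indicator_of_notMem (by exact hω)]
  rw [h2]
  simp_rw [e]
  rw [h1]
  refine lintegral_congr fun s => ?_
  have := h.lintegral_env μ hE hX i y (fun e => Φ (s, e)) (by fun_prop)
  simp_rw [e] at this
  exact this

lemma Marg.lintegral_sum {E : Ω → ℤ → ℝ} (hE : Measurable E) {X : ℕ → Ω → ℤ} (hX : ∀ n, Measurable (X n))
    (h : Marg μ E X) {S : Ω → ℤ → ℝ} (hS : Measurable S)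
    (hind : IndepFun S (fun ω => (E ω, fun n => X n ω)) μ)
    (n : ℕ) (J : Finset ℤ) (Φ : ℤ → (ℤ → ℝ) × (ℤ → ℝ) → ENNReal) (hΦ : ∀ y, Measurable (Φ y)) :
    ∫⁻ ω, ∑ y ∈ J, ∑ i ∈ Finset.range n, Φ y (S ω, E ω) * (X i ⁻¹' {y}).indicator 1 ω ∂μ
      = ∫⁻ ω, ∑ y ∈ J, ∑ i ∈ Finset.range n, Φ y (S ω, E ω) * ENNReal.ofReal (uu (E ω) i y) ∂μ := by
  have m1 : ∀ y i, Measurable fun ω => Φ y (S ω, E ω) * (X i ⁻¹' {y}).indicator 1 ω := fun y i =>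
    ((hΦ y).comp (hS.prodMk hE)).mul (measurable_one.indicator (hX i (measurableSet_singleton _)))
  have m2 : ∀ y i, Measurable fun ω => Φ y (S ω, E ω) * ENNReal.ofReal (uu (E ω) i y) := fun y i =>
    ((hΦ y).comp (hS.prodMk hE)).mul ((measurable_uu i y).comp hE).ennreal_ofReal
  rw [lintegral_finsetSum _ fun y _ => Finset.measurable_sum _ fun i _ => m1 y i,
    lintegral_finsetSum _ fun y _ => Finset.measurable_sum _ fun i _ => m2 y i]
  refine Finset.sum_congr rfl fun y _ => ?_
  rw [lintegral_finsetSum _ fun i _ => m1 y i, lintegral_finsetSum _ fun i _ => m2 y i]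
  exact Finset.sum_congr rfl fun i _ => h.lintegral_both μ hE hX hS hind i y (Φ y) (hΦ y)

end Sinai

namespace Sinai

/-- deficit of the scenery below level `a` -/
noncomputable def DD (a : ℝ) (s : ℤ → ℝ) (x : ℤ) : ℝ := max (a - s x) 0

lemma DD_nonneg (a : ℝ) (s : ℤ → ℝ) (x : ℤ) : 0 ≤ DD a s x := le_max_right _ _

lemma gg_nonneg_of {e : ℤ → ℝ} (h : ∀ i y, 0 ≤ uu e i y) (n : ℕ) (y : ℤ) : 0 ≤ gg e n y :=
  Finset.sum_nonneg fun i _ => h i y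

lemma stay (p : ℕ → ℤ) (h0 : p 0 = 0) (hs : ∀ i, p (i + 1) - p i = 1 ∨ p (i + 1) - p i = -1) (n A B : ℕ)
    (hA : 0 < A) (hB : 0 < B) (h1 : ∀ i < n, p i ≠ -(A : ℤ)) (h2 : ∀ i < n, p i ≠ (B : ℤ)) :
    ∀ i < n, p i ∈ Finset.Ioo (-(A : ℤ)) B := by
  intro i
  induction i with
  | zero => intro _; rw [h0, Finset.mem_Ioo]; omega
  | succ i ih =>
    intro hi
    have := ih (by omega)
    rw [Finset.mem_Ioo] at this ⊢
    have a1 := h1 (i + 1) hi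
    have a2 := h2 (i + 1) hi
    rcases hs i with h | h <;> omega

variable {Ω : Type*}

lemma ind_eq (X : ℕ → Ω → ℤ) (i : ℕ) (y : ℤ) (ω : Ω) :
    (X i ⁻¹' {y}).indicator (1 : Ω → ENNReal) ω = if X i ω = y then 1 else 0 := by
  by_cases hω : X i ω = y
  · rw [indicator_of_mem (by exact hω), if_pos hω]; rfl
  · rw [indicator_of_notMem (by exact hω), if_neg hω]

lemma det_bad (X : ℕ → Ω → ℤ) (ω : Ω) (h0 : X 0 ω = 0)
    (hs : ∀ i, X (i + 1) ω - X i ω = 1 ∨ X (i + 1) ω - X i ω = -1) (n A B : ℕ)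
    (hA : 0 < A) (hB : 0 < B) (s : ℤ → ℝ) (a η : ℝ)
    (hb : ∑ i ∈ Finset.range n, s (X i ω) < (a - η) * n) :
    1 ≤ ∑ y ∈ {-(A : ℤ), (B : ℤ)}, ∑ i ∈ Finset.range n, (X i ⁻¹' {y}).indicator (1 : Ω → ENNReal) ω ∨
    ENNReal.ofReal (η * n) ≤ ∑ y ∈ Finset.Ioo (-(A : ℤ)) B, ∑ i ∈ Finset.range n,
      ENNReal.ofReal (DD a s y) * (X i ⁻¹' {y}).indicator (1 : Ω → ENNReal) ω := by
  simp only [ind_eq]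
  by_cases hh : ∃ i < n, X i ω = -(A : ℤ) ∨ X i ω = (B : ℤ)
  · left
    obtain ⟨i, hi, h⟩ := hh
    have hmem : X i ω ∈ ({-(A : ℤ), (B : ℤ)} : Finset ℤ) := by simpa using h
    calc (1 : ENNReal) = (if X i ω = X i ω then 1 else 0) := by simp
      _ ≤ ∑ j ∈ Finset.range n, (if X j ω = X i ω then (1 : ENNReal) else 0) :=
        Finset.single_le_sum (f := fun j => if X j ω = X i ω then (1 : ENNReal) else 0) (fun _ _ => zero_le) (Finset.mem_range.2 hi)
      _ ≤ _ := Finset.single_le_sum (f := fun y => ∑ j ∈ Finset.range n, (if X j ω = y then (1 : ENNReal) else 0))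
        (fun _ _ => zero_le) hmem
  · right
    push Not at hh
    have hst := stay (fun i => X i ω) h0 hs n A B hA hB (fun i hi => (hh i hi).1) (fun i hi => (hh i hi).2)
    rw [Finset.sum_comm]
    have e : ∀ i ∈ Finset.range n, ∑ y ∈ Finset.Ioo (-(A : ℤ)) B, ENNReal.ofReal (DD a s y) * (if X i ω = y then 1 else 0)
        = ENNReal.ofReal (DD a s (X i ω)) := by
      intro i hi
      simp only [mul_ite, mul_one, mul_zero]
      rw [Finset.sum_ite_eq, if_pos (hst i (Finset.mem_range.1 hi))]
    rw [Finset.sum_congr rfl e, ← ENNReal.ofReal_sum_of_nonneg (fun _ _ => DD_nonneg _ _ _)]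
    apply ENNReal.ofReal_le_ofReal
    have : ∑ i ∈ Finset.range n, (a - s (X i ω)) ≤ ∑ i ∈ Finset.range n, DD a s (X i ω) :=
      Finset.sum_le_sum fun _ _ => le_max_left _ _
    rw [Finset.sum_sub_distrib] at this
    simp only [Finset.sum_const, Finset.card_range, nsmul_eq_mul] at this
    linarith

variable [MeasurableSpace Ω] (μ : Measure Ω) [IsProbabilityMeasure μ]

/-- The annealed estimate on an event with a good triple. -/
lemma Marg.estimate {E : Ω → ℤ → ℝ} (hE : Measurable E) {X : ℕ → Ω → ℤ} (hX : ∀ n, Measurable (X n))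
    (h : Marg μ E X) {S : Ω → ℤ → ℝ} (hS : Measurable S)
    (hind : IndepFun S (fun ω => (E ω, fun n => X n ω)) μ)
    (hX0 : ∀ᵐ ω ∂μ, X 0 ω = 0)
    (hs : ∀ᵐ ω ∂μ, ∀ i, X (i + 1) ω - X i ω = 1 ∨ X (i + 1) ω - X i ω = -1)
    (n A B : ℕ) (hn : 0 < n) (a η κ : ℝ) (hη : 0 < η) (hκ : 0 < κ) (T : Set ((ℤ → ℝ) × (ℤ → ℝ))) (hT : MeasurableSet T)
    (hTg : ∀ p ∈ T, QGood p.2 (DD a p.1) κ n A B) :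
    μ {ω | (S ω, E ω) ∈ T ∧ ∑ i ∈ Finset.range n, S ω (X i ω) < (a - η) * n}
      ≤ ENNReal.ofReal (κ + κ / η) * μ {ω | (S ω, E ω) ∈ T} := by
  rcases T.eq_empty_or_nonempty with rfl | ⟨p0, hp0⟩
  · simp
  have hA : 0 < A := (hTg p0 hp0).1
  have hB : 0 < B := (hTg p0 hp0).2.1
  have hSE : Measurable fun ω => (S ω, E ω) := hS.prodMk hE
  have hF : MeasurableSet {ω | (S ω, E ω) ∈ T} := hSE hT
  have hD : ∀ y, Measurable fun p : (ℤ → ℝ) × (ℤ → ℝ) => ENNReal.ofReal (DD a p.1 y) := by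
    intro y; unfold DD
    exact ((measurable_const.sub ((measurable_pi_apply y).comp measurable_fst)).max measurable_const).ennreal_ofReal
  have m1 : ∀ y : ℤ, Measurable (T.indicator (1 : (ℤ → ℝ) × (ℤ → ℝ) → ENNReal)) := fun y => measurable_one.indicator hT
  have m2 : ∀ y, Measurable (T.indicator (fun p : (ℤ → ℝ) × (ℤ → ℝ) => ENNReal.ofReal (DD a p.1 y))) := fun y => (hD y).indicator hT
  have I1 := h.lintegral_sum μ hE hX hS hind n {-(A : ℤ), (B : ℤ)} (fun y => T.indicator 1) m1
  have I2 := h.lintegral_sum μ hE hX hS hind n (Finset.Ioo (-(A : ℤ)) B)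
    (fun y => T.indicator (fun p : (ℤ → ℝ) × (ℤ → ℝ) => ENNReal.ofReal (DD a p.1 y))) m2
  have hu : ∀ᵐ ω ∂μ, ∀ i y, 0 ≤ uu (E ω) i y := by
    rw [ae_all_iff]; intro i; rw [ae_all_iff]; exact h.nonneg μ i
  have B1 : ∫⁻ ω, ∑ y ∈ {-(A : ℤ), (B : ℤ)}, ∑ i ∈ Finset.range n, T.indicator 1 (S ω, E ω) * ENNReal.ofReal (uu (E ω) i y) ∂μ
      ≤ ENNReal.ofReal κ * μ {ω | (S ω, E ω) ∈ T} := by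
    rw [← lintegral_indicator_const hF]
    refine lintegral_mono_ae ?_
    filter_upwards [hu] with ω hω
    by_cases hm : (S ω, E ω) ∈ T
    · rw [indicator_of_mem (show ω ∈ {ω | (S ω, E ω) ∈ T} from hm), indicator_of_mem hm]
      simp only [Pi.one_apply, one_mul]
      have e : ∀ y ∈ ({-(A : ℤ), (B : ℤ)} : Finset ℤ), ∑ i ∈ Finset.range n, ENNReal.ofReal (uu (E ω) i y) = ENNReal.ofReal (gg (E ω) n y) := by
        intro y _; rw [gg, ENNReal.ofReal_sum_of_nonneg fun i _ => hω i y]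
      rw [Finset.sum_congr rfl e, Finset.sum_pair (by omega), ← ENNReal.ofReal_add (gg_nonneg_of hω _ _) (gg_nonneg_of hω _ _)]
      exact ENNReal.ofReal_le_ofReal (hTg _ hm).2.2.1
    · rw [indicator_of_notMem hm]; simp
  have B2 : ∫⁻ ω, ∑ y ∈ Finset.Ioo (-(A : ℤ)) B, ∑ i ∈ Finset.range n,
      T.indicator (fun p : (ℤ → ℝ) × (ℤ → ℝ) => ENNReal.ofReal (DD a p.1 y)) (S ω, E ω) * ENNReal.ofReal (uu (E ω) i y) ∂μ
      ≤ ENNReal.ofReal (κ * n) * μ {ω | (S ω, E ω) ∈ T} := by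
    rw [← lintegral_indicator_const hF]
    refine lintegral_mono_ae ?_
    filter_upwards [hu] with ω hω
    by_cases hm : (S ω, E ω) ∈ T
    · rw [indicator_of_mem (show ω ∈ {ω | (S ω, E ω) ∈ T} from hm)]
      simp only [indicator_of_mem hm]
      have e : ∀ y ∈ Finset.Ioo (-(A : ℤ)) B, ∑ i ∈ Finset.range n, ENNReal.ofReal (DD a (S ω) y) * ENNReal.ofReal (uu (E ω) i y)
          = ENNReal.ofReal (DD a (S ω) y * gg (E ω) n y) := by
        intro y _
        rw [← Finset.mul_sum, ENNReal.ofReal_mul (DD_nonneg _ _ _), gg, ENNReal.ofReal_sum_of_nonneg fun i _ => hω i y]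
      rw [Finset.sum_congr rfl e, ← ENNReal.ofReal_sum_of_nonneg
        fun y _ => mul_nonneg (DD_nonneg _ _ _) (gg_nonneg_of hω _ _)]
      exact ENNReal.ofReal_le_ofReal (hTg _ hm).2.2.2
    · simp only [indicator_of_notMem hm]; simp
  rw [← I1] at B1
  rw [← I2] at B2
  have hn' : (0 : ℝ) < n := by exact_mod_cast hn
  obtain ⟨f1, hf1⟩ : ∃ f1 : Ω → ENNReal, f1 = fun ω => ∑ y ∈ {-(A : ℤ), (B : ℤ)}, ∑ i ∈ Finset.range n, T.indicator 1 (S ω, E ω) * (X i ⁻¹' {y}).indicator 1 ω := ⟨_, rfl⟩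
  obtain ⟨f2, hf2⟩ : ∃ f2 : Ω → ENNReal, f2 = fun ω => ∑ y ∈ Finset.Ioo (-(A : ℤ)) B, ∑ i ∈ Finset.range n,
      T.indicator (fun p : (ℤ → ℝ) × (ℤ → ℝ) => ENNReal.ofReal (DD a p.1 y)) (S ω, E ω) * (X i ⁻¹' {y}).indicator 1 ω := ⟨_, rfl⟩
  have hind' : ∀ i (y : ℤ), Measurable ((X i ⁻¹' {y}).indicator (1 : Ω → ENNReal)) := fun i y =>
    measurable_one.indicator (hX i (measurableSet_singleton _))
  have hf1m : Measurable f1 := by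
    rw [hf1]
    exact Finset.measurable_sum _ fun y _ => Finset.measurable_sum _ fun i _ => ((m1 y).comp hSE).mul (hind' i y)
  have hf2m : Measurable f2 := by
    rw [hf2]
    exact Finset.measurable_sum _ fun y _ => Finset.measurable_sum _ fun i _ => ((m2 y).comp hSE).mul (hind' i y)
  rw [← hf1] at B1
  rw [← hf2] at B2
  have C1 : μ {ω | 1 ≤ f1 ω} ≤ ENNReal.ofReal κ * μ {ω | (S ω, E ω) ∈ T} := by
    have := mul_meas_ge_le_lintegral (μ := μ) hf1m 1
    rw [one_mul] at this
    exact this.trans B1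
  have C2 : μ {ω | ENNReal.ofReal (η * n) ≤ f2 ω} ≤ ENNReal.ofReal (κ / η) * μ {ω | (S ω, E ω) ∈ T} := by
    have h3 := (mul_meas_ge_le_lintegral (μ := μ) hf2m (ENNReal.ofReal (η * n))).trans B2
    have h4 : ENNReal.ofReal (κ * n) = ENNReal.ofReal (η * n) * ENNReal.ofReal (κ / η) := by
      rw [← ENNReal.ofReal_mul (by positivity)]; congr 1; field_simp
    rw [h4, mul_assoc] at h3
    exact (ENNReal.mul_le_mul_iff_right (by simp; positivity) ENNReal.ofReal_ne_top).1 h3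
  have hsub : ∀ᵐ ω ∂μ, ω ∈ {ω | (S ω, E ω) ∈ T ∧ ∑ i ∈ Finset.range n, S ω (X i ω) < (a - η) * n} →
      ω ∈ {ω | 1 ≤ f1 ω} ∪ {ω | ENNReal.ofReal (η * n) ≤ f2 ω} := by
    filter_upwards [hX0, hs] with ω h0 hsω
    rintro ⟨hm, hb⟩
    rcases det_bad X ω h0 hsω n A B hA hB (S ω) a η hb with h5 | h5
    · left
      simp only [Set.mem_ofPred_eq, hf1, indicator_of_mem hm, Pi.one_apply, one_mul]
      exact h5
    · right
      simp only [Set.mem_ofPred_eq, hf2, indicator_of_mem hm]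
      exact h5
  calc _ ≤ μ ({ω | 1 ≤ f1 ω} ∪ {ω | ENNReal.ofReal (η * n) ≤ f2 ω}) := measure_mono_ae hsub
    _ ≤ _ := (measure_union_le _ _).trans (add_le_add C1 C2)
    _ = _ := by rw [← add_mul, ← ENNReal.ofReal_add hκ.le (by positivity)]

end Sinai

namespace Sinai

variable {Ω : Type*} [MeasurableSpace Ω] (μ : Measure Ω) [IsProbabilityMeasure μ]

lemma measurableSet_QGood (a κ : ℝ) (n A B : ℕ) :
    MeasurableSet {p : (ℤ → ℝ) × (ℤ → ℝ) | QGood p.2 (DD a p.1) κ n A B} := by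
  have hg : ∀ y, Measurable fun p : (ℤ → ℝ) × (ℤ → ℝ) => gg p.2 n y := fun y => (measurable_gg n y).comp measurable_snd
  have hD : ∀ y, Measurable fun p : (ℤ → ℝ) × (ℤ → ℝ) => DD a p.1 y := by
    intro y; unfold DD
    exact (measurable_const.sub ((measurable_pi_apply y).comp measurable_fst)).max measurable_const
  unfold QGood
  refine (MeasurableSet.const _).inter ((MeasurableSet.const _).inter (MeasurableSet.inter ?_ ?_))
  · exact measurableSet_le ((hg _).add (hg _)) measurable_const
  · exact measurableSet_le (Finset.measurable_sum _ fun y _ => (hD y).mul (hg y)) measurable_const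

lemma Marg.bad_small {E : Ω → ℤ → ℝ} (hE : Measurable E) {X : ℕ → Ω → ℤ} (hX : ∀ n, Measurable (X n))
    (h : Marg μ E X) {S : Ω → ℤ → ℝ} (hS : Measurable S)
    (hind : IndepFun S (fun ω => (E ω, fun n => X n ω)) μ)
    (hX0 : ∀ᵐ ω ∂μ, X 0 ω = 0)
    (hs : ∀ᵐ ω ∂μ, ∀ i, X (i + 1) ω - X i ω = 1 ∨ X (i + 1) ω - X i ω = -1)
    (a η κ : ℝ) (hη : 0 < η) (hκ : 0 < κ) (m : ℕ) (hm : 1 ≤ m)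
    (hG : ∀ᵐ ω ∂μ, ∃ n ≥ m, ∃ A B, QGood (E ω) (DD a (S ω)) κ n A B) :
    μ {ω | ∀ n ≥ m, ∑ i ∈ Finset.range n, S ω (X i ω) < (a - η) * n} ≤ ENNReal.ofReal (κ + κ / η) := by
  obtain ⟨N, hN⟩ : ∃ N : ℕ → ℕ, N = fun k => m + k.unpair.1 := ⟨_, rfl⟩
  obtain ⟨A, hA⟩ : ∃ A : ℕ → ℕ, A = fun k => k.unpair.2.unpair.1 := ⟨_, rfl⟩
  obtain ⟨B, hB⟩ : ∃ B : ℕ → ℕ, B = fun k => k.unpair.2.unpair.2 := ⟨_, rfl⟩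
  obtain ⟨G, hGd⟩ : ∃ G : ℕ → Set ((ℤ → ℝ) × (ℤ → ℝ)), G = fun k => {p | QGood p.2 (DD a p.1) κ (N k) (A k) (B k)} := ⟨_, rfl⟩
  have hGm : ∀ k, MeasurableSet (G k) := fun k => by rw [hGd]; exact measurableSet_QGood a κ _ _ _
  have hTm : ∀ k, MeasurableSet (disjointed G k) := fun k => MeasurableSet.disjointed hGm k
  have hSE : Measurable fun ω => (S ω, E ω) := hS.prodMk hE
  have hest : ∀ k, μ {ω | (S ω, E ω) ∈ disjointed G k ∧ ∑ i ∈ Finset.range (N k), S ω (X i ω) < (a - η) * N k}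
      ≤ ENNReal.ofReal (κ + κ / η) * μ {ω | (S ω, E ω) ∈ disjointed G k} := by
    intro k
    refine h.estimate μ hE hX hS hind hX0 hs (N k) (A k) (B k) (by rw [hN]; simp only; omega) a η κ hη hκ _ (hTm k) ?_
    intro p hp
    have := disjointed_subset G k hp
    rw [hGd] at this
    exact this
  have hsub : ∀ᵐ ω ∂μ, ω ∈ {ω | ∀ n ≥ m, ∑ i ∈ Finset.range n, S ω (X i ω) < (a - η) * n} →
      ω ∈ ⋃ k, {ω | (S ω, E ω) ∈ disjointed G k ∧ ∑ i ∈ Finset.range (N k), S ω (X i ω) < (a - η) * N k} := by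
    filter_upwards [hG] with ω ⟨n, hn, A0, B0, hq⟩ hb
    have hk : (S ω, E ω) ∈ G (Nat.pair (n - m) (Nat.pair A0 B0)) := by
      rw [hGd, hN, hA, hB]
      simp only [Nat.unpair_pair, Set.mem_ofPred_eq]
      rw [show m + (n - m) = n by omega]
      exact hq
    have : (S ω, E ω) ∈ ⋃ k, disjointed G k := by
      rw [iUnion_disjointed]; exact mem_iUnion.2 ⟨_, hk⟩
    obtain ⟨k, hk⟩ := mem_iUnion.1 this
    refine mem_iUnion.2 ⟨k, hk, hb (N k) ?_⟩
    rw [hN]; simp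
  calc _ ≤ μ (⋃ k, {ω | (S ω, E ω) ∈ disjointed G k ∧ ∑ i ∈ Finset.range (N k), S ω (X i ω) < (a - η) * N k}) :=
        measure_mono_ae hsub
    _ ≤ ∑' k, μ {ω | (S ω, E ω) ∈ disjointed G k ∧ ∑ i ∈ Finset.range (N k), S ω (X i ω) < (a - η) * N k} :=
        measure_iUnion_le _
    _ ≤ ∑' k, ENNReal.ofReal (κ + κ / η) * μ {ω | (S ω, E ω) ∈ disjointed G k} := ENNReal.tsum_le_tsum hest
    _ = ENNReal.ofReal (κ + κ / η) * μ (⋃ k, {ω | (S ω, E ω) ∈ disjointed G k}) := by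
        have hm' : ∀ k, MeasurableSet {ω | (S ω, E ω) ∈ disjointed G k} := fun k => hSE (hTm k)
        rw [ENNReal.tsum_mul_left, measure_iUnion ?_ hm']
        intro i j hij
        exact (disjoint_disjointed G hij).preimage (fun ω => (S ω, E ω))
    _ ≤ ENNReal.ofReal (κ + κ / η) * 1 := by gcongr; exact prob_le_one
    _ = _ := mul_one _

lemma Marg.frequently {E : Ω → ℤ → ℝ} (hE : Measurable E) {X : ℕ → Ω → ℤ} (hX : ∀ n, Measurable (X n))
    (h : Marg μ E X) {S : Ω → ℤ → ℝ} (hS : Measurable S)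
    (hind : IndepFun S (fun ω => (E ω, fun n => X n ω)) μ)
    (hX0 : ∀ᵐ ω ∂μ, X 0 ω = 0)
    (hs : ∀ᵐ ω ∂μ, ∀ i, X (i + 1) ω - X i ω = 1 ∨ X (i + 1) ω - X i ω = -1)
    (a η : ℝ) (hη : 0 < η)
    (hG : ∀ κ : ℝ, 0 < κ → ∀ m : ℕ, 1 ≤ m → ∀ᵐ ω ∂μ, ∃ n ≥ m, ∃ A B, QGood (E ω) (DD a (S ω)) κ n A B) :
    ∀ᵐ ω ∂μ, ∀ m : ℕ, ∃ n ≥ m, (a - η) * n ≤ ∑ i ∈ Finset.range n, S ω (X i ω) := by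
  have key : ∀ m : ℕ, 1 ≤ m → ∀ᵐ ω ∂μ, ∃ n ≥ m, (a - η) * n ≤ ∑ i ∈ Finset.range n, S ω (X i ω) := by
    intro m hm
    have h0 : μ {ω | ∀ n ≥ m, ∑ i ∈ Finset.range n, S ω (X i ω) < (a - η) * n} = 0 := by
      refine le_antisymm (ENNReal.le_of_forall_pos_le_add fun ε hε _ => ?_) zero_le
      rw [zero_add]
      have hc : (0 : ℝ) < 1 + 1 / η := by positivity
      have hκ : (0 : ℝ) < ε / (1 + 1 / η) := div_pos hε hc
      have h1 := h.bad_small μ hE hX hS hind hX0 hs a η _ hη hκ m hm (hG _ hκ m hm)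
      refine h1.trans (le_of_eq ?_)
      rw [show (ε : ℝ) / (1 + 1 / η) + ε / (1 + 1 / η) / η = ε by field_simp]
      exact ENNReal.ofReal_coe_nnreal
    rw [measure_eq_zero_iff_ae_notMem] at h0
    filter_upwards [h0] with ω hω
    by_contra hc
    push Not at hc
    exact hω hc
  have : ∀ᵐ ω ∂μ, ∀ m : ℕ, ∃ n ≥ m + 1, (a - η) * n ≤ ∑ i ∈ Finset.range n, S ω (X i ω) := by
    rw [ae_all_iff]; intro m; exact key (m + 1) (by omega)
  filter_upwards [this] with ω hω m
  obtain ⟨n, hn, h2⟩ := hω m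
  exact ⟨n, by omega, h2⟩

end Sinai

namespace Sinai

variable {Ω : Type*} [MeasurableSpace Ω] (μ : Measure Ω) [IsProbabilityMeasure μ]

lemma law_eq (env sce : ℤ → Ω → ℝ) (henv : ∀ i, Measurable (env i)) (hsce : ∀ i, Measurable (sce i))
    (henv_indep : iIndepFun (m := fun _ : ℤ => (inferInstance : MeasurableSpace ℝ)) env μ)
    (henv_ident : ∀ i, IdentDistrib (env i) (env 0) μ μ)
    (hsce_indep : iIndepFun (m := fun _ : ℤ => (inferInstance : MeasurableSpace ℝ)) sce μ)
    (hsce_ident : ∀ x, IdentDistrib (sce x) (sce 0) μ μ)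
    (hind : IndepFun (fun ω => (fun x : ℤ => sce x ω)) (fun ω => (fun i : ℤ => env i ω)) μ)
    (f g : ℝ → ℝ) (hf : Measurable f) (hg : Measurable g) 
    [IsProbabilityMeasure (μ.map (fun ω => f (env 0 ω)))] [IsProbabilityMeasure (μ.map (fun ω => g (sce 0 ω)))] :
    μ.map (fun ω (i : Idx) => Sum.elim (fun u => f (env u ω)) (fun u => g (sce u ω)) i)
      = PM (μ.map (fun ω => f (env 0 ω))) (μ.map (fun ω => g (sce 0 ω))) := by
  have hm : Measurable (fun ω (i : Idx) => Sum.elim (fun u => f (env u ω)) (fun u => g (sce u ω)) i) := by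
    refine measurable_pi_lambda _ fun i => ?_
    cases i with
    | inl u => exact hf.comp (henv u)
    | inr u => exact hg.comp (hsce u)
  unfold PM
  refine Measure.eq_infinitePi (fam (μ.map (fun ω => f (env 0 ω))) (μ.map (fun ω => g (sce 0 ω)))) fun s t ht => ?_
  rw [Measure.map_apply hm (MeasurableSet.pi s.countable_toSet fun i _ => ht i)]
  have e : (fun ω (i : Idx) => Sum.elim (fun u => f (env u ω)) (fun u => g (sce u ω)) i) ⁻¹' (Set.pi s t)
      = (fun ω => (fun x : ℤ => sce x ω)) ⁻¹' {y | ∀ u ∈ s.toRight, y u ∈ g ⁻¹' (t (Sum.inr u))} ∩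
        (fun ω => (fun x : ℤ => env x ω)) ⁻¹' {y | ∀ u ∈ s.toLeft, y u ∈ f ⁻¹' (t (Sum.inl u))} := by
    ext ω
    simp only [mem_preimage, Set.mem_pi, Finset.mem_coe, Sum.forall, Sum.elim_inl, Sum.elim_inr, mem_inter_iff,
      Set.mem_ofPred_eq, Finset.mem_toLeft, Finset.mem_toRight]
    tauto
  have ms : ∀ (J : Finset ℤ) (h : ℝ → ℝ) (hh : Measurable h) (τ : ℤ → Set ℝ) (hτ : ∀ u, MeasurableSet (τ u)),
      MeasurableSet {y : ℤ → ℝ | ∀ u ∈ J, y u ∈ h ⁻¹' (τ u)} := by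
    intro J h hh τ hτ
    exact MeasurableSet.pi J.countable_toSet (t := fun u => h ⁻¹' (τ u)) fun u _ => hh (hτ u)
  rw [e, hind.measure_inter_preimage_eq_mul _ _ (ms _ g hg _ fun u => ht _) (ms _ f hf _ fun u => ht _)]
  have prod : ∀ (Y : ℤ → Ω → ℝ) (hY : ∀ i, Measurable (Y i))
      (hi : iIndepFun (m := fun _ : ℤ => (inferInstance : MeasurableSpace ℝ)) Y μ)
      (hid : ∀ i, IdentDistrib (Y i) (Y 0) μ μ) (J : Finset ℤ) (h : ℝ → ℝ) (hh : Measurable h) (τ : ℤ → Set ℝ)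
      (hτ : ∀ u, MeasurableSet (τ u)),
      μ ((fun ω => (fun x : ℤ => Y x ω)) ⁻¹' {y | ∀ u ∈ J, y u ∈ h ⁻¹' (τ u)})
        = ∏ u ∈ J, (μ.map (fun ω => h (Y 0 ω))) (τ u) := by
    intro Y hY hi hid J h hh τ hτ
    have e2 : (fun ω => (fun x : ℤ => Y x ω)) ⁻¹' {y | ∀ u ∈ J, y u ∈ h ⁻¹' (τ u)} = ⋂ u ∈ J, Y u ⁻¹' (h ⁻¹' (τ u)) := by
      ext ω; simp
    rw [e2, hi.measure_inter_preimage_eq_mul J (sets := fun u => h ⁻¹' (τ u)) fun u _ => hh (hτ u)]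
    refine Finset.prod_congr rfl fun u _ => ?_
    rw [(hid u).measure_mem_eq (hh (hτ u)), Measure.map_apply (f := fun ω => h (Y 0 ω)) (hh.comp (hY 0)) (hτ u)]
    rfl
  rw [prod sce hsce hsce_indep hsce_ident _ g hg _ fun u => ht _, prod env henv henv_indep henv_ident _ f hf _ fun u => ht _,
    Finset.prod_sum_eq_prod_toLeft_mul_prod_toRight, mul_comm]
  rfl

lemma tail_summable (ξ : Ω → ℝ) (hξ : Measurable ξ) (a ε lam₀ : ℝ) (hε : 0 < ε) (hlam₀ : 1 < lam₀)
    (htail : ∀ lam : ℝ, lam₀ ≤ lam →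
      (μ {ω | lam < max (-(ξ ω)) 0}).toReal ≤ 1 / Real.log lam ^ (2 + ε : ℝ)) :
    Summable fun j : ℕ => (μ.map (fun ω => max (a - ξ ω) 0)).real (Ioi (Real.exp ((j : ℝ) ^ (2 / (4 + ε))))) := by
  have hm : Measurable fun ω => max (a - ξ ω) 0 := (measurable_const.sub hξ).max measurable_const
  have hγ : 0 < 2 / (4 + ε) := by positivity
  have hs : Summable fun j : ℕ => 2 ^ (2 + ε) * (1 / (j : ℝ) ^ (2 / (4 + ε) * (2 + ε))) := by
    refine Summable.mul_left _ (Real.summable_one_div_nat_rpow.2 ?_)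
    rw [div_mul_eq_mul_div, lt_div_iff₀ (by positivity)]; linarith
  refine Summable.of_norm_bounded_eventually_nat hs ?_
  have ht : Tendsto (fun j : ℕ => (j : ℝ) ^ (2 / (4 + ε))) atTop atTop :=
    (tendsto_rpow_atTop hγ).comp tendsto_natCast_atTop_atTop
  have ht2 : Tendsto (fun j : ℕ => Real.exp ((j : ℝ) ^ (2 / (4 + ε)) / 2)) atTop atTop :=
    Real.tendsto_exp_atTop.comp (ht.atTop_div_const (by norm_num))
  filter_upwards [ht2.eventually_ge_atTop (1 + |a|), ht2.eventually_ge_atTop lam₀, eventually_gt_atTop 0] with j h1 h2 h3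
  rw [Real.norm_of_nonneg measureReal_nonneg]
  have h3' : (0 : ℝ) < j := by exact_mod_cast h3
  obtain ⟨t, htt⟩ : ∃ t : ℝ, t = (j : ℝ) ^ (2 / (4 + ε)) := ⟨_, rfl⟩
  have htpos : 0 < t := by rw [htt]; positivity
  have h4 := htail _ h2
  rw [← htt] at h1 h2 h4 ⊢
  have hexp : Real.exp t = Real.exp (t / 2) * Real.exp (t / 2) := by rw [← Real.exp_add]; ring_nf
  rw [map_measureReal_apply hm measurableSet_Ioi]
  have hsub : (fun ω => max (a - ξ ω) 0) ⁻¹' Ioi (Real.exp t) ⊆ {ω | Real.exp (t / 2) < max (-(ξ ω)) 0} := by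
    intro ω hω
    simp only [mem_preimage, mem_Ioi, Set.mem_ofPred_eq, lt_max_iff] at hω ⊢
    rcases hω with h | h
    · left
      have := le_abs_self a
      have := abs_nonneg a
      nlinarith
    · exact absurd h (not_lt.2 (Real.exp_pos _).le)
  refine (measureReal_mono hsub).trans (h4.trans (le_of_eq ?_))
  rw [Real.log_exp, Real.div_rpow htpos.le (by norm_num), Real.rpow_mul h3'.le, ← htt]
  field_simp

lemma pos_of_essSup (ξ : Ω → ℝ) (hξ : Measurable ξ) (a η : ℝ) (hη : 0 < η) (ha : a = essSup ξ μ) :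
    0 < (μ.map (fun ω => max (a - η - ξ ω) 0)).real (Iic 0) := by
  have hm : Measurable fun ω => max (a - η - ξ ω) 0 := (measurable_const.sub hξ).max measurable_const
  rw [map_measureReal_apply hm measurableSet_Iic]
  by_contra hc
  have h0 : μ.real ((fun ω => max (a - η - ξ ω) 0) ⁻¹' Iic 0) = 0 := le_antisymm (not_lt.1 hc) measureReal_nonneg
  rw [measureReal_eq_zero_iff, measure_eq_zero_iff_ae_notMem] at h0
  have h1 : ∀ᵐ ω ∂μ, ξ ω ≤ a - η := by
    filter_upwards [h0] with ω hω
    by_contra hcon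
    apply hω
    simp only [mem_preimage, mem_Iic, max_le_iff]
    exact ⟨by linarith, le_rfl⟩
  have h2 : ∃ n : ℕ, ∃ᶠ ω in ae μ, -(n : ℝ) ≤ ξ ω := by
    by_contra hcon
    simp only [not_exists, not_frequently, not_le] at hcon
    have : ∀ᵐ ω ∂μ, ∀ n : ℕ, ξ ω < -(n : ℝ) := ae_all_iff.2 hcon
    obtain ⟨ω, hω⟩ := this.exists
    obtain ⟨n, hn⟩ := exists_nat_gt (-(ξ ω))
    have := hω n
    linarith
  obtain ⟨n, hn⟩ := h2
  have h3 : essSup ξ μ ≤ a - η := limsup_le_of_le (IsCoboundedUnder.of_frequently_ge hn) h1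
  linarith

lemma stepLaw_of (p : Ω → ℝ) (hp : Measurable p) (δ : ℝ) (hδ0 : 0 < δ) (hδ1 : δ < 1 / 2)
    (hell : ∀ᵐ ω ∂μ, δ ≤ p ω ∧ p ω ≤ 1 - δ)
    (hmean : ∫ ω, Real.log ((1 - p ω) / p ω) ∂μ = 0)
    (hvar : 0 < variance (fun ω => Real.log ((1 - p ω) / p ω)) μ) :
    StepLaw (μ.map (fun ω => Real.log ((1 - p ω) / p ω))) (Real.log ((1 - δ) / δ))
      (variance (fun ω => Real.log ((1 - p ω) / p ω)) μ) := by
  have hm : Measurable fun ω => Real.log ((1 - p ω) / p ω) := by fun_prop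
  refine ⟨?_, ?_, ?_, hvar⟩
  · rw [ae_map_iff hm.aemeasurable (measurableSet_le (by fun_prop) (by fun_prop))]
    filter_upwards [hell] with ω ⟨h1, h2⟩
    have hpos : 0 < p ω := by linarith
    rw [abs_le]
    constructor
    · rw [← Real.log_inv, inv_div]
      apply Real.log_le_log (by apply div_pos <;> linarith)
      rw [div_le_div_iff₀ (by linarith) hpos]; nlinarith
    · apply Real.log_le_log (by apply div_pos <;> linarith)
      rw [div_le_div_iff₀ hpos (by linarith)]; nlinarith
  · rw [integral_map hm.aemeasurable (by fun_prop)]; exact hmean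
  · rw [integral_map hm.aemeasurable (by fun_prop), variance_of_integral_eq_zero hm.aemeasurable hmean]

end Sinai

namespace Sinai

lemma tend_aux (c : ℝ) : Tendsto (fun n : ℕ => c * ((n : ℝ) + 1) / n) atTop (nhds c) := by
  have h1 : Tendsto (fun n : ℕ => c + c * (1 / (n : ℝ))) atTop (nhds (c + c * 0)) :=
    tendsto_const_nhds.add (tendsto_one_div_atTop_nhds_zero_nat.const_mul c)
  rw [mul_zero, add_zero] at h1
  refine h1.congr' ?_
  filter_upwards [eventually_gt_atTop 0] with n hn
  have : (0 : ℝ) < n := by exact_mod_cast hn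
  field_simp

lemma limsup_eq (s : ℕ → ℝ) (a : ℝ) (hu : ∀ n, s n ≤ a * n)
    (hl : ∀ j : ℕ, ∀ m : ℕ, ∃ n ≥ m, (a - 1 / ((j : ℝ) + 1)) * n ≤ s n) :
    Filter.atTop.limsup (fun n : ℕ => s (n + 1) / (n : ℝ)) = a := by
  have up : ∀ η > 0, ∀ᶠ n : ℕ in atTop, s (n + 1) / (n : ℝ) ≤ a + η := by
    intro η hη
    filter_upwards [(tend_aux a).eventually_lt_const (show a < a + η by linarith), eventually_gt_atTop 0] with n h1 h2
    refine le_trans ?_ h1.le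
    have := hu (n + 1)
    push_cast at this
    gcongr
  have lo : ∀ η > 0, ∃ᶠ n : ℕ in atTop, a - η ≤ s (n + 1) / (n : ℝ) := by
    intro η hη
    obtain ⟨j, hj⟩ := exists_nat_one_div_lt hη
    have h1 := (tend_aux (a - 1 / ((j : ℝ) + 1))).eventually_const_lt (show a - η < a - 1 / ((j : ℝ) + 1) by linarith)
    have h2 : ∃ᶠ n : ℕ in atTop, (a - 1 / ((j : ℝ) + 1)) * ((n + 1 : ℕ) : ℝ) ≤ s (n + 1) := by
      rw [frequently_atTop]
      intro m
      obtain ⟨n, hn, h⟩ := hl j (m + 1)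
      obtain ⟨k, rfl⟩ : ∃ k, n = k + 1 := ⟨n - 1, by omega⟩
      exact ⟨k, by omega, h⟩
    refine (h2.and_eventually (h1.and (eventually_gt_atTop 0))).mono ?_
    rintro n ⟨h3, h4, h5⟩
    refine h4.le.trans ?_
    push_cast at h3
    gcongr
  have hco : IsCoboundedUnder (· ≤ ·) atTop (fun n : ℕ => s (n + 1) / (n : ℝ)) :=
    IsCoboundedUnder.of_frequently_ge (lo 1 one_pos)
  have hbd : IsBoundedUnder (· ≤ ·) atTop (fun n : ℕ => s (n + 1) / (n : ℝ)) :=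
    isBoundedUnder_of_eventually_le (up 1 one_pos)
  apply le_antisymm
  · exact le_of_forall_pos_le_add fun η hη => limsup_le_of_le hco (up η hη)
  · refine le_of_forall_pos_le_add fun η hη => ?_
    have := le_limsup_of_frequently_le (lo η hη) hbd
    linarith

variable {Ω : Type*} [MeasurableSpace Ω] (μ : Measure Ω) [IsProbabilityMeasure μ]

lemma qgood_ae (env sce : ℤ → Ω → ℝ) (henv : ∀ i, Measurable (env i)) (hsce : ∀ i, Measurable (sce i))
    (henv_indep : iIndepFun (m := fun _ : ℤ => (inferInstance : MeasurableSpace ℝ)) env μ)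
    (henv_ident : ∀ i, IdentDistrib (env i) (env 0) μ μ)
    (δ : ℝ) (hδ0 : 0 < δ) (hδ1 : δ < 1 / 2)
    (henv_ell : ∀ i, ∀ᵐ ω ∂μ, δ ≤ env i ω ∧ env i ω ≤ 1 - δ)
    (henv_mean : ∫ ω, Real.log ((1 - env 0 ω) / env 0 ω) ∂μ = 0)
    (henv_var : 0 < variance (fun ω => Real.log ((1 - env 0 ω) / env 0 ω)) μ)
    (hsce_indep : iIndepFun (m := fun _ : ℤ => (inferInstance : MeasurableSpace ℝ)) sce μ)
    (hsce_ident : ∀ x, IdentDistrib (sce x) (sce 0) μ μ)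
    (hind : IndepFun (fun ω => (fun x : ℤ => sce x ω)) (fun ω => (fun i : ℤ => env i ω)) μ)
    (a : ℝ) (ha : a = essSup (fun ω => sce 0 ω) μ)
    (ε : ℝ) (hε : 0 < ε) (lam₀ : ℝ) (hlam₀ : 1 < lam₀)
    (htail : ∀ lam : ℝ, lam₀ ≤ lam →
      (μ {ω | lam < max (-(sce 0 ω)) 0}).toReal ≤ 1 / Real.log lam ^ (2 + ε : ℝ))
    (η : ℝ) (hη : 0 < η) (κ : ℝ) (hκ : 0 < κ) (m : ℕ) (hm : 1 ≤ m) :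
    ∀ᵐ ω ∂μ, ∃ n ≥ m, ∃ A B, QGood (fun i => env i ω) (DD (a - η) (fun x => sce x ω)) κ n A B := by
  have hf : Measurable fun p : ℝ => Real.log ((1 - p) / p) := by fun_prop
  have hg : Measurable fun s : ℝ => max (a - η - s) 0 := (measurable_const.sub measurable_id).max measurable_const
  have i1 : IsProbabilityMeasure (μ.map (fun ω => Real.log ((1 - env 0 ω) / env 0 ω))) :=
    Measure.isProbabilityMeasure_map (hf.comp (henv 0)).aemeasurable
  have i2 : IsProbabilityMeasure (μ.map (fun ω => max (a - η - sce 0 ω) 0)) :=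
    Measure.isProbabilityMeasure_map (hg.comp (hsce 0)).aemeasurable
  have hlaw := law_eq μ env sce henv hsce henv_indep henv_ident hsce_indep hsce_ident hind _ _ hf hg
  have hsl := stepLaw_of μ (env 0) (henv 0) δ hδ0 hδ1 (henv_ell 0) henv_mean henv_var
  have hgood := env_good (μ.map (fun ω => Real.log ((1 - env 0 ω) / env 0 ω))) (μ.map (fun ω => max (a - η - sce 0 ω) 0))
    hsl (2 / (4 + ε)) (by positivity) (by rw [div_lt_div_iff₀ (by positivity) (by norm_num)]; linarith)
    (pos_of_essSup μ (sce 0) (hsce 0) a η hη ha)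
    (tail_summable μ (sce 0) (hsce 0) (a - η) ε lam₀ hε hlam₀ htail)
    (by
      have hgm : Measurable fun ω => max (a - η - sce 0 ω) 0 := hg.comp (hsce 0)
      rw [ae_map_iff hgm.aemeasurable measurableSet_Ici]
      exact Eventually.of_forall fun ω => le_max_right _ _)
    (κ / 3) m (by positivity)
  rw [← hlaw] at hgood
  have hmm : Measurable (fun ω (i : Idx) => Sum.elim (fun u => Real.log ((1 - env u ω) / env u ω)) (fun u => max (a - η - sce u ω) 0) i) := by
    refine measurable_pi_lambda _ fun i => ?_
    cases i with
    | inl u => exact hf.comp (henv u)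
    | inr u => exact hg.comp (hsce u)
  have hgood' := ae_of_ae_map hmm.aemeasurable hgood
  have hell : ∀ᵐ ω ∂μ, ∀ i, δ ≤ env i ω ∧ env i ω ≤ 1 - δ := ae_all_iff.2 henv_ell
  filter_upwards [hgood', hell] with ω h1 h2
  have h3 := qgood_of_good (fun i => env i ω) (fun u => ⟨by linarith [(h2 u).1], by linarith [(h2 u).2]⟩)
    (DD (a - η) (fun x => sce x ω)) (DD_nonneg _ _) (κ / 3) m hm h1
  rw [show 3 * (κ / 3) = κ by ring] at h3
  exact h3

end Sinai

/-- Theorem 1.1 (i): Sinai's walk in i.i.d. random scenery. If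
`a := ess sup ξ₀ < ∞` and `Q{ξ₀⁻ > λ} ≤ 1/(log λ)^{2+ε}` for all large `λ`, then
`ℙ⊗Q`-almost surely `limsup_{n→∞} Z_n/n = a`, where `Z_n = ∑_{i=0}^n ξ(X_i)`. -/
theorem stmt0 {Ω : Type*} [MeasurableSpace Ω] (μ : Measure Ω) [IsProbabilityMeasure μ]
    -- the i.i.d. environment
    (env : ℤ → Ω → ℝ) (henv_meas : ∀ i, Measurable (env i))
    (henv_indep : iIndepFun (m := fun _ : ℤ => (inferInstance : MeasurableSpace ℝ)) env μ)
    (henv_ident : ∀ i, IdentDistrib (env i) (env 0) μ μ)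
    (δ : ℝ) (hδ0 : 0 < δ) (hδ1 : δ < 1 / 2)
    (henv_ell : ∀ i, ∀ᵐ ω ∂μ, δ ≤ env i ω ∧ env i ω ≤ 1 - δ)
    (henv_mean : ∫ ω, Real.log ((1 - env 0 ω) / env 0 ω) ∂μ = 0)
    (henv_var : 0 < variance (fun ω => Real.log ((1 - env 0 ω) / env 0 ω)) μ)
    -- Sinai's walk: a nearest-neighbour Markov chain in the environment `env`,
    -- characterized by its quenched cylinder probabilities given `σ(env)`
    (X : ℕ → Ω → ℤ) (hX_meas : ∀ n, Measurable (X n))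
    (hX0 : ∀ᵐ ω ∂μ, X 0 ω = 0)
    (hquenched : ∀ (n : ℕ) (x : ℕ → ℤ), x 0 = 0 →
      μ[Set.indicator {ω | ∀ i ≤ n, X i ω = x i} (fun _ => (1 : ℝ)) |
          MeasurableSpace.comap (fun ω i => env i ω) MeasurableSpace.pi]
        =ᵐ[μ] fun ω => ∏ i ∈ Finset.range n, stepProb (env (x i) ω) (x (i + 1) - x i))
    -- the i.i.d. scenery, independent of the environment and of the walk
    (sce : ℤ → Ω → ℝ) (hsce_meas : ∀ x, Measurable (sce x))
    (hsce_indep : iIndepFun (m := fun _ : ℤ => (inferInstance : MeasurableSpace ℝ)) sce μ)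
    (hsce_ident : ∀ x, IdentDistrib (sce x) (sce 0) μ μ)
    (hsce_env_walk_indep :
      IndepFun (fun ω => (fun x : ℤ => sce x ω))
        (fun ω => ((fun i : ℤ => env i ω), (fun n : ℕ => X n ω))) μ)
    -- `a := ess sup ξ₀ < ∞`
    (a : ℝ) (ha : a = essSup (fun ω => sce 0 ω) μ) (ha_fin : ∀ᵐ ω ∂μ, sce 0 ω ≤ a)
    -- thin negative tails: `Q{ξ₀⁻ > λ} ≤ 1/(log λ)^{2+ε}` for all large `λ`
    (ε : ℝ) (hε : 0 < ε) (lam₀ : ℝ) (hlam₀ : 1 < lam₀)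
    (htail : ∀ lam : ℝ, lam₀ ≤ lam →
      (μ {ω | lam < max (-(sce 0 ω)) 0}).toReal ≤ 1 / Real.log lam ^ (2 + ε : ℝ)) :
    ∀ᵐ ω ∂μ,
      Filter.atTop.limsup
        (fun n : ℕ => (∑ i ∈ Finset.range (n + 1), sce (X i ω) ω) / (n : ℝ)) = a := by
  have hE : Measurable fun ω => (fun i : ℤ => env i ω) := measurable_pi_lambda _ henv_meas
  have hS : Measurable fun ω => (fun x : ℤ => sce x ω) := measurable_pi_lambda _ hsce_meas
  have hq : Sinai.Quenched μ (fun ω i => env i ω) X := hquenched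
  have hmarg : Sinai.Marg μ (fun ω i => env i ω) X := fun i y => Sinai.marginal μ _ hE X hX_meas hX0 hq i y
  have hs : ∀ᵐ ω ∂μ, ∀ i, X (i + 1) ω - X i ω = 1 ∨ X (i + 1) ω - X i ω = -1 :=
    ae_all_iff.2 fun i => Sinai.nn_step μ _ hE X hX_meas i (Sinai.pathLaw μ _ hE X hX_meas hX0 hq i)
  have hind : IndepFun (fun ω => (fun x : ℤ => sce x ω)) (fun ω => (fun i : ℤ => env i ω)) μ :=
    hsce_env_walk_indep.comp measurable_id measurable_fst
  have hfreq : ∀ j : ℕ, ∀ᵐ ω ∂μ, ∀ m : ℕ, ∃ n ≥ m, (a - 1 / ((j : ℝ) + 1)) * n ≤ ∑ i ∈ Finset.range n, sce (X i ω) ω := by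
    intro j
    have hη : (0 : ℝ) < 1 / ((j : ℝ) + 1) / 2 := by positivity
    have h1 := hmarg.frequently μ hE hX_meas hS hsce_env_walk_indep hX0 hs (a - 1 / ((j : ℝ) + 1) / 2)
      (1 / ((j : ℝ) + 1) / 2) hη
      (fun κ hκ m hm => Sinai.qgood_ae μ env sce henv_meas hsce_meas henv_indep henv_ident δ hδ0 hδ1 henv_ell henv_mean
        henv_var hsce_indep hsce_ident hind a ha ε hε lam₀ hlam₀ htail _ hη κ hκ m hm)
    rw [show a - 1 / ((j : ℝ) + 1) / 2 - 1 / ((j : ℝ) + 1) / 2 = a - 1 / ((j : ℝ) + 1) by ring] at h1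
    exact h1
  have hle : ∀ᵐ ω ∂μ, ∀ x, sce x ω ≤ a :=
    ae_all_iff.2 fun x => (hsce_ident x).symm.ae_snd (p := fun t => t ≤ a) measurableSet_Iic ha_fin
  filter_upwards [ae_all_iff.2 hfreq, hle] with ω h1 h2
  refine Sinai.limsup_eq (fun n => ∑ i ∈ Finset.range n, sce (X i ω) ω) a (fun n => ?_) h1
  calc ∑ i ∈ Finset.range n, sce (X i ω) ω ≤ ∑ i ∈ Finset.range n, a := Finset.sum_le_sum fun i _ => h2 _
    _ = a * n := by simp [mul_comm]
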